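/- arXiv:1005.3756 — 7 statements merged into one kernel-verified Lean document; each statement's English description precedes it below -/
import Mathlib

section
/- Let n ≥ 11 be odd. Then there exist three (n−2)-cycles x, y, z in the alternating group A_n with xyz = 1 such that ⟨x, y⟩ = A_n. -/
open Equiv Equiv.Perm MulAction
open scoped Pointwise

/-- Table of the small permutation `(0 4 2)(1 7 6 5 3)`. -/
def tF (i : ℕ) : ℕ :=
  if i = 0 then 4 else if i = 1 then 7 else if i = 2 then 0 else if i = 3 then 1 else
  if i = 4 then 2 else if i = 5 then 3 else if i = 6 then 5 else if i = 7 then 6 else i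

/-- Inverse table. -/
def tG (i : ℕ) : ℕ :=
  if i = 4 then 0 else if i = 7 then 1 else if i = 0 then 2 else if i = 1 then 3 else
  if i = 2 then 4 else if i = 3 then 5 else if i = 5 then 6 else if i = 6 then 7 else i

lemma tF_big {i : ℕ} (h : 8 ≤ i) : tF i = i := by
  unfold tF; split_ifs <;> omega

lemma tG_big {i : ℕ} (h : 8 ≤ i) : tG i = i := by
  unfold tG; split_ifs <;> omega

lemma tGF (i : ℕ) : tG (tF i) = i := by
  rcases Nat.lt_or_ge i 8 with h | h
  · interval_cases i <;> rfl
  · rw [tF_big h, tG_big h]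

lemma tFG (i : ℕ) : tF (tG i) = i := by
  rcases Nat.lt_or_ge i 8 with h | h
  · interval_cases i <;> rfl
  · rw [tG_big h, tF_big h]

/-- The long cycle fixing `0` and `1`. -/
def xF (n i : ℕ) : ℕ := if i < 2 then i else if i + 1 = n then 2 else i + 1

/-- The inverse of the long cycle. -/
def xG (n i : ℕ) : ℕ := if i < 2 then i else if i = 2 then n - 1 else i - 1

/-- The small permutation as a permutation of `Fin n`. -/
def tP (n : ℕ) (hn : 11 ≤ n) : Perm (Fin n) where
  toFun i := ⟨tF i, by have := i.2; unfold tF; split_ifs <;> omega⟩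
  invFun i := ⟨tG i, by have := i.2; unfold tG; split_ifs <;> omega⟩
  left_inv i := Fin.ext (tGF i)
  right_inv i := Fin.ext (tFG i)

/-- The long cycle as a permutation of `Fin n`. -/
def xP (n : ℕ) (hn : 11 ≤ n) : Perm (Fin n) where
  toFun i := ⟨xF n i, by have := i.2; unfold xF; split_ifs <;> omega⟩
  invFun i := ⟨xG n i, by have := i.2; unfold xG; split_ifs <;> omega⟩
  left_inv i := by ext; have := i.2; simp only [xF, xG]; split_ifs <;> omega
  right_inv i := by ext; have := i.2; simp only [xF, xG]; split_ifs <;> omega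

lemma tP_val (n : ℕ) (hn : 11 ≤ n) (i : Fin n) : (tP n hn i : ℕ) = tF i := rfl

lemma xP_val (n : ℕ) (hn : 11 ≤ n) (i : Fin n) : (xP n hn i : ℕ) = xF n i := rfl

lemma yP_val (n : ℕ) (hn : 11 ≤ n) (i : Fin n) :
    ((xP n hn * tP n hn) i : ℕ) = xF n (tF i) := rfl

lemma wP_val (n : ℕ) (hn : 11 ≤ n) (i : Fin n) :
    ((xP n hn * (xP n hn * tP n hn)) i : ℕ) = xF n (xF n (tF i)) := rfl

lemma card_supp {n : ℕ} (f : Perm (Fin n)) (a b : Fin n) (hab : a ≠ b)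
    (h : ∀ i, f i = i ↔ i = a ∨ i = b) : f.support.card = n - 2 := by
  have : f.support = Finset.univ \ {a, b} := by
    ext i
    simp [h]
  rw [this, Finset.card_sdiff_of_subset (Finset.subset_univ _), Finset.card_pair hab]
  simp

lemma step {n : ℕ} {f : Perm (Fin n)} {p : Fin n} {a b : ℕ} {ha : a < n} (hb : b < n)
    (h : SameCycle f p ⟨a, ha⟩) (hab : (f ⟨a, ha⟩ : ℕ) = b) : SameCycle f p ⟨b, hb⟩ := by
  have : (⟨b, hb⟩ : Fin n) = f ⟨a, ha⟩ := by ext; exact hab.symm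
  rw [this]
  exact sameCycle_apply_right.mpr h

lemma xP_same (n : ℕ) (hn : 11 ≤ n) (i : ℕ) (hi : i < n) (h2 : 2 ≤ i) :
    SameCycle (xP n hn) ⟨2, by omega⟩ ⟨i, hi⟩ := by
  induction i, h2 using Nat.le_induction with
  | base => exact SameCycle.refl _ _
  | succ k hk ih =>
    refine step hi (ih (by omega)) ?_
    simp only [xP_val, xF]
    split_ifs <;> omega

lemma xP_cycle (n : ℕ) (hn : 11 ≤ n) : (xP n hn).IsCycle := by
  refine ⟨⟨2, by omega⟩, ?_, ?_⟩
  · rw [Ne, Fin.ext_iff, xP_val]; simp only [xF]; split_ifs <;> omega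
  · intro y hy
    refine xP_same n hn y y.2 ?_
    by_contra hlt
    apply hy
    rw [Fin.ext_iff, xP_val]; simp only [xF]; split_ifs <;> omega

lemma xP_card (n : ℕ) (hn : 11 ≤ n) : (xP n hn).support.card = n - 2 := by
  refine card_supp _ ⟨0, by omega⟩ ⟨1, by omega⟩ (by simp) fun i => ?_
  have := i.2
  simp only [Fin.ext_iff, xP_val, xF]
  split_ifs <;> omega

lemma yP_card (n : ℕ) (hn : 11 ≤ n) : (xP n hn * tP n hn).support.card = n - 2 := by
  refine card_supp _ ⟨6, by omega⟩ ⟨7, by omega⟩ (by simp) fun i => ?_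
  have := i.2
  simp only [Fin.ext_iff, yP_val]
  rcases Nat.lt_or_ge (i : ℕ) 8 with h | h
  · generalize (i : ℕ) = j at *
    interval_cases j <;> simp [tF, xF] <;> (try split_ifs) <;> (first | omega | simp)
  · rw [tF_big h]
    simp only [xF]
    split_ifs <;> omega

lemma wP_card (n : ℕ) (hn : 11 ≤ n) :
    (xP n hn * (xP n hn * tP n hn)).support.card = n - 2 := by
  refine card_supp _ ⟨4, by omega⟩ ⟨5, by omega⟩ (by simp) fun i => ?_
  have := i.2
  simp only [Fin.ext_iff, wP_val]
  rcases Nat.lt_or_ge (i : ℕ) 8 with h | h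
  · generalize (i : ℕ) = j at *
    interval_cases j <;> simp [tF, xF] <;> (try split_ifs) <;> (first | omega | simp)
  · have : tF i = i := by unfold tF; split_ifs <;> omega
    rw [this]
    simp only [xF]
    split_ifs <;> omega

lemma yP_cycle (n : ℕ) (hn : 11 ≤ n) : (xP n hn * tP n hn).IsCycle := by
  have key : ∀ a b : ℕ, (ha : a < n) → (hb : b < n) → xF n (tF a) = b →
      SameCycle (xP n hn * tP n hn) ⟨2, by omega⟩ ⟨a, ha⟩ →
      SameCycle (xP n hn * tP n hn) ⟨2, by omega⟩ ⟨b, hb⟩ :=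
    fun a b ha hb h hs => step hb hs h
  have s2 : SameCycle (xP n hn * tP n hn) ⟨2, by omega⟩ ⟨2, by omega⟩ := SameCycle.refl _ _
  have s0 := key 2 0 (by omega) (by omega) (by simp [tF, xF]) s2
  have s5 := key 0 5 (by omega) (by omega) (by simp [tF, xF]; omega) s0
  have s4 := key 5 4 (by omega) (by omega) (by simp [tF, xF]; omega) s5
  have s3 := key 4 3 (by omega) (by omega) (by simp [tF, xF]; omega) s4
  have s1 := key 3 1 (by omega) (by omega) (by simp [tF, xF]) s3
  have s8 := key 1 8 (by omega) (by omega) (by simp [tF, xF]; omega) s1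
  have sb : ∀ i, 8 ≤ i → (hi : i < n) →
      SameCycle (xP n hn * tP n hn) ⟨2, by omega⟩ ⟨i, hi⟩ := by
    intro i h8
    induction i, h8 using Nat.le_induction with
    | base => intro _; exact s8
    | succ k hk ih =>
      intro hi
      refine key k (k + 1) (by omega) hi ?_ (ih (by omega))
      have : tF k = k := by unfold tF; split_ifs <;> omega
      rw [this]; simp only [xF]; split_ifs <;> omega
  refine ⟨⟨2, by omega⟩, ?_, ?_⟩
  · rw [Ne, Fin.ext_iff, yP_val]; simp [tF, xF]
  · rintro ⟨i, hi⟩ hy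
    rcases Nat.lt_or_ge i 8 with h | h
    · interval_cases i
      · exact s0
      · exact s1
      · exact s2
      · exact s3
      · exact s4
      · exact s5
      · exfalso; apply hy; rw [Fin.ext_iff, yP_val]; simp [tF, xF]; omega
      · exfalso; apply hy; rw [Fin.ext_iff, yP_val]; simp [tF, xF]; omega
    · exact sb i h hi

lemma wP_cycle (n : ℕ) (hn : 11 ≤ n) (hodd : Odd n) :
    (xP n hn * (xP n hn * tP n hn)).IsCycle := by
  have key : ∀ a b : ℕ, (ha : a < n) → (hb : b < n) → xF n (xF n (tF a)) = b →
      SameCycle (xP n hn * (xP n hn * tP n hn)) ⟨2, by omega⟩ ⟨a, ha⟩ →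
      SameCycle (xP n hn * (xP n hn * tP n hn)) ⟨2, by omega⟩ ⟨b, hb⟩ :=
    fun a b ha hb h hs => step hb hs h
  obtain ⟨m, hm⟩ := hodd
  have s2 : SameCycle (xP n hn * (xP n hn * tP n hn)) ⟨2, by omega⟩ ⟨2, by omega⟩ :=
    SameCycle.refl _ _
  have s0 := key 2 0 (by omega) (by omega) (by simp [tF, xF]) s2
  have s6 := key 0 6 (by omega) (by omega)
    (by simp only [tF, xF]; simp; split_ifs <;> omega) s0
  have s7 := key 6 7 (by omega) (by omega)
    (by simp only [tF, xF]; simp; split_ifs <;> omega) s6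
  have s8 := key 7 8 (by omega) (by omega)
    (by simp only [tF, xF]; simp; split_ifs <;> omega) s7
  have big : ∀ k, 8 ≤ k → k + 2 < n → xF n (xF n (tF k)) = k + 2 := by
    intro k hk hk2
    have : tF k = k := by unfold tF; split_ifs <;> omega
    rw [this]; simp only [xF]; split_ifs <;> omega
  have sev : ∀ j, (hi : 8 + 2 * j < n) →
      SameCycle (xP n hn * (xP n hn * tP n hn)) ⟨2, by omega⟩ ⟨8 + 2 * j, hi⟩ := by
    intro j
    induction j with
    | zero => intro _; exact s8
    | succ j ih =>
      intro hi
      exact key (8 + 2 * j) (8 + 2 * (j + 1)) (by omega) hi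
        (big _ (by omega) (by omega)) (ih (by omega))
  have s3 := key (8 + 2 * (m - 4)) 3 (by omega) (by omega) (by
    have : tF (8 + 2 * (m - 4)) = 8 + 2 * (m - 4) := by unfold tF; split_ifs <;> omega
    rw [this]; simp only [xF]; split_ifs <;> omega) (sev (m - 4) (by omega))
  have s1 := key 3 1 (by omega) (by omega) (by simp [tF, xF]) s3
  have s9 := key 1 9 (by omega) (by omega)
    (by simp only [tF, xF]; simp; split_ifs <;> omega) s1
  have sod : ∀ j, (hi : 9 + 2 * j < n) →
      SameCycle (xP n hn * (xP n hn * tP n hn)) ⟨2, by omega⟩ ⟨9 + 2 * j, hi⟩ := by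
    intro j
    induction j with
    | zero => intro _; exact s9
    | succ j ih =>
      intro hi
      exact key (9 + 2 * j) (9 + 2 * (j + 1)) (by omega) hi
        (big _ (by omega) (by omega)) (ih (by omega))
  refine ⟨⟨2, by omega⟩, ?_, ?_⟩
  · rw [Ne, Fin.ext_iff, wP_val]; simp [tF, xF]
  · rintro ⟨i, hi⟩ hy
    rcases Nat.lt_or_ge i 8 with h | h
    · interval_cases i
      · exact s0
      · exact s1
      · exact s2
      · exact s3
      · exfalso; apply hy; rw [Fin.ext_iff, wP_val]; simp only [tF, xF]; simp
        split_ifs <;> omega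
      · exfalso; apply hy; rw [Fin.ext_iff, wP_val]; simp only [tF, xF]; simp
        split_ifs <;> omega
      · exact s6
      · exact s7
    · rcases Nat.even_or_odd' i with ⟨c, hc | hc⟩
      · obtain ⟨j, rfl⟩ : ∃ j, i = 8 + 2 * j := ⟨c - 4, by omega⟩
        exact sev j hi
      · obtain ⟨j, rfl⟩ : ∃ j, i = 9 + 2 * j := ⟨c - 4, by omega⟩
        exact sod j hi

lemma tP_three (n : ℕ) (hn : 11 ≤ n) : ((tP n hn) ^ 5).IsThreeCycle := by
  rw [← card_support_eq_three_iff]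
  have hv : ∀ i : Fin n, (((tP n hn) ^ 5) i : ℕ) = tF (tF (tF (tF (tF i)))) := fun i => rfl
  have : ((tP n hn) ^ 5).support =
      {⟨0, by omega⟩, ⟨2, by omega⟩, ⟨4, by omega⟩} := by
    ext i
    simp only [mem_support, ne_eq, Fin.ext_iff, hv, Finset.mem_insert, Finset.mem_singleton]
    rcases Nat.lt_or_ge (i : ℕ) 8 with h | h
    · generalize (i : ℕ) = j at *
      interval_cases j <;> simp [tF]
    · have : tF i = i := by unfold tF; split_ifs <;> omega
      rw [this, this, this, this, this]
      omega
  rw [this, Finset.card_eq_three]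
  exact ⟨_, _, _, by simp, by simp, by simp, rfl⟩

lemma prim (n : ℕ) (hn : 11 ≤ n) :
    IsPreprimitive (Subgroup.closure {xP n hn, xP n hn * tP n hn}) (Fin n) := by
  set X := xP n hn with hX
  set Y := xP n hn * tP n hn with hY
  set G := Subgroup.closure {X, Y} with hG
  have hXG : X ∈ G := Subgroup.subset_closure (by simp)
  have hYG : Y ∈ G := Subgroup.subset_closure (by simp)
  have y2 : Y ⟨2, by omega⟩ = ⟨0, by omega⟩ := by
    rw [Fin.ext_iff, yP_val]; simp [tF, xF]
  have y3 : Y ⟨3, by omega⟩ = ⟨1, by omega⟩ := by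
    rw [Fin.ext_iff, yP_val]; simp [tF, xF]
  have y4 : Y ⟨4, by omega⟩ = ⟨3, by omega⟩ := by
    rw [Fin.ext_iff, yP_val]; simp [tF, xF]; omega
  have y0 : Y ⟨0, by omega⟩ = ⟨5, by omega⟩ := by
    rw [Fin.ext_iff, yP_val]; simp [tF, xF]; omega
  have x0 : X ⟨0, by omega⟩ = ⟨0, by omega⟩ := by
    rw [Fin.ext_iff, xP_val]; simp [xF]
  have x2 : X ⟨2, by omega⟩ = ⟨3, by omega⟩ := by
    rw [Fin.ext_iff, xP_val]; simp [xF]; omega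
  have x3 : X ⟨3, by omega⟩ = ⟨4, by omega⟩ := by
    rw [Fin.ext_iff, xP_val]; simp [xF]; omega
  refine IsPreprimitive.of_isTrivialBlock_of_notMem_fixedPoints (a := ⟨0, by omega⟩) ?_ ?_
  · intro h
    have := h ⟨Y, hYG⟩
    change Y _ = _ at this
    rw [y0] at this
    simp at this
  intro B h0 hB
  have inv : ∀ g ∈ G, ∀ p, p ∈ B → g p ∈ B → ∀ q, g q ∈ B ↔ q ∈ B := by
    intro g hg p hp hgp q
    have h := hB.smul_eq_of_mem (g := ⟨g, hg⟩) hp hgp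
    have h2 := Set.smul_mem_smul_set_iff (a := (⟨g, hg⟩ : G)) (s := B) (x := q)
    rw [h] at h2
    exact h2
  have iX := inv X hXG _ h0 (by rw [x0]; exact h0)
  have iXz : ∀ (k : ℤ) q, (X ^ k) q ∈ B ↔ q ∈ B := by
    intro k
    refine inv (X ^ k) (G.zpow_mem hXG k) _ h0 ?_
    rw [zpow_apply_eq_self_of_apply_eq_self x0]; exact h0
  by_cases hbig : ∃ i : Fin n, 2 ≤ (i : ℕ) ∧ i ∈ B
  · right
    obtain ⟨i, hi2, hiB⟩ := hbig
    have h2 : (⟨2, by omega⟩ : Fin n) ∈ B := by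
      obtain ⟨k, hk⟩ := xP_same n hn i i.2 hi2
      rw [← iXz k, hX, hk]; exact hiB
    have hall : ∀ (j : ℕ) (hj : j < n), 2 ≤ j → (⟨j, hj⟩ : Fin n) ∈ B := by
      intro j hj hj2
      obtain ⟨k, hk⟩ := xP_same n hn j hj hj2
      rw [← hk, ← hX, iXz k]; exact h2
    have h1 : (⟨1, by omega⟩ : Fin n) ∈ B := by
      rw [← y3, inv Y hYG _ h2 (by rw [y2]; exact h0)]
      exact hall _ _ (by omega)
    refine Set.eq_univ_of_forall ?_
    rintro ⟨j, hj⟩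
    rcases j with _ | _ | j
    · exact h0
    · exact h1
    · exact hall _ _ (by omega)
  · left
    push Not at hbig
    have h1 : (⟨1, by omega⟩ : Fin n) ∉ B := by
      intro h1
      have e0 : (Y * X * Y⁻¹) ⟨0, by omega⟩ = ⟨1, by omega⟩ := by
        rw [← y2]; simp [x2, y3, -EmbeddingLike.apply_eq_iff_eq]
      have e1 : (Y * X * Y⁻¹) ⟨1, by omega⟩ = ⟨3, by omega⟩ := by
        rw [← y3]; simp [x3, y4, -EmbeddingLike.apply_eq_iff_eq]
      have := (inv (Y * X * Y⁻¹) (G.mul_mem (G.mul_mem hYG hXG) (G.inv_mem hYG)) _ h0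
        (by rw [e0]; exact h1) ⟨1, by omega⟩).mpr h1
      rw [e1] at this
      exact hbig _ (by simp) this
    have hz : ∀ i ∈ B, i = ⟨0, by omega⟩ := by
      rintro ⟨j, hj⟩ hjB
      rcases j with _ | _ | j
      · rfl
      · exact absurd hjB h1
      · exact absurd hjB (hbig _ (by simp))
    intro a ha b hb
    rw [hz a ha, hz b hb]

lemma alt_le (n : ℕ) (hn : 11 ≤ n) :
    alternatingGroup (Fin n) ≤ Subgroup.closure {xP n hn, xP n hn * tP n hn} := by
  refine alternatingGroup_le_of_isPreprimitive_of_isThreeCycle_mem (prim n hn)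
    (tP_three n hn) ?_
  refine Subgroup.pow_mem _ ?_ 5
  have h : tP n hn = (xP n hn)⁻¹ * (xP n hn * tP n hn) := by group
  rw [h]
  exact Subgroup.mul_mem _ (Subgroup.inv_mem _ (Subgroup.subset_closure (by simp)))
    (Subgroup.subset_closure (by simp))

lemma mem_alt {n : ℕ} (hn : 11 ≤ n) (hodd : Odd n) {f : Perm (Fin n)} (hf : f.IsCycle)
    (hc : f.support.card = n - 2) : f ∈ alternatingGroup (Fin n) := by
  rw [mem_alternatingGroup, hf.sign, hc]
  have : Odd (n - 2) := by
    obtain ⟨m, hm⟩ := hodd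
    exact ⟨m - 1, by omega⟩
  rw [this.neg_one_pow]; simp

/-- For odd `n ≥ 11` there exist three `(n-2)`-cycles in `A_n` with product `1`
which generate `A_n`. -/
theorem stmt_4 (n : ℕ) (hn : 11 ≤ n) (hodd : Odd n) :
    ∃ x y z : alternatingGroup (Fin n),
      (x : Equiv.Perm (Fin n)).IsCycle ∧ (x : Equiv.Perm (Fin n)).support.card = n - 2 ∧
      (y : Equiv.Perm (Fin n)).IsCycle ∧ (y : Equiv.Perm (Fin n)).support.card = n - 2 ∧
      (z : Equiv.Perm (Fin n)).IsCycle ∧ (z : Equiv.Perm (Fin n)).support.card = n - 2 ∧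
      x * y * z = 1 ∧ Subgroup.closure {x, y} = (⊤ : Subgroup (alternatingGroup (Fin n))) := by
  refine ⟨⟨xP n hn, mem_alt hn hodd (xP_cycle n hn) (xP_card n hn)⟩,
    ⟨xP n hn * tP n hn, mem_alt hn hodd (yP_cycle n hn) (yP_card n hn)⟩,
    ⟨(xP n hn * (xP n hn * tP n hn))⁻¹, Subgroup.inv_mem _
      (mem_alt hn hodd (wP_cycle n hn hodd) (wP_card n hn))⟩,
    xP_cycle n hn, xP_card n hn, yP_cycle n hn, yP_card n hn,
    (wP_cycle n hn hodd).inv, ?_, ?_, ?_⟩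
  · rw [support_inv]; exact wP_card n hn
  · apply Subtype.ext
    exact mul_inv_cancel _
  · apply Subgroup.map_injective (alternatingGroup (Fin n)).subtype_injective
    rw [MonoidHom.map_closure, Set.image_pair]
    apply le_antisymm
    · rw [Subgroup.closure_le]
      rintro g (rfl | rfl)
      · exact ⟨_, Subgroup.mem_top _, rfl⟩
      · exact ⟨_, Subgroup.mem_top _, rfl⟩
    · rintro g ⟨a, -, rfl⟩
      exact alt_le n hn a.2
end

section
/- Let n ≥ 12 be even. Then there exist three (n−3)-cycles x, y, z in the alternating group A_n with xyz = 1 such that ⟨x, y⟩ = A_n. -/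
open Equiv Equiv.Perm
open scoped Pointwise

namespace Stmt5

lemma cycle_of {n : ℕ} (f : Perm (Fin n)) (p q r s : Fin n) (hqr : q ≠ r) (hqs : q ≠ s)
    (hrs : r ≠ s) (hq : f q = q) (hr : f r = r) (hs : f s = s) (hp : f p ≠ p)
    (h : ∀ i, i ≠ q → i ≠ r → i ≠ s → f.SameCycle p i) :
    f.IsCycle ∧ f.support = {q, r, s}ᶜ ∧ f.support.card = n - 3 := by
  have hsupp : f.support = {q, r, s}ᶜ := by
    ext i
    simp only [mem_support, Finset.mem_compl, Finset.mem_insert, Finset.mem_singleton, not_or]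
    constructor
    · intro hi
      refine ⟨?_, ?_, ?_⟩ <;> rintro rfl <;> contradiction
    · rintro ⟨h1, h2, h3⟩ h4
      exact hp ((h i h1 h2 h3).apply_eq_self_iff.2 h4)
  refine ⟨⟨p, hp, fun i hi => ?_⟩, hsupp, ?_⟩
  · apply h <;> rintro rfl <;> contradiction
  · rw [hsupp, Finset.card_compl, Fintype.card_fin, Finset.card_eq_three.2 ⟨q, r, s, hqr, hqs, hrs, rfl⟩]

lemma core {n : ℕ} (hn : 12 ≤ n) (he : Even n) (x t w : Perm (Fin n)) (a b c u v : Fin n)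
    (hx : x.IsCycle) (hxs : x.support = {a, b, c}ᶜ) (hxc : x.support.card = n - 3)
    (hy : (x * t).IsCycle) (hyc : (x * t).support.card = n - 3)
    (hz : (x * (x * t)).IsCycle) (hzc : (x * (x * t)).support.card = n - 3)
    (hta : t a = b) (htb : t b = c) (htc : t c = u) (htu : t u = v)
    (hu : u ∈ x.support) (hv : v ∈ x.support)
    (hw : w.IsThreeCycle) (hwm : w ∈ Subgroup.closure {x, t}) :
    ∃ x y z : alternatingGroup (Fin n),
      (x : Equiv.Perm (Fin n)).IsCycle ∧ (x : Equiv.Perm (Fin n)).support.card = n - 3 ∧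
      (y : Equiv.Perm (Fin n)).IsCycle ∧ (y : Equiv.Perm (Fin n)).support.card = n - 3 ∧
      (z : Equiv.Perm (Fin n)).IsCycle ∧ (z : Equiv.Perm (Fin n)).support.card = n - 3 ∧
      x * y * z = 1 ∧ Subgroup.closure {x, y} = (⊤ : Subgroup (alternatingGroup (Fin n))) := by
  have hodd : Odd (n - 3) := by
    obtain ⟨k, rfl⟩ := he
    exact ⟨k - 2, by omega⟩
  have hsg : ∀ f : Perm (Fin n), f.IsCycle → f.support.card = n - 3 → f ∈ alternatingGroup (Fin n) := by
    intro f hf hc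
    rw [mem_alternatingGroup, hf.sign, hc, hodd.neg_one_pow, neg_neg]
  set H : Subgroup (Perm (Fin n)) := Subgroup.closure {x, x * t} with hH
  have hxH : x ∈ H := Subgroup.subset_closure (by simp)
  have htH : t ∈ H := by
    have h : x * t ∈ H := Subgroup.subset_closure (by simp)
    simpa using H.mul_mem (H.inv_mem hxH) h
  have hwH : w ∈ H := by
    refine (Subgroup.closure_le H).2 ?_ hwm
    rintro g (rfl | rfl) <;> assumption
  have hxa : ∀ i, i ∉ x.support → i = a ∨ i = b ∨ i = c := by
    intro i hi
    rw [hxs] at hi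
    simpa only [Finset.mem_compl, Finset.mem_insert, Finset.mem_singleton, not_not] using hi
  have fxa : x a = a := by
    have : a ∉ x.support := by simp [hxs]
    simpa using this
  have conn : ∀ i ∈ x.support, ∀ j ∈ x.support, ∃ g ∈ H, g i = j := by
    intro i hi j hj
    obtain ⟨k, hk⟩ := hx.exists_zpow_eq (mem_support.1 hi) (mem_support.1 hj)
    exact ⟨x ^ k, H.zpow_mem hxH k, hk⟩
  have reach : ∀ i, ∃ g ∈ H, g a = i := by
    have hgu : (t * t * t) a = u := by simp [hta, htb, htc]
    intro i
    by_cases hi : i ∈ x.support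
    · obtain ⟨g, hg, h⟩ := conn u hu i hi
      exact ⟨g * (t * t * t), by
        exact H.mul_mem hg (H.mul_mem (H.mul_mem htH htH) htH), by rw [mul_apply, hgu, h]⟩
    · rcases hxa i hi with rfl | rfl | rfl
      · exact ⟨1, H.one_mem, rfl⟩
      · exact ⟨t, htH, hta⟩
      · exact ⟨t * t, H.mul_mem htH htH, by simp [hta, htb]⟩
  have htrans : MulAction.IsPretransitive H (Fin n) := by
    refine (MulAction.isPretransitive_iff_base a).2 fun i => ?_
    obtain ⟨g, hg, h⟩ := reach i
    exact ⟨⟨g, hg⟩, h⟩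
  have hprim : MulAction.IsPreprimitive H (Fin n) := by
    refine MulAction.IsPreprimitive.of_isTrivialBlock_base a fun {B} haB hB => ?_
    have key : ∀ g ∈ H, ∀ i ∈ B, g i ∈ B → ∀ j, j ∈ B ↔ g j ∈ B := by
      intro g hg i hi hgi j
      have h1 : (⟨g, hg⟩ : H) • B = B := by
        refine hB.smul_eq_of_nonempty ⟨g i, ⟨i, hi, rfl⟩, hgi⟩
      constructor
      · intro hj
        rw [← h1]
        exact ⟨j, hj, rfl⟩
      · intro hj
        rw [← h1] at hj
        obtain ⟨k, hk, h⟩ := hj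
        have : g k = g j := h
        rwa [← g.injective this]
    have hxk : ∀ k : ℤ, ∀ j, j ∈ B ↔ (x ^ k) j ∈ B := by
      intro k
      refine key _ (H.zpow_mem hxH k) a haB ?_
      rw [zpow_apply_eq_self_of_apply_eq_self fxa]; exact haB
    by_cases hex : ∃ i ∈ x.support, i ∈ B
    · right
      obtain ⟨i, hi, hiB⟩ := hex
      have hall : ∀ j ∈ x.support, j ∈ B := by
        intro j hj
        obtain ⟨k, hk⟩ := hx.exists_zpow_eq (mem_support.1 hi) (mem_support.1 hj)
        rw [← hk]
        exact (hxk k i).1 hiB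
      have hk := key t htH u (hall u hu) (by rw [htu]; exact hall v hv)
      have hcB : c ∈ B := (hk c).2 (by rw [htc]; exact hall u hu)
      have hbB : b ∈ B := (hk b).2 (by rw [htb]; exact hcB)
      ext j
      simp only [Set.mem_univ, iff_true]
      by_cases hj : j ∈ x.support
      · exact hall j hj
      · rcases hxa j hj with rfl | rfl | rfl <;> assumption
    · left
      push Not at hex
      have hbB : b ∉ B := by
        intro hbB
        have hk := key t htH a haB (by rw [hta]; exact hbB)
        have hcB := (hk b).1 hbB
        rw [htb] at hcB
        have := (hk c).1 hcB
        rw [htc] at this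
        exact hex u hu this
      have hcB : c ∉ B := by
        intro hcB
        have hk := key (t * t) (H.mul_mem htH htH) a haB (by simpa [hta, htb] using hcB)
        have := (hk c).1 hcB
        rw [mul_apply, htc, htu] at this
        exact hex v hv this
      intro i hi j hj
      have hh : ∀ i ∈ B, i = a := by
        intro i hi
        rcases hxa i (fun h => hex i h hi) with rfl | rfl | rfl
        · rfl
        · exact absurd hi hbB
        · exact absurd hi hcB
      rw [hh i hi, hh j hj]
  have hle : alternatingGroup (Fin n) ≤ H :=
    alternatingGroup_le_of_isPreprimitive_of_isThreeCycle_mem hprim hw hwH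
  refine ⟨⟨x, hsg _ hx hxc⟩, ⟨x * t, hsg _ hy hyc⟩,
    ⟨(x * (x * t))⁻¹, (alternatingGroup (Fin n)).inv_mem (hsg _ hz hzc)⟩, hx, hxc, hy, hyc,
    hz.inv, ?_, ?_, ?_⟩
  · simpa only [support_inv] using hzc
  · apply Subtype.ext
    exact mul_inv_cancel (x * (x * t))
  · apply Subgroup.map_injective (alternatingGroup (Fin n)).subtype_injective
    rw [MonoidHom.map_closure, Set.image_pair, ← MonoidHom.range_eq_map, Subgroup.range_subtype]
    refine le_antisymm ?_ hle
    refine (Subgroup.closure_le _).2 ?_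
    rintro g (rfl | rfl)
    · exact hsg _ hx hxc
    · exact hsg _ hy hyc

/-- The cycle `(3 4 ... n-1)`. -/
def xF (n i : ℕ) : ℕ := if i < 3 then i else if i = n - 1 then 3 else i + 1
def xG (n i : ℕ) : ℕ := if i < 3 then i else if i = 3 then n - 1 else i - 1

def xP (n : ℕ) (hn : 12 ≤ n) : Perm (Fin n) where
  toFun i := ⟨xF n i, by have := i.2; unfold xF; split_ifs <;> omega⟩
  invFun i := ⟨xG n i, by have := i.2; unfold xG; split_ifs <;> omega⟩
  left_inv i := by
    ext; have := i.2; simp only [xF, xG]; split_ifs <;> omega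
  right_inv i := by
    ext; have := i.2; simp only [xF, xG]; split_ifs <;> omega

def tF (i : ℕ) : ℕ :=
  if i < 13 then [1, 2, 4, 0, 7, 3, 5, 6, 10, 12, 8, 9, 11].getD i 0 else i
def tG (i : ℕ) : ℕ :=
  if i < 13 then [3, 0, 1, 5, 2, 6, 7, 4, 10, 11, 8, 12, 9].getD i 0 else i

lemma tF_lt : ∀ i < 13, tF i < 13 ∧ tG (tF i) = i ∧ tG i < 13 ∧ tF (tG i) = i := by decide

lemma tF_ge (i : ℕ) (h : 13 ≤ i) : tF i = i := if_neg (by omega)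
lemma tG_ge (i : ℕ) (h : 13 ≤ i) : tG i = i := if_neg (by omega)

def tP (n : ℕ) (hn : 14 ≤ n) : Perm (Fin n) where
  toFun i := ⟨tF i, by
    rcases lt_or_ge (i : ℕ) 13 with h | h
    · have := tF_lt i h; omega
    · rw [tF_ge _ h]; exact i.2⟩
  invFun i := ⟨tG i, by
    rcases lt_or_ge (i : ℕ) 13 with h | h
    · have := tF_lt i h; omega
    · rw [tG_ge _ h]; exact i.2⟩
  left_inv i := by
    ext
    rcases lt_or_ge (i : ℕ) 13 with h | h
    · exact (tF_lt i h).2.1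
    · simp only [tF_ge _ h, tG_ge _ h]
  right_inv i := by
    ext
    rcases lt_or_ge (i : ℕ) 13 with h | h
    · exact (tF_lt i h).2.2.2
    · simp only [tF_ge _ h, tG_ge _ h]

lemma sc_step {n : ℕ} {f : Perm (Fin n)} {p : Fin n} {F : ℕ → ℕ}
    (hF : ∀ i, (f i : ℕ) = F i) {i : ℕ} (j : ℕ) (hi : i < n)
    (h : ∀ h : i < n, f.SameCycle p ⟨i, h⟩) (hij : F i = j) :
    ∀ h : j < n, f.SameCycle p ⟨j, h⟩ := by
  intro hj
  have : f ⟨i, hi⟩ = ⟨j, hj⟩ := Fin.ext ((hF _).trans hij)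
  rw [← this]
  exact sameCycle_apply_right.2 (h hi)

lemma xP_cycle (n : ℕ) (hn : 12 ≤ n) :
    (xP n hn).IsCycle ∧ (xP n hn).support = {⟨0, by omega⟩, ⟨1, by omega⟩, ⟨2, by omega⟩}ᶜ
      ∧ (xP n hn).support.card = n - 3 := by
  have hF : ∀ i, (xP n hn i : ℕ) = xF n i := fun i => rfl
  refine cycle_of _ ⟨3, by omega⟩ _ _ _ (by simp) (by simp) (by simp) rfl rfl rfl ?_ ?_
  · intro h
    have := congrArg Fin.val h
    rw [hF] at this
    simp only [xF] at this
    split_ifs at this <;> omega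
  · have : ∀ k, 3 ≤ k → k < n → ∀ h : k < n, (xP n hn).SameCycle ⟨3, by omega⟩ ⟨k, h⟩ := by
      intro k hk
      induction k, hk using Nat.le_induction with
      | base => exact fun _ _ => SameCycle.refl _ _
      | succ k hk ih =>
        intro hk1
        refine sc_step hF _ (by omega) (ih (by omega)) ?_
        simp only [xF]; split_ifs <;> omega
    intro i h0 h1 h2
    refine this i ?_ i.2 i.2
    simp only [ne_eq, Fin.ext_iff] at h0 h1 h2
    omega

lemma y_cycle (n : ℕ) (hn : 14 ≤ n) :
    (xP n (by omega) * tP n hn).IsCycle ∧ (xP n (by omega) * tP n hn).support.card = n - 3 := by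
  set f := xP n (by omega) * tP n hn with hf
  have hF : ∀ i, (f i : ℕ) = xF n (tF i) := fun i => rfl
  have e : ∀ i < 13, ∀ j, tF i + 1 = j → 3 ≤ tF i → xF n (tF i) = j := by
    intro i hi j hj h3
    have := tF_lt i hi
    simp only [xF]; split_ifs <;> omega
  have e' : ∀ i < 13, ∀ j, tF i = j → tF i < 3 → xF n (tF i) = j := by
    intro i hi j hj h3
    simp only [xF]; split_ifs; omega
  have h13 : ∀ k, 13 ≤ k → k < n → ∀ h : k < n, f.SameCycle ⟨13, by omega⟩ ⟨k, h⟩ := by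
    intro k hk
    induction k, hk using Nat.le_induction with
    | base => exact fun _ _ => SameCycle.refl _ _
    | succ k hk ih =>
      intro hk1
      refine sc_step (F := fun i => xF n (tF i)) hF _ (by omega) (ih (by omega)) ?_
      rw [tF_ge _ hk]
      simp only [xF]; split_ifs <;> omega
  have s3 := sc_step (F := fun i => xF n (tF i)) hF 3 (by omega) (h13 (n - 1) (by omega) (by omega)) (by
    rw [tF_ge _ (by omega)]; simp only [xF]; split_ifs <;> omega)
  have s0 := sc_step (F := fun i => xF n (tF i)) hF 0 (by omega) s3 (e' _ (by decide) _ (by decide) (by decide))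
  have s1 := sc_step (F := fun i => xF n (tF i)) hF 1 (by omega) s0 (e' _ (by decide) _ (by decide) (by decide))
  have s2 := sc_step (F := fun i => xF n (tF i)) hF 2 (by omega) s1 (e' _ (by decide) _ (by decide) (by decide))
  have s5 := sc_step (F := fun i => xF n (tF i)) hF 5 (by omega) s2 (e _ (by decide) _ (by decide) (by decide))
  have s4 := sc_step (F := fun i => xF n (tF i)) hF 4 (by omega) s5 (e _ (by decide) _ (by decide) (by decide))
  have s8 := sc_step (F := fun i => xF n (tF i)) hF 8 (by omega) s4 (e _ (by decide) _ (by decide) (by decide))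
  have s11 := sc_step (F := fun i => xF n (tF i)) hF 11 (by omega) s8 (e _ (by decide) _ (by decide) (by decide))
  have s10 := sc_step (F := fun i => xF n (tF i)) hF 10 (by omega) s11 (e _ (by decide) _ (by decide) (by decide))
  have s9 := sc_step (F := fun i => xF n (tF i)) hF 9 (by omega) s10 (e _ (by decide) _ (by decide) (by decide))
  have := cycle_of f ⟨13, by omega⟩ ⟨6, by omega⟩ ⟨7, by omega⟩ ⟨12, by omega⟩
    (by simp) (by simp) (by simp)
    (Fin.ext ((hF _).trans (e 6 (by decide) _ rfl (by decide))))
    (Fin.ext ((hF _).trans (e 7 (by decide) _ rfl (by decide))))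
    (Fin.ext ((hF _).trans (e 12 (by decide) _ rfl (by decide)))) ?_ ?_
  · exact ⟨this.1, this.2.2⟩
  · intro h
    have := congrArg Fin.val h
    rw [hF] at this
    simp only [tF_ge 13 le_rfl, xF] at this
    split_ifs at this <;> omega
  · rintro ⟨i, hi⟩ h6 h7 h12
    simp only [ne_eq, Fin.mk.injEq] at h6 h7 h12
    rcases lt_or_ge i 13 with h | h
    · interval_cases i <;> first | contradiction | exact s0 hi | exact s1 hi | exact s2 hi | exact s3 hi | exact s4 hi | exact s5 hi | exact s8 hi | exact s9 hi | exact s10 hi | exact s11 hi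
    · exact h13 i h hi hi

lemma z_cycle (n : ℕ) (hn : 14 ≤ n) (he : Even n) :
    (xP n (by omega) * (xP n (by omega) * tP n hn)).IsCycle ∧
    (xP n (by omega) * (xP n (by omega) * tP n hn)).support.card = n - 3 := by
  set f := xP n (by omega) * (xP n (by omega) * tP n hn) with hf
  have hF : ∀ i, (f i : ℕ) = xF n (xF n (tF i)) := fun i => rfl
  obtain ⟨m, hm⟩ := he
  have e : ∀ i < 13, ∀ j, tF i + 2 = j → 3 ≤ tF i → tF i < 12 → xF n (xF n (tF i)) = j := by
    intro i hi j hj h3 h4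
    simp only [xF]; split_ifs <;> omega
  have e' : ∀ i < 13, ∀ j, tF i = j → tF i < 3 → xF n (xF n (tF i)) = j := by
    intro i hi j hj h3
    simp only [xF]; split_ifs; omega
  have ho : ∀ k, 13 + 2 * k < n → ∀ h : 13 + 2 * k < n, f.SameCycle ⟨13, by omega⟩ ⟨13 + 2 * k, h⟩ := by
    intro k
    induction k with
    | zero => exact fun _ _ => SameCycle.refl _ _
    | succ k ih =>
      intro hk1
      refine sc_step (F := fun i => xF n (xF n (tF i))) hF _ (by omega) (ih (by omega)) ?_
      rw [tF_ge _ (by omega)]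
      simp only [xF]; split_ifs <;> omega
  have s4 := sc_step (F := fun i => xF n (xF n (tF i))) hF 4 (by omega) (ho (m - 7) (by omega)) (by
    rw [tF_ge _ (by omega)]; simp only [xF]; split_ifs <;> omega)
  have s9 := sc_step (F := fun i => xF n (xF n (tF i))) hF 9 (by omega) s4 (e _ (by decide) _ (by decide) (by decide) (by decide))
  have hev : ∀ k, 14 + 2 * k < n → ∀ h : 14 + 2 * k < n, f.SameCycle ⟨13, by omega⟩ ⟨14 + 2 * k, h⟩ := by
    intro k
    induction k with
    | zero =>
      intro h14
      refine sc_step (F := fun i => xF n (xF n (tF i))) hF _ (by omega) s9 ?_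
      rw [show tF 9 = 12 from rfl]
      simp only [xF]; split_ifs <;> omega
    | succ k ih =>
      intro hk1
      refine sc_step (F := fun i => xF n (xF n (tF i))) hF _ (by omega) (ih (by omega)) ?_
      rw [tF_ge _ (by omega)]
      simp only [xF]; split_ifs <;> omega
  have s3 : ∀ h : 3 < n, f.SameCycle ⟨13, by omega⟩ ⟨3, h⟩ := by
    by_cases h14 : n = 14
    · refine sc_step (F := fun i => xF n (xF n (tF i))) hF _ (by omega) s9 ?_
      rw [show tF 9 = 12 from rfl]
      simp only [xF]; split_ifs <;> omega
    · refine sc_step (F := fun i => xF n (xF n (tF i))) hF _ (by omega) (hev (m - 8) (by omega)) ?_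
      rw [tF_ge _ (by omega)]
      simp only [xF]; split_ifs <;> omega
  have s0 := sc_step (F := fun i => xF n (xF n (tF i))) hF 0 (by omega) s3 (e' _ (by decide) _ (by decide) (by decide))
  have s1 := sc_step (F := fun i => xF n (xF n (tF i))) hF 1 (by omega) s0 (e' _ (by decide) _ (by decide) (by decide))
  have s2 := sc_step (F := fun i => xF n (xF n (tF i))) hF 2 (by omega) s1 (e' _ (by decide) _ (by decide) (by decide))
  have s6 := sc_step (F := fun i => xF n (xF n (tF i))) hF 6 (by omega) s2 (e _ (by decide) _ (by decide) (by decide) (by decide))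
  have s7 := sc_step (F := fun i => xF n (xF n (tF i))) hF 7 (by omega) s6 (e _ (by decide) _ (by decide) (by decide) (by decide))
  have s8 := sc_step (F := fun i => xF n (xF n (tF i))) hF 8 (by omega) s7 (e _ (by decide) _ (by decide) (by decide) (by decide))
  have s12 := sc_step (F := fun i => xF n (xF n (tF i))) hF 12 (by omega) s8 (e _ (by decide) _ (by decide) (by decide) (by decide))
  have := cycle_of f ⟨13, by omega⟩ ⟨5, by omega⟩ ⟨10, by omega⟩ ⟨11, by omega⟩
    (by simp) (by simp) (by simp)
    (Fin.ext ((hF _).trans (e 5 (by decide) _ rfl (by decide) (by decide))))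
    (Fin.ext ((hF _).trans (e 10 (by decide) _ rfl (by decide) (by decide))))
    (Fin.ext ((hF _).trans (e 11 (by decide) _ rfl (by decide) (by decide)))) ?_ ?_
  · exact ⟨this.1, this.2.2⟩
  · intro h
    have := congrArg Fin.val h
    rw [hF] at this
    simp only [tF_ge 13 le_rfl, xF] at this
    split_ifs at this <;> omega
  · rintro ⟨i, hi⟩ h5 h10 h11
    simp only [ne_eq, Fin.mk.injEq] at h5 h10 h11
    rcases lt_or_ge i 13 with h | h
    · interval_cases i <;> first | contradiction | exact s0 hi | exact s1 hi | exact s2 hi | exact s3 hi | exact s4 hi | exact s6 hi | exact s7 hi | exact s8 hi | exact s9 hi | exact s12 hi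
    · rcases Nat.even_or_odd' i with ⟨k, hk | hk⟩
      · obtain rfl : i = 14 + 2 * (k - 7) := by omega
        exact hev _ hi hi
      · obtain rfl : i = 13 + 2 * (k - 6) := by omega
        exact ho _ hi hi

lemma tF_iter : ∀ i < 13, tF (tF (tF (tF (tF (tF (tF (tF i))))))) =
    if i = 9 then 11 else if i = 11 then 12 else if i = 12 then 9 else i := by decide

lemma t_three (n : ℕ) (hn : 14 ≤ n) : (tP n hn ^ 8).IsThreeCycle := by
  have : tP n hn ^ 8 = swap ⟨9, by omega⟩ ⟨12, by omega⟩ * swap ⟨9, by omega⟩ ⟨11, by omega⟩ := by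
    ext ⟨i, hi⟩
    have h1 : ((tP n hn ^ 8) ⟨i, hi⟩ : ℕ) = tF (tF (tF (tF (tF (tF (tF (tF i))))))) := by
      have hv : ∀ i, (tP n hn i : ℕ) = tF i := fun _ => rfl
      simp only [pow_succ, pow_zero, one_mul, mul_apply, hv]
    rw [h1]
    rcases lt_or_ge i 13 with h | h
    · rw [tF_iter i h]
      simp only [mul_apply, swap_apply_def, Fin.mk.injEq]
      interval_cases i <;> simp
    · simp only [tF_ge _ h, mul_apply]
      have h9 : (⟨i, hi⟩ : Fin n) ≠ ⟨9, by omega⟩ := by rw [ne_eq, Fin.mk.injEq]; omega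
      have h11 : (⟨i, hi⟩ : Fin n) ≠ ⟨11, by omega⟩ := by rw [ne_eq, Fin.mk.injEq]; omega
      have h12 : (⟨i, hi⟩ : Fin n) ≠ ⟨12, by omega⟩ := by rw [ne_eq, Fin.mk.injEq]; omega
      rw [swap_apply_of_ne_of_ne h9 h11, swap_apply_of_ne_of_ne h9 h12]
  rw [this]
  exact isThreeCycle_swap_mul_swap_same (by simp) (by simp) (by simp)

/-- The small case `n = 12`. -/
def tP12 : Perm (Fin 12) where
  toFun := ![1, 2, 3, 10, 5, 4, 11, 6, 7, 0, 8, 9]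
  invFun := ![9, 0, 1, 2, 5, 4, 7, 8, 10, 11, 3, 6]
  left_inv := by decide
  right_inv := by decide

end Stmt5

open Stmt5

/-- For even `n ≥ 12` there exist three `(n-3)`-cycles in `A_n` with product `1`
which generate `A_n`. -/
theorem stmt_5 (n : ℕ) (hn : 12 ≤ n) (hodd : Even n) :
    ∃ x y z : alternatingGroup (Fin n),
      (x : Equiv.Perm (Fin n)).IsCycle ∧ (x : Equiv.Perm (Fin n)).support.card = n - 3 ∧
      (y : Equiv.Perm (Fin n)).IsCycle ∧ (y : Equiv.Perm (Fin n)).support.card = n - 3 ∧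
      (z : Equiv.Perm (Fin n)).IsCycle ∧ (z : Equiv.Perm (Fin n)).support.card = n - 3 ∧
      x * y * z = 1 ∧ Subgroup.closure {x, y} = (⊤ : Subgroup (alternatingGroup (Fin n))) := by
  obtain ⟨hx, hxs, hxc⟩ := xP_cycle n hn
  have memx : ∀ (i : ℕ) (h : i < n), 3 ≤ i → (⟨i, h⟩ : Fin n) ∈ (xP n hn).support := by
    intro i h h3
    rw [hxs]
    simp
    omega
  by_cases h14 : 14 ≤ n
  · obtain ⟨hy, hyc⟩ := y_cycle n h14
    obtain ⟨hz, hzc⟩ := z_cycle n h14 hodd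
    exact core hn hodd (xP n hn) (tP n h14) (tP n h14 ^ 8) _ _ _ ⟨4, by omega⟩ ⟨7, by omega⟩
      hx hxs hxc hy hyc hz hzc rfl rfl rfl rfl (memx _ _ (by omega)) (memx _ _ (by omega))
      (t_three n h14) (Subgroup.pow_mem _ (Subgroup.subset_closure (by simp)) _)
  · obtain rfl : n = 12 := by
      obtain ⟨k, rfl⟩ := hodd
      omega
    have sc : ∀ (f : Perm (Fin 12)) (p i : Fin 12), (∃ k : Fin 12, (f ^ (k : ℕ)) p = i) →
        f.SameCycle p i := by
      rintro f p i ⟨k, hk⟩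
      exact ⟨(k : ℕ), by rw [zpow_natCast]; exact hk⟩
    have hy := cycle_of (xP 12 (le_refl 12) * tP12) 0 5 7 8 (by decide) (by decide) (by decide)
      (by decide) (by decide) (by decide) (by decide)
      (fun i h1 h2 h3 => sc _ _ _ (by revert i; decide +kernel))
    have hz := cycle_of (xP 12 (le_refl 12) * (xP 12 (le_refl 12) * tP12)) 0 3 10 11 (by decide) (by decide) (by decide)
      (by decide) (by decide) (by decide) (by decide)
      (fun i h1 h2 h3 => sc _ _ _ (by revert i; decide +kernel))
    have hw : (xP 12 (le_refl 12) * tP12 ^ 3) ^ 2 = swap 0 4 * swap 0 6 := by decide +kernel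
    refine core hn hodd (xP 12 (le_refl 12)) tP12 ((xP 12 (le_refl 12) * tP12 ^ 3) ^ 2) _ _ _ ⟨3, by omega⟩
      ⟨10, by omega⟩ hx hxs hxc hy.1 hy.2.2 hz.1 hz.2.2 rfl rfl rfl rfl
      (memx _ _ (by omega)) (memx _ _ (by omega)) ?_ ?_
    · rw [hw]
      exact isThreeCycle_swap_mul_swap_same (by decide) (by decide) (by decide)
    · exact Subgroup.pow_mem _ (Subgroup.mul_mem _ (Subgroup.subset_closure (by simp))
        (Subgroup.pow_mem _ (Subgroup.subset_closure (by simp)) _)) _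
end

section
/- Let q > 7 be a power of 2, G = L_2(q) = PSL_2(q) = SL_2(q), and let x ∈ G have order q−1. Let k be an algebraically closed field of characteristic 2 and V a nontrivial irreducible kG-module of dimension greater than 2. Then every eigenspace of x on V has dimension at most (1/3)·dim V. -/
namespace St7
open Matrix

variable {F : Type*} [Field F]

lemma slext {A B : Matrix.SpecialLinearGroup (Fin 2) F}
    (h : (A : Matrix (Fin 2) (Fin 2) F) = (B : Matrix (Fin 2) (Fin 2) F)) : A = B :=
  Subtype.ext h

def mk (p q r s : F) (h : p * s - q * r = 1) : Matrix.SpecialLinearGroup (Fin 2) F :=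
  ⟨!![p, q; r, s], by rw [Matrix.det_fin_two_of, h]⟩

lemma coe_mk (p q r s : F) (h : p * s - q * r = 1) :
    (mk p q r s h : Matrix (Fin 2) (Fin 2) F) = !![p, q; r, s] := rfl

lemma exists_mk (g : Matrix.SpecialLinearGroup (Fin 2) F) : ∃ p q r s h, g = mk p q r s h := by
  have hd := g.det_coe
  rw [Matrix.det_fin_two] at hd
  exact ⟨_, _, _, _, hd, slext (Matrix.eta_fin_two _)⟩

def uu (t : F) : Matrix.SpecialLinearGroup (Fin 2) F := mk 1 t 0 1 (by simp)

def ww [CharP F 2] : Matrix.SpecialLinearGroup (Fin 2) F := mk 0 1 1 0 (by simp [CharTwo.neg_eq])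

def hh : Fˣ →* Matrix.SpecialLinearGroup (Fin 2) F where
  toFun s := mk (s : F) 0 0 ((s⁻¹ : Fˣ) : F) (by simp)
  map_one' := by
    apply slext
    simp [coe_mk, Matrix.one_fin_two]
  map_mul' s t := by
    apply slext
    rw [Matrix.SpecialLinearGroup.coe_mul]
    simp [mul_comm, coe_mk]

lemma coe_uu (t : F) : (uu t : Matrix (Fin 2) (Fin 2) F) = !![1, t; 0, 1] := rfl

lemma coe_ww [CharP F 2] : ((ww : Matrix.SpecialLinearGroup (Fin 2) F) : Matrix (Fin 2) (Fin 2) F) =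
    !![0, 1; 1, 0] := rfl

lemma coe_hh (s : Fˣ) : (hh s : Matrix (Fin 2) (Fin 2) F) =
    !![(s : F), 0; 0, ((s⁻¹ : Fˣ) : F)] := rfl

lemma hh_inj : Function.Injective (hh (F := F)) := by
  intro s t h
  have := congrArg (fun g : Matrix.SpecialLinearGroup (Fin 2) F =>
    (g : Matrix (Fin 2) (Fin 2) F) 0 0) h
  simpa [coe_hh, Units.ext_iff] using this

lemma uu_zero : uu (0 : F) = 1 := by
  apply slext
  rw [coe_uu, Matrix.SpecialLinearGroup.coe_one, Matrix.one_fin_two]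

lemma uu_mul (s t : F) : uu s * uu t = uu (s + t) := by
  apply slext
  rw [Matrix.SpecialLinearGroup.coe_mul]
  simp [coe_uu, add_comm]

lemma ww_mul [CharP F 2] : ww * ww = (1 : Matrix.SpecialLinearGroup (Fin 2) F) := by
  apply slext
  rw [Matrix.SpecialLinearGroup.coe_mul]
  simp [coe_ww, Matrix.one_fin_two]

lemma hh_uu (s : Fˣ) (t : F) : hh s * uu t = uu ((s : F) ^ 2 * t) * hh s := by
  apply slext
  simp only [Matrix.SpecialLinearGroup.coe_mul]
  simp [coe_uu, coe_hh]
  field_simp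

lemma hh_ww [CharP F 2] (s : Fˣ) : hh s * ww = ww * hh s⁻¹ := by
  apply slext
  simp only [Matrix.SpecialLinearGroup.coe_mul]
  simp [coe_ww, coe_hh]

lemma ww_uu_ww [CharP F 2] (t : Fˣ) :
    ww * uu (t : F) * ww = uu ((t⁻¹ : Fˣ) : F) * ww * hh t * uu ((t⁻¹ : Fˣ) : F) := by
  apply slext
  simp only [Matrix.SpecialLinearGroup.coe_mul]
  simp [coe_ww, coe_hh, coe_uu, CharTwo.add_self_eq_zero]

lemma bruhat [CharP F 2] (g : Matrix.SpecialLinearGroup (Fin 2) F) :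
    (∃ (s : Fˣ) (t : F), g = hh s * uu t) ∨
    ∃ (r : F) (s : Fˣ) (t : F), g = uu r * ww * hh s * uu t := by
  obtain ⟨p, q, r, s, hd, rfl⟩ := exists_mk g
  by_cases hc : r = 0
  · left
    have hd2 : p * s = 1 := by rw [hc, mul_zero, sub_zero] at hd; exact hd
    have h0 : p ≠ 0 := left_ne_zero_of_mul_eq_one hd2
    refine ⟨Units.mk0 _ h0, q / p, ?_⟩
    apply slext
    simp only [Matrix.SpecialLinearGroup.coe_mul, coe_mk, coe_uu, coe_hh]
    simp [hc]
    exact ⟨by field_simp, eq_inv_of_mul_eq_one_right hd2⟩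
  · right
    refine ⟨p / r, Units.mk0 _ hc, s / r, ?_⟩
    apply slext
    simp only [Matrix.SpecialLinearGroup.coe_mul, coe_mk, coe_uu, coe_hh, coe_ww]
    have h2 : (2 : F) = 0 := CharTwo.two_eq_zero
    simp
    refine ⟨⟨?_, ?_⟩, ?_⟩
    · field_simp
    · field_simp
      linear_combination -hd - h2
    · field_simp

lemma exists_eig [Fintype F] (M : Matrix (Fin 2) (Fin 2) F)
    (hM : M ^ (Fintype.card F) = M) : ∃ a : F, (M - scalar (Fin 2) a).det = 0 := by
  classical
  have hp : ((Finset.univ : Finset F).val.map fun a : F => Polynomial.X - Polynomial.C a).prod =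
      (Polynomial.X ^ Fintype.card F - Polynomial.X : Polynomial F) := by
    rw [← FiniteField.roots_X_pow_card_sub_X F]
    apply Polynomial.prod_multiset_X_sub_C_of_monic_of_roots_card_eq
    · apply Polynomial.monic_X_pow_sub
      rw [Polynomial.degree_X]
      exact_mod_cast Fintype.one_lt_card
    · rw [FiniteField.roots_X_pow_card_sub_X,
        FiniteField.X_pow_card_sub_X_natDegree_eq F Fintype.one_lt_card]
      simp
  let D : Polynomial F →* F :=
    (Matrix.detMonoidHom (n := Fin 2)).comp ((Polynomial.aeval (R := F) M).toRingHom : Polynomial F →* _)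
  have h1 : D (∏ a : F, (Polynomial.X - Polynomial.C a)) = 0 := by
    have : (∏ a : F, (Polynomial.X - Polynomial.C a)) = 
      (Polynomial.X ^ Fintype.card F - Polynomial.X : Polynomial F) := hp
    rw [this]
    simp [D, hM]
  rw [map_prod] at h1
  obtain ⟨a, -, ha⟩ := Finset.prod_eq_zero_iff.1 h1
  refine ⟨a, ?_⟩
  simp [D, Matrix.algebraMap_eq_diagonal] at ha
  exact ha

lemma eigvec (p q r s a : F) (h : (!![p, q; r, s] - scalar (Fin 2) a).det = 0) :
    ∃ v w : F, (v ≠ 0 ∨ w ≠ 0) ∧ p * v + q * w = a * v ∧ r * v + s * w = a * w := by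
  obtain ⟨v, hv, h⟩ := Matrix.exists_mulVec_eq_zero_iff.2 h
  refine ⟨v 0, v 1, ?_, ?_, ?_⟩
  · by_contra! hh
    apply hv
    ext i; fin_cases i
    exacts [hh.1, hh.2]
  · have := congrFun h 0
    simp [Matrix.mulVec, dotProduct, Fin.sum_univ_two] at this
    linear_combination this
  · have := congrFun h 1
    simp [Matrix.mulVec, dotProduct, Fin.sum_univ_two] at this
    linear_combination this

lemma exists_conj [CharP F 2] [Fintype F] (hq : 7 < Fintype.card F)
    (x : Matrix.SpecialLinearGroup (Fin 2) F) (hx : orderOf x = Fintype.card F - 1) :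
    ∃ (P : Matrix.SpecialLinearGroup (Fin 2) F) (a : Fˣ), x = P * hh a * P⁻¹ := by
  have hxq : x ^ (Fintype.card F) = x := by
    have h1 : Fintype.card F = orderOf x + 1 := by omega
    rw [h1, pow_succ, pow_orderOf_eq_one, one_mul]
  have hx2 : x * x ≠ 1 := by
    intro h
    have := orderOf_le_of_pow_eq_one (x := x) (n := 2) (by norm_num) (by rw [pow_two, h])
    omega
  obtain ⟨p, q, r, s, hd, rfl⟩ := exists_mk x
  obtain ⟨a, ha⟩ := exists_eig !![p, q; r, s] (by
    have := congrArg (fun g : Matrix.SpecialLinearGroup (Fin 2) F =>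
      (g : Matrix (Fin 2) (Fin 2) F)) hxq
    simpa only [Matrix.SpecialLinearGroup.coe_pow, coe_mk] using this)
  have ha' : (p - a) * (s - a) - q * r = 0 := by simpa [Matrix.det_fin_two] using ha
  have ha0 : a ≠ 0 := by
    rintro rfl
    apply one_ne_zero (α := F)
    linear_combination ha' - hd
  have hb : (!![p, q; r, s] - scalar (Fin 2) a⁻¹).det = 0 := by
    simp [Matrix.det_fin_two]
    field_simp
    linear_combination (a ^ 2 - 1) * hd + ha'
  have hab : a - a⁻¹ ≠ 0 := by
    intro h
    have h1 : a * a = 1 := by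
      field_simp at h
      linear_combination h
    have h1' : a = 1 := by
      rcases mul_self_eq_one_iff.1 h1 with h | h
      · exact h
      · rw [h, CharTwo.neg_eq]
    subst h1'
    have htr : p + s = 0 := by
      have h2 : (2 : F) = 0 := CharTwo.two_eq_zero
      linear_combination hd - ha' + h2
    apply hx2
    apply slext
    rw [Matrix.SpecialLinearGroup.coe_mul]
    have hs : s = p := by
      rw [← CharTwo.neg_eq p]; linear_combination htr
    subst hs
    have h2 : (2 : F) = 0 := CharTwo.two_eq_zero
    simp [coe_mk, Matrix.one_fin_two]
    refine ⟨⟨?_, ?_⟩, ?_, ?_⟩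
    · linear_combination hd + q * r * h2
    · linear_combination s * q * h2
    · linear_combination s * r * h2
    · linear_combination hd + q * r * h2
  obtain ⟨v0, v1, hv, hv0, hv1⟩ := eigvec p q r s a ha
  obtain ⟨w0, w1, hw, hw0, hw1⟩ := eigvec p q r s a⁻¹ hb
  have hD : v0 * w1 - v1 * w0 ≠ 0 := by
    intro hD
    have e1 : (a - a⁻¹) * (w0 * v0) = 0 := by
      linear_combination - w0 * hv0 + v0 * hw0 - q * hD
    have e2 : (a - a⁻¹) * (w1 * v1) = 0 := by
      linear_combination - w1 * hv1 + v1 * hw1 + r * hD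
    have e3 : (a - a⁻¹) * (w0 * v1) = 0 := by
      linear_combination - w0 * hv1 + v0 * hw1 - s * hD + a⁻¹ * hD
    have e4 : (a - a⁻¹) * (w1 * v0) = 0 := by
      linear_combination - w1 * hv0 + v1 * hw0 + p * hD - a⁻¹ * hD
    simp only [mul_eq_zero, hab, false_or] at e1 e2 e3 e4
    tauto
  refine ⟨mk (v0 / (v0 * w1 - v1 * w0)) w0 (v1 / (v0 * w1 - v1 * w0)) w1 ?_,
    Units.mk0 a ha0, ?_⟩
  · field_simp
  · rw [eq_mul_inv_iff_mul_eq]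
    apply slext
    simp only [Matrix.SpecialLinearGroup.coe_mul, coe_hh, coe_mk]
    simp
    refine ⟨⟨?_, ?_⟩, ?_, ?_⟩
    · field_simp
      linear_combination hv0
    · linear_combination hw0
    · field_simp
      linear_combination hv1
    · linear_combination hw1

lemma gen [Fintype F] (a : Fˣ) (ha : orderOf a = Fintype.card F - 1) (s : Fˣ) :
    ∃ n : ℕ, a ^ n = s := by
  classical
  have h : Subgroup.zpowers a = ⊤ := by
    apply Subgroup.eq_top_of_card_eq
    rw [Nat.card_zpowers, ha, Nat.card_eq_fintype_card, Fintype.card_units]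
  have : s ∈ Subgroup.zpowers a := by rw [h]; trivial
  rw [← mem_powers_iff_mem_zpowers] at this
  exact this

lemma sum_split [Fintype F] {M : Type*} [AddCommMonoid M] [Fintype Fˣ] (f : F → M) :
    ∑ t, f t = f 0 + ∑ s : Fˣ, f s := by
  classical
  rw [Fintype.sum_eq_add_sum_subtype_ne f 0]
  congr 1
  exact (Fintype.sum_equiv unitsEquivNeZero _ _ (fun s => rfl)).symm

/-- common fixed vectors -/
lemma exists_fixed [CharP F 2] [Fintype F] {A : Type*} [AddCommGroup A] (hA : ∀ a : A, a + a = 0)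
    (σ : F → A →+ A) (h0 : ∀ a, σ 0 a = a) (hadd : ∀ s t a, σ (s + t) a = σ s (σ t a))
    (p : A → Prop) (hp1 : ∀ t a, p a → p (σ t a)) (hp2 : ∀ a b, p a → p b → p (a + b))
    (a : A) (ha : a ≠ 0) (hpa : p a) : ∃ b, b ≠ 0 ∧ p b ∧ ∀ t, σ t b = b := by
  classical
  suffices ∀ S : Finset F, ∃ b, b ≠ 0 ∧ p b ∧ ∀ t ∈ S, σ t b = b by
    obtain ⟨b, h1, h2, h3⟩ := this Finset.univ
    exact ⟨b, h1, h2, fun t => h3 t (Finset.mem_univ _)⟩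
  intro S
  induction S using Finset.induction_on with
  | empty => exact ⟨a, ha, hpa, by simp⟩
  | insert t S _ ih =>
    obtain ⟨b, h1, h2, h3⟩ := ih
    by_cases h : σ t b + b = 0
    · refine ⟨b, h1, h2, ?_⟩
      intro s hs
      rcases Finset.mem_insert.1 hs with rfl | hs
      · rw [← hA b] at h; exact add_right_cancel h
      · exact h3 s hs
    · refine ⟨_, h, hp2 _ _ (hp1 _ _ h2) h2, ?_⟩
      intro s hs
      rcases Finset.mem_insert.1 hs with rfl | hs
      · rw [map_add, ← hadd, CharTwo.add_self_eq_zero, h0, add_comm]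
      · rw [map_add, ← hadd, add_comm s t, hadd, h3 s hs]


section Rep

variable [CharP F 2] {k : Type*} [Field k] {V : Type*} [AddCommGroup V] [Module k V]
  (ρ : Representation k (Matrix.SpecialLinearGroup (Fin 2) F) V)

lemma r_uu (s t : F) (v : V) : ρ (uu s) (ρ (uu t) v) = ρ (uu (s + t)) v := by
  rw [← uu_mul, map_mul, Module.End.mul_apply]

lemma r_ww (v : V) : ρ ww (ρ ww v) = v := by
  rw [← Module.End.mul_apply, ← map_mul, ww_mul, map_one, Module.End.one_apply]

lemma r_uu0 (v : V) : ρ (uu 0) v = v := by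
  rw [uu_zero, map_one, Module.End.one_apply]

lemma r_hu (s : Fˣ) (t : F) (v : V) :
    ρ (hh s) (ρ (uu t) v) = ρ (uu ((s : F) ^ 2 * t)) (ρ (hh s) v) := by
  simp only [← Module.End.mul_apply, ← map_mul, hh_uu]

lemma r_hw (s : Fˣ) (v : V) : ρ (hh s) (ρ ww v) = ρ ww (ρ (hh s⁻¹) v) := by
  simp only [← Module.End.mul_apply, ← map_mul, hh_ww]

lemma r_wuw (t : Fˣ) (v : V) (hU : ∀ t, ρ (uu t) v = v) (χ : Fˣ → k)
    (hχ : ∀ s, ρ (hh s) v = χ s • v) :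
    ρ ww (ρ (uu (t : F)) (ρ ww v)) = χ t • ρ (uu ((t⁻¹ : Fˣ) : F)) (ρ ww v) := by
  simp only [← Module.End.mul_apply, ← map_mul]
  rw [← mul_assoc, ww_uu_ww]
  simp only [map_mul, Module.End.mul_apply, hU, hχ, map_smul]

lemma span_top (hirr : ∀ W : Submodule k V,
      (∀ g : Matrix.SpecialLinearGroup (Fin 2) F, ∀ v ∈ W, ρ g v ∈ W) → W = ⊥ ∨ W = ⊤)
    (v : V) (hv : v ≠ 0) (hU : ∀ t, ρ (uu t) v = v) (χ : Fˣ → k)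
    (hχ : ∀ s, ρ (hh s) v = χ s • v)
    (hmem : v ∈ Submodule.span k (Set.range fun t : F => ρ (uu t) (ρ ww v))) :
    Submodule.span k (Set.range fun t : F => ρ (uu t) (ρ ww v)) = ⊤ := by
  set M := Submodule.span k (Set.range fun t : F => ρ (uu t) (ρ ww v)) with hM
  have hgen : ∀ t, ρ (uu t) (ρ ww v) ∈ M := fun t => Submodule.subset_span ⟨t, rfl⟩
  have key : ∀ f : Module.End k V, (∀ t, f (ρ (uu t) (ρ ww v)) ∈ M) → ∀ x ∈ M, f x ∈ M := by
    intro f hf x hx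
    have : M ≤ M.comap f := by
      rw [hM, Submodule.span_le]
      rintro _ ⟨t, rfl⟩
      exact hf t
    exact this hx
  have kU : ∀ s, ∀ x ∈ M, ρ (uu s) x ∈ M := fun s => key _ fun t => by
    rw [r_uu]; exact hgen _
  have kH : ∀ s, ∀ x ∈ M, ρ (hh s) x ∈ M := fun s => key _ fun t => by
    rw [r_hu, r_hw, hχ, map_smul, map_smul]; exact M.smul_mem _ (hgen _)
  have kW : ∀ x ∈ M, ρ ww x ∈ M := key _ fun t => by
    by_cases ht : t = 0
    · rw [ht, r_uu0, r_ww]; exact hmem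
    · have := r_wuw ρ (Units.mk0 t ht) v hU χ hχ
      rw [Units.val_mk0] at this
      rw [this]
      exact M.smul_mem _ (hgen _)
  rcases hirr M (by
    intro g x hx
    rcases bruhat g with ⟨s, t, rfl⟩ | ⟨r, s, t, rfl⟩
    · rw [map_mul, Module.End.mul_apply]
      exact kH _ _ (kU _ _ hx)
    · simp only [map_mul, Module.End.mul_apply]
      exact kU _ _ (kW _ (kH _ _ (kU _ _ hx)))) with h | h
  · rw [h] at hmem
    exact absurd ((Submodule.mem_bot k).1 hmem) hv
  · exact h

lemma mem_of_zero [Fintype F] (v : V) (hU : ∀ t, ρ (uu t) v = v) (χ : Fˣ → k)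
    (hχ : ∀ s, ρ (hh s) v = χ s • v) (h0 : ∑ t : F, ρ (uu t) (ρ ww v) = 0) :
    v ∈ Submodule.span k (Set.range fun t : F => ρ (uu t) (ρ ww v)) := by
  classical
  have h1 := congrArg (ρ ww) h0
  rw [sum_split, map_add, r_uu0, r_ww, map_zero, map_sum] at h1
  have h2 := eq_neg_of_add_eq_zero_left h1
  have h3 : (-∑ s : Fˣ, ρ ww (ρ (uu (s : F)) (ρ ww v))) ∈
      Submodule.span k (Set.range fun t : F => ρ (uu t) (ρ ww v)) := by
    refine Submodule.neg_mem _ (Submodule.sum_mem _ fun t _ => ?_)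
    rw [r_wuw ρ t v hU χ hχ]
    exact Submodule.smul_mem _ _ (Submodule.subset_span ⟨_, rfl⟩)
  exact Set.mem_of_eq_of_mem h2 h3

lemma eigen_bound [FiniteDimensional k V] [CharP k 2] [Fintype F] (a : Fˣ)
    (ha : orderOf a = Fintype.card F - 1)
    (y : V) (c : k) (hc : c ≠ 0) (hy : ρ (hh a) y = c • y)
    (htop : Submodule.span k (Set.range fun t : F => ρ (uu t) y) = ⊤) (θ : k) :
    Module.finrank k (Module.End.eigenspace (ρ (hh a)) θ) ≤ 2 ∧
    (∑ t : F, ρ (uu t) y = 0 →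
      Module.finrank k (Module.End.eigenspace (ρ (hh a)) θ) ≤ 1) := by
  classical
  set f : Module.End k V := ρ (hh a) - algebraMap k (Module.End k V) θ with hf
  have hker : Module.finrank k (Module.End.eigenspace (ρ (hh a)) θ) =
      Module.finrank k (V ⧸ LinearMap.range f) := by
    rw [Module.End.eigenspace_def]
    have h1 := LinearMap.finrank_range_add_finrank_ker f
    have h2 := Submodule.finrank_quotient_add_finrank (LinearMap.range f)
    change Module.finrank k (LinearMap.ker f) = _
    omega
  rw [hker]
  set π := (LinearMap.range f).mkQ with hπ
  have hπf : ∀ x, π (ρ (hh a) x) = θ • π x := by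
    intro x
    rw [← map_smul, ← sub_eq_zero, ← map_sub]
    rw [hπ, Submodule.mkQ_apply, Submodule.Quotient.mk_eq_zero]
    exact ⟨x, by simp [hf, Module.algebraMap_end_apply]⟩
  have hstep : ∀ t : F, π (ρ (uu ((a : F) ^ 2 * t)) y) = (c⁻¹ * θ) • π (ρ (uu t) y) := by
    intro t
    have := hπf (ρ (uu t) y)
    rw [r_hu, hy, map_smul, map_smul] at this
    rw [mul_smul, ← this, smul_smul, inv_mul_cancel₀ hc, one_smul]
  have hpow : ∀ n : ℕ, π (ρ (uu (((a : F) ^ 2) ^ n)) y) = (c⁻¹ * θ) ^ n • π (ρ (uu 1) y) := by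
    intro n
    induction n with
    | zero => simp
    | succ n ih => rw [pow_succ', hstep, ih, smul_smul, ← pow_succ']
  have hall : ∀ t : F, t ≠ 0 → ∃ n : ℕ, t = ((a : F) ^ 2) ^ n := by
    intro t ht
    obtain ⟨r, hr⟩ : IsSquare t := FiniteField.isSquare_of_char_two (ringChar.eq_iff.2 inferInstance) t
    have hr0 : r ≠ 0 := by rintro rfl; simp at hr; exact ht hr
    obtain ⟨n, hn⟩ := gen a ha (Units.mk0 r hr0)
    refine ⟨n, ?_⟩
    have : (a : F) ^ n = r := by
      have := congrArg Units.val hn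
      simpa using this
    rw [hr, ← this]; ring
  have hQtop : Submodule.span k (Set.range fun t : F => π (ρ (uu t) y)) = ⊤ := by
    have := congrArg (Submodule.map π) htop
    rw [Submodule.map_span, Submodule.map_top, hπ, Submodule.range_mkQ, ← Set.range_comp] at this
    exact this
  constructor
  · have h2 : Submodule.span k (({π y, π (ρ (uu 1) y)} : Finset (V ⧸ LinearMap.range f)) :
        Set (V ⧸ LinearMap.range f)) = ⊤ := by
      rw [eq_top_iff, ← hQtop, Submodule.span_le]
      rintro _ ⟨t, rfl⟩
      by_cases ht : t = 0
      · subst ht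
        simp only [r_uu0]
        exact Submodule.subset_span (by simp)
      · obtain ⟨n, rfl⟩ := hall t ht
        simp only [hpow]
        exact Submodule.smul_mem _ _ (Submodule.subset_span (by simp))
    have h3 := finrank_span_finset_le_card (R := k)
      ({π y, π (ρ (uu 1) y)} : Finset (V ⧸ LinearMap.range f))
    unfold Set.finrank at h3
    rw [h2, finrank_top] at h3
    exact h3.trans Finset.card_le_two
  · intro hsum
    have hy1 : π y ∈ Submodule.span k {π (ρ (uu 1) y)} := by
      by_cases hθ : θ = c
      · have h1 := congrArg π hsum
        rw [map_sum, sum_split, r_uu0, map_zero] at h1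
        rw [eq_neg_of_add_eq_zero_left h1]
        refine Submodule.neg_mem _ (Submodule.sum_mem _ fun t _ => ?_)
        obtain ⟨n, hn⟩ := hall t t.ne_zero
        rw [hn, hpow]
        exact Submodule.smul_mem _ _ (Submodule.mem_span_singleton_self _)
      · have h1 := hπf y
        rw [hy, map_smul, ← sub_eq_zero, ← sub_smul, smul_eq_zero, sub_eq_zero] at h1
        rcases h1 with h1 | h1
        · exact absurd h1.symm hθ
        · rw [h1]; exact Submodule.zero_mem _
    have h2 : Submodule.span k {π (ρ (uu 1) y)} = ⊤ := by
      rw [eq_top_iff, ← hQtop, Submodule.span_le]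
      rintro _ ⟨t, rfl⟩
      by_cases ht : t = 0
      · subst ht
        simp only [r_uu0]
        exact hy1
      · obtain ⟨n, rfl⟩ := hall t ht
        simp only [hpow]
        exact Submodule.smul_mem _ _ (Submodule.mem_span_singleton_self _)
    rw [← finrank_top k, ← h2]
    exact (finrank_span_le_card _).trans (by simp)

lemma dim_ge [FiniteDimensional k V] [CharP k 2] [Fintype F] (y : V)
    (hN : ∑ t : F, ρ (uu t) y ≠ 0) : Fintype.card F ≤ Module.finrank k V := by
  classical
  have hli : LinearIndependent k (fun t : F => ρ (uu t) y) := by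
    rw [Fintype.linearIndependent_iff]
    by_contra! hcon
    obtain ⟨g, hg, i, hi⟩ := hcon
    obtain ⟨b, hb0, hb1, hb2⟩ := exists_fixed (F := F) (A := F → k)
      (fun a => by ext i; exact CharTwo.add_self_eq_zero _)
      (fun s => { toFun := fun a t => a (t + s), map_zero' := rfl, map_add' := fun _ _ => rfl })
      (fun a => by ext t; simp) (fun s t a => by ext r; simp [add_assoc])
      (fun a => ∑ t : F, a t • ρ (uu t) y = 0)
      (by
        intro s a h
        have h1 := congrArg (ρ (uu (-s))) h
        rw [map_sum, map_zero] at h1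
        rw [← h1]
        refine (Fintype.sum_equiv (Equiv.addRight s) _ _ fun t => ?_)
        simp [r_uu])
      (by
        intro a b h1 h2
        simp only [Pi.add_apply, add_smul, Finset.sum_add_distrib, h1, h2, add_zero])
      g (fun h => hi (by rw [h]; rfl)) hg
    have hconst : ∀ t, b t = b 0 := by
      intro t
      have := congrFun (hb2 t) 0
      simpa using this
    simp only [hconst, ← Finset.smul_sum, smul_eq_zero, hN, or_false] at hb1
    apply hb0
    ext t
    rw [hconst, hb1]; rfl
  exact hli.fintype_card_le_finrank

lemma exists_B [FiniteDimensional k V] [CharP k 2] [IsAlgClosed k] [Fintype F] [Nontrivial V]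
    (a : Fˣ) (ha : orderOf a = Fintype.card F - 1) :
    ∃ v : V, v ≠ 0 ∧ (∀ t, ρ (uu t) v = v) ∧ ∃ χ : Fˣ → k, ∀ s, ρ (hh s) v = χ s • v := by
  obtain ⟨x, hx⟩ := exists_ne (0 : V)
  obtain ⟨b, hb0, -, hb⟩ := exists_fixed (F := F) (A := V)
    (fun a => by rw [← two_smul k a, CharTwo.two_eq_zero, zero_smul])
    (fun s => (ρ (uu s)).toAddMonoidHom) (fun a => r_uu0 ρ a)
    (fun s t a => (r_uu ρ s t a).symm) (fun _ => True) (fun _ _ _ => trivial)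
    (fun _ _ _ _ => trivial) x hx trivial
  let W : Submodule k V := ⨅ t : F, LinearMap.ker (ρ (uu t) - 1)
  have hW : ∀ v, v ∈ W ↔ ∀ t, ρ (uu t) v = v := by
    intro v
    simp [W, sub_eq_zero]
  have hmap : ∀ v ∈ W, ρ (hh a) v ∈ W := by
    intro v hv
    rw [hW] at hv ⊢
    intro t
    have h := r_hu ρ a (((a : F) ^ 2)⁻¹ * t) v
    rw [hv, mul_inv_cancel_left₀ (pow_ne_zero 2 a.ne_zero)] at h
    exact h.symm
  have : Nontrivial W := ⟨⟨⟨b, (hW b).2 hb⟩, 0, fun h => hb0 (congrArg Subtype.val h)⟩⟩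
  obtain ⟨c, hc⟩ := Module.End.exists_eigenvalue ((ρ (hh a)).restrict hmap)
  obtain ⟨v, hv⟩ := hc.exists_hasEigenvector
  have hv0 : (v : V) ≠ 0 := fun h => hv.2 (Subtype.ext h)
  have hv1 : ρ (hh a) v = c • (v : V) := congrArg Subtype.val hv.apply_eq_smul
  have hpow : ∀ n : ℕ, ρ (hh (a ^ n)) v = c ^ n • (v : V) := by
    intro n
    induction n with
    | zero => simp
    | succ n ih =>
      rw [pow_succ', map_mul, map_mul, Module.End.mul_apply, ih, map_smul, hv1, smul_smul,
        ← pow_succ]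
  refine ⟨v, hv0, (hW _).1 v.2, ?_⟩
  choose n hn using gen a ha
  exact ⟨fun s => c ^ n s, fun s => by rw [← hpow, hn]⟩

/-- Hecke operator computation -/
lemma hecke [CharP k 2] [Fintype F] [Fintype Fˣ] (v : V)
    (hU : ∀ t, ρ (uu t) v = v) (χ : Fˣ → k) (hχ : ∀ s, ρ (hh s) v = χ s • v) :
    ∑ t : F, ρ (uu t) (ρ ww (∑ s : F, ρ (uu s) (ρ ww v))) =
      (∑ s, χ s) • ∑ t : F, ρ (uu t) (ρ ww v) := by
  have h1 : ρ ww (∑ s : F, ρ (uu s) (ρ ww v)) =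
      v + ∑ s : Fˣ, χ s • ρ (uu ((s⁻¹ : Fˣ) : F)) (ρ ww v) := by
    rw [sum_split, map_add, r_uu0, r_ww, map_sum]
    simp only [r_wuw ρ _ v hU χ hχ]
  have hsh : ∀ r : F, ∑ t : F, ρ (uu t) (ρ (uu r) (ρ ww v)) = ∑ t : F, ρ (uu t) (ρ ww v) := by
    intro r
    simp only [r_uu]
    exact Fintype.sum_equiv (Equiv.addRight r) _ _ fun t => rfl
  rw [h1]
  simp only [map_add, map_sum, map_smul, hU, Finset.sum_add_distrib]
  rw [Finset.sum_comm]
  simp only [← Finset.smul_sum, hsh, ← Finset.sum_smul]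
  have : (∑ _t : F, v) = 0 := by
    rw [Finset.sum_const, Finset.card_univ, ← Nat.cast_smul_eq_nsmul k]
    obtain ⟨n, -, hn⟩ := FiniteField.card F 2
    rw [hn]
    simp [CharTwo.two_eq_zero]
  rw [this, zero_add]

lemma hecke_B [Fintype F] (v : V)
    (hU : ∀ t, ρ (uu t) v = v) (χ : Fˣ → k) (hχ : ∀ s, ρ (hh s) v = χ s • v) :
    (∀ t, ρ (uu t) (∑ s : F, ρ (uu s) (ρ ww v)) = ∑ s : F, ρ (uu s) (ρ ww v)) ∧
    ∀ s, ρ (hh s) (∑ s : F, ρ (uu s) (ρ ww v)) = χ s⁻¹ • ∑ s : F, ρ (uu s) (ρ ww v) := by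
  constructor
  · intro t
    rw [map_sum]
    simp only [r_uu]
    exact Fintype.sum_equiv (Equiv.addLeft t) _ _ fun t => rfl
  · intro s
    rw [map_sum, Finset.smul_sum]
    refine Fintype.sum_equiv (Equiv.mulLeft₀ ((s : F) ^ 2) (pow_ne_zero 2 s.ne_zero)) _ _
      fun t => ?_
    rw [r_hu, r_hw, hχ, map_smul, map_smul]
    rfl

lemma main [FiniteDimensional k V] [CharP k 2] [IsAlgClosed k] [Fintype F]
    (hq : 7 < Fintype.card F) (a : Fˣ) (ha : orderOf a = Fintype.card F - 1)
    (hirr : ∀ W : Submodule k V,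
      (∀ g : Matrix.SpecialLinearGroup (Fin 2) F, ∀ v ∈ W, ρ g v ∈ W) → W = ⊥ ∨ W = ⊤)
    (hdim : 2 < Module.finrank k V) (θ : k) :
    3 * Module.finrank k (Module.End.eigenspace (ρ (hh a)) θ) ≤ Module.finrank k V := by
  classical
  have : Nontrivial V := Module.nontrivial_of_finrank_pos (R := k) (by omega)
  have bound : ∀ v : V, v ≠ 0 → (∀ t, ρ (uu t) v = v) → ∀ χ : Fˣ → k,
      (∀ s, ρ (hh s) v = χ s • v) →
      v ∈ Submodule.span k (Set.range fun t : F => ρ (uu t) (ρ ww v)) →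
      Module.finrank k (Module.End.eigenspace (ρ (hh a)) θ) ≤ 2 ∧
      (∑ t : F, ρ (uu t) (ρ ww v) = 0 →
        Module.finrank k (Module.End.eigenspace (ρ (hh a)) θ) ≤ 1) := by
    intro v hv hU χ hχ hmem
    refine eigen_bound ρ a ha (ρ ww v) (χ a⁻¹) ?_ ?_ (span_top ρ hirr v hv hU χ hχ hmem) θ
    · intro h
      have h1 := hχ a⁻¹
      rw [h, zero_smul] at h1
      apply hv
      have h2 : ρ (hh a) (ρ (hh a⁻¹) v) = v := by
        rw [← Module.End.mul_apply, ← map_mul, ← map_mul, mul_inv_cancel, map_one, map_one]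
        rfl
      rw [← h2, h1, map_zero]
    · rw [r_hw, hχ, map_smul]
  have caseA : ∀ v : V, v ≠ 0 → (∀ t, ρ (uu t) v = v) → ∀ χ : Fˣ → k,
      (∀ s, ρ (hh s) v = χ s • v) → ∑ t : F, ρ (uu t) (ρ ww v) = 0 →
      3 * Module.finrank k (Module.End.eigenspace (ρ (hh a)) θ) ≤ Module.finrank k V := by
    intro v hv hU χ hχ h0
    have := (bound v hv hU χ hχ (mem_of_zero ρ v hU χ hχ h0)).2 h0
    omega
  obtain ⟨v, hv, hU, χ, hχ⟩ := exists_B (k := k) (V := V) ρ a ha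
  by_cases he : ∑ t : F, ρ (uu t) (ρ ww v) = 0
  · exact caseA v hv hU χ hχ he
  obtain ⟨hU', hχ'⟩ := hecke_B ρ v hU χ hχ
  have hk := hecke ρ v hU χ hχ
  set e := ∑ t : F, ρ (uu t) (ρ ww v) with he_def
  by_cases hS : ∑ s, χ s = 0
  · rw [hS, zero_smul] at hk
    exact caseA e he hU' _ hχ' hk
  · have hmem : e ∈ Submodule.span k (Set.range fun t : F => ρ (uu t) (ρ ww e)) := by
      have h1 : e = (∑ s, χ s)⁻¹ • ∑ t : F, ρ (uu t) (ρ ww e) := by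
        rw [hk, smul_smul, inv_mul_cancel₀ hS, one_smul]
      rw [h1]
      refine Submodule.smul_mem _ _ (Submodule.sum_mem _ fun t _ => ?_)
      rw [← h1]
      exact Submodule.subset_span ⟨t, rfl⟩
    have h2 := (bound e he hU' _ hχ' hmem).1
    have h3 := dim_ge ρ (ρ ww v) he
    omega

end Rep

end St7


/-- Let `G = SL₂(q) = PSL₂(q)` with `q > 7` even and `x ∈ G` of order `q - 1`.
If `k` is algebraically closed of characteristic `2` and `V` a nontrivial
irreducible `kG`-module of dimension `> 2`, then every eigenspace of `x` on `V`
has dimension at most `(1/3) dim V`. -/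
theorem stmt_7 (F : Type*) [Field F] [Fintype F] [CharP F 2]
    (hq : 7 < Fintype.card F)
    (x : Matrix.SpecialLinearGroup (Fin 2) F)
    (hx : orderOf x = Fintype.card F - 1)
    (k : Type*) [Field k] [IsAlgClosed k] [CharP k 2]
    (V : Type*) [AddCommGroup V] [Module k V] [FiniteDimensional k V]
    (ρ : Representation k (Matrix.SpecialLinearGroup (Fin 2) F) V)
    (hirr : ∀ W : Submodule k V,
      (∀ g : Matrix.SpecialLinearGroup (Fin 2) F, ∀ v ∈ W, ρ g v ∈ W) → W = ⊥ ∨ W = ⊤)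
    (hnt : ∃ (g : Matrix.SpecialLinearGroup (Fin 2) F) (v : V), ρ g v ≠ v)
    (hdim : 2 < Module.finrank k V) :
    ∀ θ : k, 3 * Module.finrank k (Module.End.eigenspace (ρ x) θ) ≤
      Module.finrank k V := by
  intro θ
  obtain ⟨P, a, rfl⟩ := St7.exists_conj hq x hx
  have ha : orderOf a = Fintype.card F - 1 := by
    rw [← hx, ← orderOf_injective St7.hh St7.hh_inj a]
    exact (MulAut.conj P).orderOf_eq _ |>.symm
  have h := St7.main ρ hq a ha hirr hdim θ
  have he : Module.finrank k (Module.End.eigenspace (ρ (P * St7.hh a * P⁻¹)) θ) ≤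
      Module.finrank k (Module.End.eigenspace (ρ (St7.hh a)) θ) := by
    have hPP : ∀ v, ρ P (ρ P⁻¹ v) = v := fun v => by
      rw [← Module.End.mul_apply, ← map_mul, mul_inv_cancel, map_one]; rfl
    have hPP' : ∀ v, ρ P⁻¹ (ρ P v) = v := fun v => by
      rw [← Module.End.mul_apply, ← map_mul, inv_mul_cancel, map_one]; rfl
    refine LinearMap.finrank_le_finrank_of_injective
      (f := (ρ P⁻¹).restrict (p := Module.End.eigenspace (ρ (P * St7.hh a * P⁻¹)) θ)
        (q := Module.End.eigenspace (ρ (St7.hh a)) θ) ?_) ?_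
    · intro v hv
      rw [Module.End.mem_eigenspace_iff] at hv ⊢
      rw [map_mul, map_mul, Module.End.mul_apply, Module.End.mul_apply] at hv
      rw [← map_smul, ← hv, hPP']
    · intro v w hvw
      apply Subtype.ext
      have := congrArg (fun z => ρ P (Subtype.val z)) hvw
      simpa [hPP] using this
  omega
end

section
/- Let G = SL_2(q) with q > 3 even, and let x ∈ G have order q+1. Let k be an algebraically closed field of characteristic 2 and V a nontrivial irreducible kG-module. Then x has pairwise distinct eigenvalues on V; in particular the fixed space C_V(x) is zero. -/
namespace Stmt8
open Matrix

set_option linter.unusedSectionVars false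

lemma exists_common_eigen {k V : Type*} [Field k] [IsAlgClosed k] [AddCommGroup V] [Module k V]
    [FiniteDimensional k V] {ι : Type*} (T : ι → Module.End k V)
    (hT : ∀ i j, ∀ v, T i (T j v) = T j (T i v)) :
    ∀ (n : ℕ) (W : Submodule k V), Module.finrank k W = n → W ≠ ⊥ → 
      (∀ i, ∀ v ∈ W, T i v ∈ W) → ∃ w ∈ W, w ≠ 0 ∧ ∀ i, ∃ c : k, T i w = c • w := by
  intro n
  induction n using Nat.strong_induction_on with
  | _ n ih =>
  intro W hn hW hinv
  by_cases h : ∀ i, ∃ c : k, ∀ v ∈ W, T i v = c • v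
  · obtain ⟨w, hw, hw0⟩ := W.ne_bot_iff.mp hW
    exact ⟨w, hw, hw0, fun i => (h i).imp fun c hc => hc w hw⟩
  · push Not at h
    obtain ⟨i, hi⟩ := h
    have : Nontrivial W := Submodule.nontrivial_iff_ne_bot.mpr hW
    obtain ⟨c, hc⟩ := Module.End.exists_eigenvalue ((T i).restrict (hinv i))
    obtain ⟨u, hu⟩ := hc.exists_hasEigenvector
    have hu1 : T i u = c • (u : V) := by
      have := congrArg Subtype.val hu.apply_eq_smul
      simpa using this
    have hu0 : (u : V) ≠ 0 := by
      have := hu.2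
      simpa using this
    let W' := W ⊓ Module.End.eigenspace (T i) c
    have hlt : W' < W := by
      refine lt_of_le_of_ne inf_le_left ?_
      intro he
      obtain ⟨v, hv, hv'⟩ := hi c
      rw [← he] at hv
      exact hv' (Module.End.mem_eigenspace_iff.mp hv.2)
    have hfr := Submodule.finrank_lt_finrank_of_lt hlt
    obtain ⟨w, hw, h1, h2⟩ := ih _ (hn ▸ hfr) W' rfl
      ((Submodule.ne_bot_iff _).mpr ⟨u, ⟨u.2, Module.End.mem_eigenspace_iff.mpr hu1⟩, hu0⟩)
      (by
        rintro j v ⟨hv1, hv2⟩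
        refine ⟨hinv j v hv1, ?_⟩
        rw [SetLike.mem_coe, Module.End.mem_eigenspace_iff] at *
        rw [hT, hv2, map_smul])
    exact ⟨w, hw.1, h1, h2⟩

section grp
variable {F : Type*} [Field F]

def U (c : F) : SpecialLinearGroup (Fin 2) F := ⟨!![1, c; 0, 1], by simp [det_fin_two]⟩
def D (a : Fˣ) : SpecialLinearGroup (Fin 2) F :=
  ⟨!![(a : F), 0; 0, ((a⁻¹ : Fˣ) : F)], by simp [det_fin_two]⟩
def S [CharP F 2] : SpecialLinearGroup (Fin 2) F :=
  ⟨!![0, 1; 1, 0], by simp [det_fin_two, CharTwo.neg_eq]⟩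

lemma U_val (c : F) : (U c).1 = !![1, c; 0, 1] := rfl
lemma D_val (a : Fˣ) : (D a).1 = !![(a : F), 0; 0, ((a⁻¹ : Fˣ) : F)] := rfl
lemma S_val [CharP F 2] : (S : SpecialLinearGroup (Fin 2) F).1 = !![0, 1; 1, 0] := rfl
lemma inv_val (g : SpecialLinearGroup (Fin 2) F) :
    (g⁻¹).1 = !![g.1 1 1, -g.1 0 1; -g.1 1 0, g.1 0 0] := by
  rw [SpecialLinearGroup.SL2_inv_expl]; rfl

lemma mul_val (g h : SpecialLinearGroup (Fin 2) F) : (g * h).1 = g.1 * h.1 := rfl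

lemma U_zero : U (0 : F) = 1 := by
  ext i j; fin_cases i <;> fin_cases j <;> simp [U_val]
lemma U_mul (a b : F) : U a * U b = U (a + b) := by
  ext i j; fin_cases i <;> fin_cases j <;> simp [U_val, add_comm]
lemma D_mul (a b : Fˣ) : D a * D b = D (a * b) := by
  ext i j; fin_cases i <;> fin_cases j <;> simp [D_val, mul_comm]
lemma D_U (a : Fˣ) (c : F) : D a * U c = U (a * a * c) * D a := by
  ext i j; fin_cases i <;> fin_cases j <;> simp [D_val, U_val]
  field_simp
lemma U_D (a : Fˣ) (c : F) : U c * D a = D a * U ((a⁻¹ : Fˣ) * (a⁻¹ : Fˣ) * c) := by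
  ext i j; fin_cases i <;> fin_cases j <;> simp [D_val, U_val]
  field_simp
lemma S_mul_S [CharP F 2] : (S : SpecialLinearGroup (Fin 2) F) * S = 1 := by
  ext i j; fin_cases i <;> fin_cases j <;> simp [S_val]
lemma S_D [CharP F 2] (a : Fˣ) : S * D a = D a⁻¹ * S := by
  ext i j; fin_cases i <;> fin_cases j <;> simp [S_val, D_val]
lemma S_U_S [CharP F 2] (a : Fˣ) :
    S * U (a : F) * S = U ((a⁻¹ : Fˣ) : F) * (D a⁻¹ * S) * U ((a⁻¹ : Fˣ) : F) := by
  ext i j; fin_cases i <;> fin_cases j <;> simp [S_val, D_val, U_val, CharTwo.add_self_eq_zero]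

lemma det_eq (g : SpecialLinearGroup (Fin 2) F) : g.1 0 0 * g.1 1 1 - g.1 0 1 * g.1 1 0 = 1 := by
  rw [← det_fin_two]; exact g.2

lemma borel (g : SpecialLinearGroup (Fin 2) F) (h : g.1 1 0 = 0) :
    ∃ (a : Fˣ) (c : F), g = U c * D a := by
  have hd := det_eq g
  rw [h, mul_zero, sub_zero] at hd
  have h0 : g.1 0 0 ≠ 0 := left_ne_zero_of_mul_eq_one hd
  refine ⟨Units.mk0 _ h0, g.1 0 0 * g.1 0 1, ?_⟩
  ext i j; fin_cases i <;> fin_cases j <;> simp [D_val, U_val, h]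
  · field_simp
  · exact eq_inv_of_mul_eq_one_right hd

lemma bigcell [CharP F 2] (g : SpecialLinearGroup (Fin 2) F) (c : Fˣ) (h : g.1 1 0 = c) :
    ∃ (a d : F), g = U a * (D c⁻¹ * S) * U d := by
  have hd := det_eq g
  rw [h] at hd
  refine ⟨g.1 0 0 / c, g.1 1 1 / c, ?_⟩
  ext i j; fin_cases i <;> fin_cases j <;> simp [D_val, U_val, S_val, h]
  · have := c.ne_zero
    field_simp
    rw [CharTwo.sub_eq_add] at hd
    have h2 := CharTwo.two_eq_zero (R := F)
    linear_combination hd - (g.1 0 0 * g.1 1 1) * h2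
  · have := c.ne_zero
    field_simp

lemma inv_ll [CharP F 2] (g : SpecialLinearGroup (Fin 2) F) : (g⁻¹).1 1 0 = g.1 1 0 := by
  rw [inv_val]; simp [CharTwo.neg_eq]

lemma U_sq [CharP F 2] (c : F) : U c * U c = 1 := by
  rw [U_mul, CharTwo.add_self_eq_zero, U_zero]

/-- projective point of the bottom row -/
noncomputable def pt (g : SpecialLinearGroup (Fin 2) F) : Option F :=
  open Classical in if g.1 1 0 = 0 then none else some (g.1 1 1 / g.1 1 0)

lemma pt_eq {g h : SpecialLinearGroup (Fin 2) F} (e : pt g = pt h) : (g * h⁻¹).1 1 0 = 0 := by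
  rw [mul_val, inv_val]
  unfold pt at e
  split_ifs at e with h1 h2 h2
  · simp [Matrix.mul_apply, Fin.sum_univ_two, h1, h2]
  · simp only [Option.some.injEq] at e
    simp only [Matrix.mul_apply, Fin.sum_univ_two]
    simp
    field_simp at e
    linear_combination -e

variable [Fintype F]

lemma card_even [CharP F 2] : 2 ∣ Fintype.card F := by
  rw [← CharP.cast_eq_zero_iff F 2]
  exact Nat.cast_card_eq_zero F

lemma D_pow (a : Fˣ) (n : ℕ) : D a ^ n = D (a ^ n) := by
  induction n with
  | zero => rw [pow_zero, pow_zero]; ext i j; fin_cases i <;> fin_cases j <;> simp [D_val]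
  | succ n ih => rw [pow_succ, ih, D_mul, pow_succ]

lemma borel_pow (a : Fˣ) (c : F) (n : ℕ) : ∃ e, (U c * D a) ^ n = U e * D (a ^ n) := by
  induction n with
  | zero => exact ⟨0, by rw [U_zero, ← D_pow]; simp⟩
  | succ n ih =>
    obtain ⟨e, he⟩ := ih
    refine ⟨e + ((a ^ n : Fˣ) : F) * ((a ^ n : Fˣ) : F) * c, ?_⟩
    rw [pow_succ, he, mul_assoc, ← mul_assoc (D _) (U c), D_U, mul_assoc, D_mul, ← mul_assoc,
      U_mul, pow_succ]

lemma eq_one_of_borel [CharP F 2] (g : SpecialLinearGroup (Fin 2) F)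
    (hg : g ^ (Fintype.card F + 1) = 1) (h : g.1 1 0 = 0) : g = 1 := by
  obtain ⟨a, c, rfl⟩ := borel g h
  have h1 : (U c * D a) ^ (2 * (Fintype.card F - 1)) = 1 := by
    obtain ⟨e, he⟩ := borel_pow a c (Fintype.card F - 1)
    have : a ^ (Fintype.card F - 1) = 1 := by
      ext; simpa using FiniteField.pow_card_sub_one_eq_one (a : F) a.ne_zero
    have hD : D (1 : Fˣ) = 1 := by simpa using (D_pow (1 : Fˣ) 0).symm
    rw [mul_comm, pow_mul, he, this, hD, mul_one, pow_two, U_sq]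
  have h2 := orderOf_dvd_of_pow_eq_one h1
  have h3 := orderOf_dvd_of_pow_eq_one hg
  obtain ⟨m, hm⟩ := card_even (F := F)
  have hc : Nat.Coprime (2 * (Fintype.card F - 1)) (Fintype.card F + 1) := by
    have hpos : 0 < Fintype.card F := Fintype.card_pos
    have h5 : Nat.Coprime 2 (Fintype.card F + 1) := by
      rw [Nat.coprime_two_left, hm]; exact ⟨m, rfl⟩
    refine Nat.Coprime.mul_left h5 ?_
    have : Fintype.card F + 1 = 2 + (Fintype.card F - 1) := by omega
    rw [this, Nat.coprime_add_self_right, Nat.coprime_two_right, hm]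
    exact ⟨m - 1, by omega⟩
  rw [← orderOf_eq_one_iff]
  exact Nat.eq_one_of_dvd_coprimes hc h2 h3

lemma pow_ll [CharP F 2] (x : SpecialLinearGroup (Fin 2) F) (hx : orderOf x = Fintype.card F + 1)
    (i : ℕ) (h0 : 0 < i) (hi : i < Fintype.card F + 1) : (x ^ i).1 1 0 ≠ 0 := by
  intro h
  have := eq_one_of_borel (x ^ i) (by rw [← pow_mul, mul_comm, pow_mul, ← hx, pow_orderOf_eq_one, one_pow]) h
  have := Nat.le_of_dvd h0 (orderOf_dvd_of_pow_eq_one this)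
  omega

lemma factor [CharP F 2] (x : SpecialLinearGroup (Fin 2) F) (hx : orderOf x = Fintype.card F + 1)
    (g : SpecialLinearGroup (Fin 2) F) : ∃ (a : Fˣ) (c : F) (i : ℕ), g = U c * D a * x ^ i := by
  have hinj : Function.Injective (fun i : Fin (Fintype.card F + 1) => pt (x ^ (i : ℕ))) := by
    intro i j hij
    by_contra hne
    wlog hlt : j < i generalizing i j
    · exact this hij.symm (Ne.symm hne) (lt_of_le_of_ne (not_lt.mp hlt) hne)
    have h := pt_eq hij
    have e : x ^ (i : ℕ) * (x ^ (j : ℕ))⁻¹ = x ^ ((i : ℕ) - j) := by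
      rw [pow_sub x hlt.le]
    rw [e] at h
    have := Fin.lt_def.mp hlt
    exact pow_ll x hx _ (by omega) (by omega) h
  have hb := (Fintype.bijective_iff_injective_and_card _).mpr ⟨hinj, by simp⟩
  obtain ⟨i, hi⟩ := hb.2 (pt g)
  obtain ⟨a, c, h⟩ := borel _ (pt_eq hi.symm)
  exact ⟨a, c, i, by rw [← h]; simp⟩

end grp

section rep
variable {F : Type*} [Field F] [Fintype F] [CharP F 2]
  {k : Type*} [Field k] [IsAlgClosed k] [CharP k 2]
  {V : Type*} [AddCommGroup V] [Module k V] [FiniteDimensional k V]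

/-- common Borel eigenvector for a pair of operator families -/
lemma exists_borel_eigen [Nontrivial V] (P : F → Module.End k V) (Q : Fˣ → Module.End k V)
    (hP : ∀ a b v, P a (P b v) = P b (P a v)) (hP2 : ∀ a v, P a (P a v) = v)
    (hQ : ∀ a b v, Q a (Q b v) = Q b (Q a v))
    (hPQ : ∀ a c, ∃ c', ∀ v, P c (Q a v) = Q a (P c' v)) :
    ∃ w : V, w ≠ 0 ∧ (∀ c, P c w = w) ∧ ∃ χ : Fˣ → k, ∀ a, Q a w = χ a • w := by
  obtain ⟨w, -, hw0, hw⟩ := exists_common_eigen P hP _ ⊤ rfl top_ne_bot (fun _ _ _ => trivial)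
  have hfix : ∀ c, P c w = w := by
    intro c
    obtain ⟨s, hs⟩ := hw c
    have h2 := hP2 c w
    rw [hs, map_smul, hs, smul_smul] at h2
    have h3 : s * s = 1 := by
      apply smul_left_injective k hw0
      simpa using h2
    have h4 : s = 1 := by
      rcases mul_self_eq_one_iff.mp h3 with h | h
      · exact h
      · rw [h, CharTwo.neg_eq]
    rw [hs, h4, one_smul]
  let W : Submodule k V :=
    { carrier := {v | ∀ c, P c v = v}
      add_mem' := fun {a b} ha hb c => by rw [map_add, ha, hb]
      zero_mem' := fun c => map_zero _
      smul_mem' := fun r v hv c => by rw [map_smul, hv] }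
  obtain ⟨z, hz, hz0, hz1⟩ := exists_common_eigen Q hQ _ W rfl
    ((Submodule.ne_bot_iff _).mpr ⟨w, hfix, hw0⟩) (by
      intro a v hv c
      obtain ⟨c', hc'⟩ := hPQ a c
      rw [hc', hv c'])
  choose χ hχ using hz1
  exact ⟨z, hz0, hz, χ, hχ⟩

lemma sum_units {M : Type*} [AddCommGroup M] [Fintype Fˣ] (f : F → M) :
    ∑ c, f c = f 0 + ∑ a : Fˣ, f a := by
  classical
  rw [Fintype.sum_eq_add_sum_compl (0 : F) f]
  congr 1
  symm
  refine Finset.sum_bij (fun (a : Fˣ) _ => (a : F)) ?_ ?_ ?_ ?_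
  · intro a _; simp
  · intro a _ b _ h; exact Units.ext h
  · intro b hb
    have : b ≠ 0 := by simpa using hb
    exact ⟨Units.mk0 b this, Finset.mem_univ _, rfl⟩
  · intro a _; rfl

variable (ρ : Representation k (SpecialLinearGroup (Fin 2) F) V)

lemma rmul (g h : SpecialLinearGroup (Fin 2) F) (v : V) : ρ (g * h) v = ρ g (ρ h v) := by
  rw [map_mul]; rfl

lemma kill (hirr : ∀ W : Submodule k V,
      (∀ g : SpecialLinearGroup (Fin 2) F, ∀ v ∈ W, ρ g v ∈ W) → W = ⊥ ∨ W = ⊤)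
    {M : Type*} [AddCommGroup M] [Module k M] (L : V →ₗ[k] M) (w : V) (hw : w ≠ 0)
    (h : ∀ g, L (ρ g w) = 0) : L = 0 := by
  let W : Submodule k V :=
    { carrier := {v | ∀ g, L (ρ g v) = 0}
      add_mem' := fun {a b} ha hb c => by rw [map_add, map_add, ha, hb, add_zero]
      zero_mem' := fun c => by rw [map_zero, map_zero]
      smul_mem' := fun r v hv c => by rw [map_smul, map_smul, hv, smul_zero] }
  rcases hirr W (fun g v hv g' => by rw [← rmul]; exact hv _) with h1 | h1
  · exact absurd ((Submodule.eq_bot_iff _).mp h1 w h) hw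
  · ext v
    have : v ∈ W := h1 ▸ trivial
    have := this 1
    simpa using this

/-- a Borel eigenfunctional detects eigenvectors of `x` -/
lemma detect (x : SpecialLinearGroup (Fin 2) F) (hx : orderOf x = Fintype.card F + 1)
    (hirr : ∀ W : Submodule k V,
      (∀ g : SpecialLinearGroup (Fin 2) F, ∀ v ∈ W, ρ g v ∈ W) → W = ⊥ ∨ W = ⊤)
    (φ : Module.Dual k V) (hφ0 : φ ≠ 0) (hφU : ∀ c v, φ (ρ (U c) v) = φ v)
    (l : Fˣ → k) (hφD : ∀ a v, φ (ρ (D a) v) = l a * φ v)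
    (θ : k) (v : V) (hv : ρ x v = θ • v) (h : φ v = 0) : v = 0 := by
  by_contra hv0
  refine hφ0 (kill ρ hirr φ v hv0 fun g => ?_)
  obtain ⟨a, c, i, rfl⟩ := factor x hx g
  rw [rmul, rmul, hφU, hφD]
  have : ∀ i : ℕ, ρ (x ^ i) v = θ ^ i • v := by
    intro i
    induction i with
    | zero => simp
    | succ n ih => rw [pow_succ, rmul, hv, map_smul, ih, smul_smul, pow_succ, mul_comm]
  rw [this, map_smul, h]; simp

lemma pairing_sum (x : SpecialLinearGroup (Fin 2) F) (hx : orderOf x = Fintype.card F + 1)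
    (w : V) (hwU : ∀ c, ρ (U c) w = w)
    (φ : Module.Dual k V) (hφU : ∀ c v, φ (ρ (U c) v) = φ v)
    (l : Fˣ → k) (hφD : ∀ a v, φ (ρ (D a) v) = l a * φ v) :
    φ (∑ i ∈ Finset.range (Fintype.card F + 1), ρ (x ^ i) w) = φ w := by
  obtain ⟨m, hm⟩ := card_even (F := F)
  rw [Finset.sum_range_succ', map_add, map_sum]
  simp only [pow_zero, map_one, Module.End.one_apply]
  rw [add_eq_right]
  have key : ∀ (g : SpecialLinearGroup (Fin 2) F) (c : Fˣ), g.1 1 0 = c →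
      φ (ρ g w) = l c⁻¹ * φ (ρ S w) := by
    intro g c hc
    obtain ⟨a, d, rfl⟩ := bigcell g c hc
    rw [rmul, rmul, rmul, hwU, hφU, hφD]
  refine Finset.sum_involution (fun i _ => Fintype.card F - 1 - i) ?_ ?_ ?_ ?_
  · intro i hi
    have hi := Finset.mem_range.mp hi
    have e : x ^ (Fintype.card F - 1 - i + 1) = (x ^ (i + 1))⁻¹ := by
      rw [eq_inv_iff_mul_eq_one, ← pow_add]
      have : Fintype.card F - 1 - i + 1 + (i + 1) = orderOf x := by omega
      rw [this, pow_orderOf_eq_one]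
    have hne := pow_ll x hx (i + 1) (by omega) (by omega)
    rw [e, key (x ^ (i + 1)) (Units.mk0 _ hne) rfl, key (x ^ (i + 1))⁻¹ (Units.mk0 _ hne) (inv_ll _),
      CharTwo.add_self_eq_zero]
  · intro i hi _ 
    have hi := Finset.mem_range.mp hi
    omega
  · intro i hi
    have hi := Finset.mem_range.mp hi
    apply Finset.mem_range.mpr
    omega
  · intro i hi
    have hi := Finset.mem_range.mp hi
    omega

lemma pairing_ne (x : SpecialLinearGroup (Fin 2) F) (hx : orderOf x = Fintype.card F + 1)
    (hirr : ∀ W : Submodule k V,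
      (∀ g : SpecialLinearGroup (Fin 2) F, ∀ v ∈ W, ρ g v ∈ W) → W = ⊥ ∨ W = ⊤)
    (v : V) (hv : ρ x v = v) (hv0 : v ≠ 0)
    (φ : Module.Dual k V) (hφ0 : φ ≠ 0) (hφU : ∀ c v, φ (ρ (U c) v) = φ v)
    (l : Fˣ → k) (hφD : ∀ a v, φ (ρ (D a) v) = l a * φ v)
    (w : V) (hw0 : w ≠ 0) (hwU : ∀ c, ρ (U c) w = w)
    (χ : Fˣ → k) (hwD : ∀ a, ρ (D a) w = χ a • w) : φ w ≠ 0 := by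
  intro hφw
  let E : Module.End k V := ∑ i ∈ Finset.range (Fintype.card F + 1), ρ (x ^ i)
  have hE : ∀ z, E z = ∑ i ∈ Finset.range (Fintype.card F + 1), ρ (x ^ i) z := by
    intro z; simp [E]
  have hshift : ∀ z, ∑ i ∈ Finset.range (Fintype.card F + 1), ρ (x ^ (i + 1)) z = E z := by
    intro z
    rw [hE, Finset.sum_range_succ, Finset.sum_range_succ' _ (Fintype.card F)]
    rw [← hx, pow_orderOf_eq_one, pow_zero]
  have h1 : ∀ z, ρ x (E z) = E z := by
    intro z
    rw [← hshift z]
    conv_rhs => rw [hshift z, ← hshift z]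
    conv_lhs => rw [hshift z, hE, map_sum]
    refine Finset.sum_congr rfl fun i _ => ?_
    rw [pow_succ', rmul]
  have h2 : ∀ z, E (ρ x z) = E z := by
    intro z
    rw [← hshift z, hE]
    refine Finset.sum_congr rfl fun i _ => ?_
    rw [pow_succ, rmul]
  have h2' : ∀ (i : ℕ) z, E (ρ (x ^ i) z) = E z := by
    intro i
    induction i with
    | zero => intro z; simp
    | succ n ih => intro z; rw [pow_succ, rmul, ih, h2]
  have h3 : E w = 0 := by
    refine detect ρ x hx hirr φ hφ0 hφU l hφD 1 _ (by rw [h1, one_smul]) ?_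
    rw [hE, pairing_sum ρ x hx w hwU φ hφU l hφD, hφw]
  have h4 : E = 0 := by
    refine kill ρ hirr E w hw0 fun g => ?_
    obtain ⟨a, c, i, hg⟩ := factor x hx g⁻¹
    have hg' : g = (x ^ i)⁻¹ * (U c * D a)⁻¹ := by rw [← _root_.mul_inv_rev, ← hg, inv_inv]
    have hb : ∃ s : k, ρ (U c * D a)⁻¹ w = s • w := by
      have e : ρ (U c * D a)⁻¹ (ρ (U c * D a) w) = w := by rw [← rmul]; simp
      rw [rmul, hwD, map_smul, hwU, map_smul] at e
      have : χ a ≠ 0 := by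
        intro h0; rw [h0, zero_smul] at e; exact hw0 e.symm
      exact ⟨(χ a)⁻¹, by rw [eq_inv_smul_iff₀ this]; exact e⟩
    obtain ⟨s, hs⟩ := hb
    rw [hg', rmul, hs, ← h2' i, ← rmul]
    simp [h3]
  have h5 : E v = v := by
    have hp : ∀ i : ℕ, ρ (x ^ i) v = v := by
      intro i
      induction i with
      | zero => simp
      | succ n ih => rw [pow_succ, rmul, hv, ih]
    rw [hE]
    simp only [hp, Finset.sum_const, Finset.card_range]
    obtain ⟨m, hm⟩ := card_even (F := F)
    rw [hm, ← Nat.cast_smul_eq_nsmul k]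
    push_cast
    rw [CharTwo.two_eq_zero]; simp
  rw [h4] at h5
  exact hv0 h5.symm

lemma main2 (x : SpecialLinearGroup (Fin 2) F) (hx : orderOf x = Fintype.card F + 1)
    (hirr : ∀ W : Submodule k V,
      (∀ g : SpecialLinearGroup (Fin 2) F, ∀ v ∈ W, ρ g v ∈ W) → W = ⊥ ∨ W = ⊤)
    (hnt : ∃ (g : SpecialLinearGroup (Fin 2) F) (v : V), ρ g v ≠ v)
    (φ : Module.Dual k V) (hφ0 : φ ≠ 0) (hφU : ∀ c v, φ (ρ (U c) v) = φ v)
    (l : Fˣ → k) (hφD : ∀ a v, φ (ρ (D a) v) = l a * φ v)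
    (w : V) (hw0 : w ≠ 0) (hwU : ∀ c, ρ (U c) w = w)
    (χ : Fˣ → k) (hwD : ∀ a, ρ (D a) w = χ a • w)
    (v : V) (hv : ρ x v = v) : v = 0 := by
  classical
  by_contra hv0
  have ne := pairing_ne ρ x hx hirr v hv hv0 φ hφ0 hφU l hφD
  have hφw := ne w hw0 hwU χ hwD
  have hy : ∑ c : F, ρ (U c) (ρ S w) = 0 := by
    by_contra hy0
    refine ne _ hy0 ?_ (fun a => χ a⁻¹) ?_ ?_
    · intro c
      rw [map_sum]
      refine Fintype.sum_equiv (Equiv.addLeft c) _ _ fun d => ?_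
      rw [← rmul, U_mul]; rfl
    · intro a
      rw [map_sum, Finset.smul_sum]
      refine Fintype.sum_equiv (Equiv.mulLeft₀ ((a : F) * a) (by simp)) _ _ fun d => ?_
      rw [← rmul, D_U, rmul, ← rmul _ (D a) S]
      have : D a * S = S * D a⁻¹ := by rw [S_D, inv_inv]
      rw [this, rmul, hwD, map_smul, map_smul]; rfl
    · rw [map_sum]
      simp only [hφU, Finset.sum_const, Finset.card_univ]
      obtain ⟨m, hm⟩ := card_even (F := F)
      rw [hm, ← Nat.cast_smul_eq_nsmul k]
      push_cast
      rw [CharTwo.two_eq_zero]; simp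
  have hSy : w + ∑ c : Fˣ, χ c • ρ (U ((c⁻¹ : Fˣ) : F)) (ρ S w) = 0 := by
    have := congrArg (ρ S) hy
    rw [map_zero, map_sum, sum_units] at this
    rw [← this]
    congr 1
    · rw [U_zero, ← rmul, ← rmul, mul_one, S_mul_S]; simp
    · refine Finset.sum_congr rfl fun c _ => ?_
      rw [← rmul _ S (U (c : F)), ← rmul _ (S * U (c : F)) S, S_U_S, rmul, rmul, hwU, ← S_D, rmul, hwD, map_smul,
        map_smul]
  have hχmul : ∀ a b, χ (a * b) = χ a * χ b := by
    intro a b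
    apply smul_left_injective k hw0
    show χ (a * b) • w = (χ a * χ b) • w
    rw [← hwD, ← D_mul, rmul, hwD, map_smul, hwD, smul_smul, mul_comm]
  have hχ : ∀ a, χ a = 1 := by
    by_contra hcon
    push Not at hcon
    obtain ⟨a, ha⟩ := hcon
    have hs : χ a * ∑ c, χ c = ∑ c, χ c := by
      rw [Finset.mul_sum]
      refine Fintype.sum_equiv (Equiv.mulLeft a) _ _ fun d => ?_
      rw [← hχmul]; rfl
    have hs0 : ∑ c, χ c = 0 := by
      by_contra h
      exact ha (mul_right_cancel₀ h (by rw [hs, one_mul]))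
    have := congrArg φ hSy
    rw [map_add, map_sum, map_zero] at this
    simp only [map_smul, hφU, smul_eq_mul] at this
    rw [← Finset.sum_mul, hs0, zero_mul, add_zero] at this
    exact hφw this
  have hS : ρ S w = w := by
    rw [sum_units, U_zero] at hy
    simp only [hχ, one_smul] at hSy
    have e : ∑ c : Fˣ, ρ (U ((c⁻¹ : Fˣ) : F)) (ρ S w) = ∑ c : Fˣ, ρ (U (c : F)) (ρ S w) :=
      Fintype.sum_equiv (Equiv.inv Fˣ) _ _ fun d => rfl
    rw [e, ← hy] at hSy
    have := add_right_cancel hSy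
    rw [map_one, Module.End.one_apply] at this
    exact this.symm
  obtain ⟨g, z, hz⟩ := hnt
  apply hz
  have hfix : ∀ g, ρ g w = w := by
    intro g
    by_cases h : g.1 1 0 = 0
    · obtain ⟨a, c, rfl⟩ := borel g h
      rw [rmul, hwD, hχ, one_smul, hwU]
    · obtain ⟨a, d, hg⟩ := bigcell g (Units.mk0 _ h) rfl
      rw [hg, rmul, rmul, rmul, hwU, hS, hwD, hχ, one_smul, hwU]
  have := kill ρ hirr (ρ g - 1) w hw0 (fun g' => by
    rw [LinearMap.sub_apply, hfix, hfix]; simp)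
  have := LinearMap.congr_fun this z
  simpa [sub_eq_zero] using this

end rep
end Stmt8

open Stmt8

/-- Let `G = SL₂(q)` with `q > 3` even and `x ∈ G` of order `q + 1`. If `k` is
algebraically closed of characteristic `2` and `V` a nontrivial irreducible
`kG`-module, then `x` has pairwise distinct eigenvalues on `V`; in particular
its fixed space `C_V(x)` is zero. -/
theorem stmt_8 (F : Type*) [Field F] [Fintype F] [CharP F 2]
    (hq : 3 < Fintype.card F)
    (x : Matrix.SpecialLinearGroup (Fin 2) F)
    (hx : orderOf x = Fintype.card F + 1)
    (k : Type*) [Field k] [IsAlgClosed k] [CharP k 2]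
    (V : Type*) [AddCommGroup V] [Module k V] [FiniteDimensional k V]
    (ρ : Representation k (Matrix.SpecialLinearGroup (Fin 2) F) V)
    (hirr : ∀ W : Submodule k V,
      (∀ g : Matrix.SpecialLinearGroup (Fin 2) F, ∀ v ∈ W, ρ g v ∈ W) → W = ⊥ ∨ W = ⊤)
    (hnt : ∃ (g : Matrix.SpecialLinearGroup (Fin 2) F) (v : V), ρ g v ≠ v) :
    (∀ θ : k, Module.finrank k (Module.End.eigenspace (ρ x) θ) ≤ 1) ∧
      Module.End.eigenspace (ρ x) 1 = ⊥ := by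
  obtain ⟨g0, v0, h0⟩ := hnt
  have : Nontrivial V := ⟨_, _, h0⟩
  obtain ⟨w, hw0, hwU, χ, hwD⟩ := exists_borel_eigen (fun c : F => ρ (U c)) (fun a => ρ (D a))
    (fun a b v => by rw [← rmul, ← rmul, U_mul, U_mul, add_comm])
    (fun a v => by rw [← rmul, U_sq]; simp)
    (fun a b v => by rw [← rmul, ← rmul, D_mul, D_mul, mul_comm])
    (fun a c => ⟨_, fun v => by rw [← rmul, U_D, rmul]⟩)
  obtain ⟨φ, hφ0, hφU, l, hφD⟩ := exists_borel_eigen (V := Module.Dual k V)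
    (fun c : F => (ρ (U c)).dualMap) (fun a => (ρ (D a)).dualMap)
    (fun a b φ => by
      ext v
      simp only [LinearMap.dualMap_apply]
      rw [← rmul, ← rmul, U_mul, U_mul, add_comm])
    (fun a φ => by
      ext v
      simp only [LinearMap.dualMap_apply]
      rw [← rmul, U_sq]; simp)
    (fun a b φ => by
      ext v
      simp only [LinearMap.dualMap_apply]
      rw [← rmul, ← rmul, D_mul, D_mul, mul_comm])
    (fun a c => ⟨_, fun φ => by
      ext v
      simp only [LinearMap.dualMap_apply]
      rw [← rmul, ← rmul, D_U]⟩)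
  have hφU' : ∀ c v, φ (ρ (U c) v) = φ v := fun c v => LinearMap.congr_fun (hφU c) v
  have hφD' : ∀ a v, φ (ρ (D a) v) = l a * φ v := fun a v => LinearMap.congr_fun (hφD a) v
  constructor
  · intro θ
    have hinj : Function.Injective (φ ∘ₗ (Module.End.eigenspace (ρ x) θ).subtype) := by
      rw [injective_iff_map_eq_zero]
      intro v hv
      exact Subtype.ext (detect ρ x hx hirr φ hφ0 hφU' l hφD' θ v
        (Module.End.mem_eigenspace_iff.mp v.2) hv)
    simpa using LinearMap.finrank_le_finrank_of_injective hinj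
  · rw [Submodule.eq_bot_iff]
    intro v hv
    rw [Module.End.mem_eigenspace_iff, one_smul] at hv
    exact main2 ρ x hx hirr ⟨g0, v0, h0⟩ φ hφ0 hφU' l hφD' w hw0 hwU χ hwD v hv
end

section
/- Let G be a (possibly infinite) group and V a finite-dimensional vector space over a field k on which G acts irreducibly and nontrivially via ρ: G → GL(V). Assuming the result for finite groups (that every finite group acting irreducibly and nontrivially on a finite-dimensional vector space contains an element whose fixed space has dimension at most one third of the dimension), there exists g ∈ G with dim C_V(g) ≤ (1/3) dim V. -/
open Matrix

lemma aux_isJacobson_int : IsJacobsonRing ℤ := by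
  rw [isJacobsonRing_iff_prime_eq]
  intro P hP
  by_cases h : P = ⊥
  · subst h
    rw [eq_bot_iff]
    intro x hx
    rw [Ideal.mem_jacobson_bot] at hx
    have h1 := hx (3 * x)
    rw [Int.isUnit_iff] at h1
    rw [Ideal.mem_bot]
    rcases h1 with h1 | h1
    · have : x * x = 0 := by linarith
      simpa using this
    · nlinarith [mul_self_nonneg x]
  · have : P.IsMaximal := hP.isMaximal h
    exact Ideal.jacobson_eq_self_of_isMaximal

lemma aux_finite_field (S : Type) [Field S] (hS : (Int.castRingHom S).FiniteType) :
    Finite S := by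
  have : Algebra.FiniteType ℤ S := RingHom.finiteType_algebraMap.1 hS
  have := aux_isJacobson_int
  have hf : Module.Finite ℤ S := finite_of_finite_type_of_isJacobsonRing ℤ S
  obtain ⟨p, hp⟩ := CharP.exists S
  rcases Nat.eq_zero_or_pos p with rfl | hpos
  · exfalso
    have : CharZero S := CharP.charP_to_charZero S
    have hi : Function.Injective (algebraMap ℤ S) := Int.cast_injective
    exact Int.not_isField (isField_of_isIntegral_of_isField hi (Field.toIsField S))
  · have : Finite (ZMod p) := by
      have : NeZero p := ⟨hpos.ne'⟩
      infer_instance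
    let := ZMod.algebra S p
    have : Module.Finite (ZMod p) S := Module.Finite.of_restrictScalars_finite ℤ _ _
    exact Module.finite_of_finite (ZMod p)

lemma aux_rank {R F K : Type} [CommRing R] [Field F] [Field K] (φ : R →+* F)
    (hφ : Function.Surjective φ) (ψ : R →+* K) (hψ : Function.Injective ψ) {n : ℕ}
    (A : Matrix (Fin n) (Fin n) R) : (A.map φ).rank ≤ (A.map ψ).rank := by
  set B := A.map φ with hB
  let f := Matrix.toLin' B
  let W := LinearMap.range f
  let b := Module.finBasis F W
  have hr : B.rank = Module.finrank F W := rfl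
  rw [hr]
  set r := Module.finrank F W
  have h1 : ∀ i, ∃ u, f u = b i := fun i => (b i).2
  choose u hu using h1
  obtain ⟨g, hg⟩ := LinearMap.exists_leftInverse_of_injective W.subtype (by simp)
  let P : Matrix (Fin r) (Fin n) F := LinearMap.toMatrix' ((b.equivFun.toLinearMap).comp g)
  let Q : Matrix (Fin n) (Fin r) F := Matrix.of fun i j => u j i
  have hPQ : P * B * Q = 1 := by
    ext i j
    have h2 : (P * B * Q) i j = (P *ᵥ (B *ᵥ (u j))) i := by
      rw [Matrix.mul_assoc, Matrix.mul_apply]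
      simp only [Matrix.mulVec, dotProduct, Matrix.mul_apply]
      rfl
    have h3 : B *ᵥ (u j) = b j := by rw [← hu j]; rfl
    have h4 : g (b j) = b j := by simpa using LinearMap.congr_fun hg (b j)
    rw [h2, h3, LinearMap.toMatrix'_mulVec]
    simp [h4, Matrix.one_apply, eq_comm]
  have h5 : ∀ i j, ∃ x, φ x = P i j := fun i j => hφ _
  have h6 : ∀ i j, ∃ x, φ x = Q i j := fun i j => hφ _
  choose P' hP' using h5
  choose Q' hQ' using h6
  let PL : Matrix (Fin r) (Fin n) R := Matrix.of P'
  let QL : Matrix (Fin n) (Fin r) R := Matrix.of Q'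
  have e1 : PL.map φ = P := by ext i j; exact hP' i j
  have e2 : QL.map φ = Q := by ext i j; exact hQ' i j
  have e3 : (PL * A * QL).map φ = 1 := by
    rw [Matrix.map_mul, Matrix.map_mul, e1, e2, ← hB, hPQ]
  have e4 : φ (PL * A * QL).det = 1 := by
    rw [RingHom.map_det]
    change ((PL * A * QL).map φ).det = 1
    rw [e3, Matrix.det_one]
  have e5 : ((PL * A * QL).map ψ).det ≠ 0 := by
    change (ψ.mapMatrix (PL * A * QL)).det ≠ 0
    rw [← RingHom.map_det]
    intro h
    have : (PL * A * QL).det = 0 := hψ (by simpa using h)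
    rw [this] at e4
    simp at e4
  have e6 : ((PL * A * QL).map ψ).rank = r := by
    rw [Matrix.rank_of_isUnit _ ((Matrix.isUnit_iff_isUnit_det _).2 (isUnit_iff_ne_zero.2 e5))]
    simp
  calc r = ((PL * A * QL).map ψ).rank := e6.symm
    _ ≤ (A.map ψ).rank := by
      rw [Matrix.map_mul, Matrix.map_mul]
      exact (Matrix.rank_mul_le_left _ _).trans (Matrix.rank_mul_le_right _ _)

lemma aux_lift {R K : Type} [CommRing R] [Field K] [Algebra R K] 
    (hi : Function.Injective (algebraMap R K)) {n : ℕ} (A : GL (Fin n) K)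
    (h1 : ∀ i j, ∃ x, algebraMap R K x = (A : Matrix (Fin n) (Fin n) K) i j)
    (h2 : ∀ i j, ∃ x, algebraMap R K x = ((A⁻¹ : GL (Fin n) K) : Matrix (Fin n) (Fin n) K) i j) :
    ∃ X : GL (Fin n) R, Matrix.GeneralLinearGroup.map (algebraMap R K) X = A := by
  choose X hX using h1
  choose Y hY using h2
  have hX' : (Matrix.of X).map (algebraMap R K) = A := by ext i j; exact hX i j
  have hY' : (Matrix.of Y).map (algebraMap R K) = (A⁻¹ : GL (Fin n) K) := by ext i j; exact hY i j
  have hinj : Function.Injective (fun B : Matrix (Fin n) (Fin n) R => B.map (algebraMap R K)) :=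
    Matrix.map_injective hi
  refine ⟨⟨Matrix.of X, Matrix.of Y, hinj ?_, hinj ?_⟩, ?_⟩
  · simp only
    rw [Matrix.map_mul, hX', hY', Matrix.map_one _ (map_zero _) (map_one _), ← Units.val_mul, mul_inv_cancel, Units.val_one]
  · simp only
    rw [Matrix.map_mul, hX', hY', Matrix.map_one _ (map_zero _) (map_one _), ← Units.val_mul, inv_mul_cancel, Units.val_one]
  · ext i j
    exact hX i j

lemma aux_density (G : Type) [Group G] (k : Type) [Field k]
    (V : Type) [AddCommGroup V] [Module k V] [FiniteDimensional k V] [Nontrivial V]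
    (ρ : Representation k G V)
    (hirr : ∀ W : Submodule k V, (∀ g : G, ∀ v ∈ W, ρ g v ∈ W) → W = ⊥ ∨ W = ⊤)
    (hsc : ∀ φ : Module.End k V, (∀ g, φ * ρ g = ρ g * φ) → ∃ c : k, φ = algebraMap k _ c) :
    Submodule.span k (Set.range ρ) = ⊤ := by
  let A := Algebra.adjoin k (Set.range ρ)
  have hA : ∀ g, ρ g ∈ A := fun g => Algebra.subset_adjoin ⟨g, rfl⟩
  have hs : IsSimpleModule A V := by
    rw [isSimpleModule_iff]
    refine { eq_bot_or_eq_top := fun W => ?_ }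
    rcases hirr (W.restrictScalars k) (fun g v hv => W.smul_mem (⟨ρ g, hA g⟩ : A) hv) with h | h
    · left; simpa using h
    · right; simpa using h
  have hA2 : Subalgebra.toSubmodule A = Submodule.span k (Set.range ρ) := by
    rw [Algebra.adjoin_eq_span]
    congr 1
    have : Set.range ρ = (MonoidHom.mrange ρ : Submonoid _) := by ext; simp
    rw [this, Submonoid.closure_eq]
  rw [← hA2, eq_top_iff]
  intro f _
  have hE : ∀ φ : Module.End A V, ∃ c : k, ∀ v, φ v = c • v := by
    intro φ
    obtain ⟨c, hc⟩ := hsc (φ.restrictScalars k) (by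
      intro g
      ext v
      exact φ.map_smul (⟨ρ g, hA g⟩ : A) v)
    refine ⟨c, fun v => ?_⟩
    exact LinearMap.congr_fun hc v
  let f' : Module.End (Module.End A V) V :=
    { toFun := f
      map_add' := f.map_add
      map_smul' := by
        intro φ v
        obtain ⟨c, hc⟩ := hE φ
        simp [Module.End.smul_def, hc] }
  obtain ⟨s, hs'⟩ := (Module.Finite.fg_top : (⊤ : Submodule k V).FG)
  obtain ⟨r, hr⟩ := jacobson_density (R := A) f' s
  have : f = r := by
    apply LinearMap.ext_on hs'
    intro v hv
    exact hr v hv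
  rw [this]
  exact r.2

def HypFin : Prop := ∀ (H : Type) [Group H] [Finite H],
      ∀ (k : Type) [Field k],
      ∀ (W : Type) [AddCommGroup W] [Module k W] [FiniteDimensional k W],
      ∀ σ : Representation k H W,
      (∀ U : Submodule k W, (∀ h : H, ∀ w ∈ U, σ h w ∈ U) → U = ⊥ ∨ U = ⊤) →
      (∃ (h : H) (w : W), σ h w ≠ w) →
      ∃ h : H, 3 * Module.finrank k (LinearMap.ker (σ h - 1)) ≤ Module.finrank k W

lemma aux_field_hom (R : Type) [CommRing R] [Nontrivial R] [Algebra.FiniteType ℤ R] :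
    ∃ (F : Type) (_ : Field F) (_ : Finite F) (q : R →+* F), Function.Surjective q := by
  obtain ⟨M, hM⟩ := Ideal.exists_maximal R
  let : Field (R ⧸ M) := Ideal.Quotient.field M
  have h1 : (Int.castRingHom (R ⧸ M)).FiniteType := by
    have h2 : (algebraMap ℤ R).FiniteType := RingHom.finiteType_algebraMap.2 inferInstance
    have h3 : (Int.castRingHom (R ⧸ M)) = (Ideal.Quotient.mk M).comp (algebraMap ℤ R) :=
      Subsingleton.elim _ _
    rw [h3]
    exact (RingHom.FiniteType.of_surjective _ Ideal.Quotient.mk_surjective).comp h2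
  exact ⟨R ⧸ M, this, aux_finite_field _ h1, Ideal.Quotient.mk M, Ideal.Quotient.mk_surjective⟩

lemma aux_spread (K : Type) [Field K] (T : Set K) (hT : T.Finite) :
    ∃ (R : Type) (_ : CommRing R) (_ : Algebra R K) (F : Type) (_ : Field F) (_ : Finite F)
      (q : R →+* F), Function.Surjective q ∧ Function.Injective (algebraMap R K) ∧
      ∀ t ∈ T, ∃ x, algebraMap R K x = t := by
  have hft : Algebra.FiniteType ℤ (Algebra.adjoin ℤ T) := Algebra.FiniteType.adjoin_of_finite hT
  obtain ⟨F, i1, i2, q, hq⟩ := aux_field_hom (Algebra.adjoin ℤ T)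
  exact ⟨Algebra.adjoin ℤ T, inferInstance, inferInstance, F, i1, i2, q, hq,
    Subtype.val_injective, fun t ht => ⟨⟨t, Algebra.subset_adjoin ht⟩, rfl⟩⟩

lemma aux_map_one {R F : Type} [CommRing R] [CommRing F] (q : R →+* F) {n : ℕ} (i j : Fin n) :
    q ((1 : Matrix (Fin n) (Fin n) R) i j) = (1 : Matrix (Fin n) (Fin n) F) i j := by
  rw [Matrix.one_apply, Matrix.one_apply]
  split_ifs <;> simp

lemma aux_core (hfin : HypFin) (G : Type) [Group G] (K : Type) [Field K] (n : ℕ)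
    (ρ : G →* GL (Fin n) K)
    (hspan : Submodule.span K (Set.range fun g => (ρ g : Matrix (Fin n) (Fin n) K)) = ⊤)
    (hnt : ∃ g, ρ g ≠ 1) :
    ∃ g, 2 * n ≤ 3 * ((ρ g : Matrix (Fin n) (Fin n) K) - 1).rank := by
  classical
  have hc : ∀ i j, ∃ c : G →₀ K, (c.sum fun g a => a • (ρ g : Matrix (Fin n) (Fin n) K))
      = Matrix.single i j 1 := by
    intro i j
    have : Matrix.single i j (1 : K) ∈ Submodule.span K
      (Set.range fun g => (ρ g : Matrix (Fin n) (Fin n) K)) := by rw [hspan]; trivial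
    exact Finsupp.mem_span_range_iff_exists_finsupp.1 this
  choose c hc using hc
  obtain ⟨g₀, hg₀⟩ := hnt
  have h0 : ∃ i j, (ρ g₀ : Matrix (Fin n) (Fin n) K) i j ≠ (1 : Matrix (Fin n) (Fin n) K) i j := by
    by_contra! h
    exact hg₀ (Units.ext (Matrix.ext h))
  obtain ⟨i₀, j₀, h0⟩ := h0
  set a := (ρ g₀ : Matrix (Fin n) (Fin n) K) i₀ j₀ - (1 : Matrix (Fin n) (Fin n) K) i₀ j₀ with ha
  have ha0 : a ≠ 0 := sub_ne_zero.2 h0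
  let S : Set G := insert g₀ (⋃ i, ⋃ j, ((c i j).support : Set G))
  have hS : S.Finite :=
    Set.Finite.insert _ (Set.finite_iUnion fun i => Set.finite_iUnion fun j => Finset.finite_toSet _)
  let T : Set K := insert a⁻¹ ((⋃ g ∈ S, ⋃ i, ⋃ j, {(ρ g : Matrix (Fin n) (Fin n) K) i j,
      ((ρ g)⁻¹ : GL (Fin n) K).val i j}) ∪ ⋃ g ∈ S, ⋃ i, ⋃ j, {c i j g})
  have hT : T.Finite := by
    refine Set.Finite.insert _ (Set.Finite.union ?_ ?_)
    · exact hS.biUnion fun g _ => Set.finite_iUnion fun i => Set.finite_iUnion fun j => by simp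
    · exact hS.biUnion fun g _ => Set.finite_iUnion fun i => Set.finite_iUnion fun j => by simp
  obtain ⟨R, _, _, F, _, hFfin, q, hqs, hinj, hsub⟩ := aux_spread K T hT
  have hT1 : ∀ g ∈ S, ∀ i j, (ρ g : Matrix (Fin n) (Fin n) K) i j ∈ T := by
    intro g hg i j
    refine Or.inr (Or.inl ?_)
    simp only [Set.mem_iUnion]
    exact ⟨g, hg, i, j, Or.inl rfl⟩
  have hT2 : ∀ g ∈ S, ∀ i j, ((ρ g)⁻¹ : GL (Fin n) K).val i j ∈ T := by
    intro g hg i j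
    refine Or.inr (Or.inl ?_)
    simp only [Set.mem_iUnion]
    exact ⟨g, hg, i, j, Or.inr rfl⟩
  have hT3 : ∀ g ∈ S, ∀ i j, c i j g ∈ T := by
    intro g hg i j
    refine Or.inr (Or.inr ?_)
    simp only [Set.mem_iUnion]
    exact ⟨g, hg, i, j, rfl⟩
  have hlift : ∀ g ∈ S, ∃ X : GL (Fin n) R,
      Matrix.GeneralLinearGroup.map (algebraMap R K) X = ρ g := by
    intro g hg
    exact aux_lift hinj _ (fun i j => hsub _ (hT1 g hg i j))
      (fun i j => hsub _ (hT2 g hg i j))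
  let mK := Matrix.GeneralLinearGroup.map (n := Fin n) (algebraMap R K)
  let mF := Matrix.GeneralLinearGroup.map (n := Fin n) q
  let Γ : Subgroup (GL (Fin n) R) := (ρ.range).comap mK
  let H : Subgroup (GL (Fin n) F) := Γ.map mF
  let σ : Representation F H (Fin n → F) :=
    (Matrix.toLinAlgEquiv' (R := F) (n := Fin n) : _ →* _).comp
      ((Units.coeHom _).comp H.subtype)
  have hσ : ∀ h : H, σ h = Matrix.toLin' (h : GL (Fin n) F).val := fun h => rfl
  have hmem : ∀ g ∈ S, ∀ X : GL (Fin n) R, mK X = ρ g → mF X ∈ H := by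
    intro g hg X hX
    exact ⟨X, ⟨g, hX.symm⟩, rfl⟩
  have hσirr : ∀ U : Submodule F (Fin n → F), (∀ h : H, ∀ w ∈ U, σ h w ∈ U) → U = ⊥ ∨ U = ⊤ := by
    intro U hU
    -- invariance under all matrix units
    have key : ∀ i j, ∀ w ∈ U, (Matrix.single i j (1 : F)) *ᵥ w ∈ U := by
      intro i j w hw
      have hsupp : ∀ g ∈ (c i j).support, g ∈ S := by
        intro g hg
        refine Or.inr ?_
        simp only [Set.mem_iUnion]
        exact ⟨i, j, hg⟩
      choose X hX using hlift
      let X' : G → GL (Fin n) R := fun g => if h : g ∈ S then X g h else 1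
      have hX' : ∀ g ∈ S, mK (X' g) = ρ g := by
        intro g hg
        simp only [X', hg, dif_pos]
        exact hX g hg
      have hc' : ∀ g, ∃ x : R, g ∈ S → algebraMap R K x = c i j g := by
        intro g
        by_cases hg : g ∈ S
        · obtain ⟨x, hx⟩ := hsub _ (hT3 g hg i j)
          exact ⟨x, fun _ => hx⟩
        · exact ⟨0, fun h => absurd h hg⟩
      choose c' hc' using hc'
      have e1 : (∑ g ∈ (c i j).support, c' g • (X' g).val) = Matrix.single i j (1 : R) := by
        apply Matrix.map_injective hinj
        have h1 := hc i j
        rw [Finsupp.sum] at h1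
        change (algebraMap R K).mapMatrix _ = (algebraMap R K).mapMatrix _
        rw [map_sum]
        have h2 : (algebraMap R K).mapMatrix (Matrix.single i j (1 : R)) = Matrix.single i j 1 := by
          ext a b
          simp [Matrix.single_apply, apply_ite]
        rw [h2, ← h1]
        refine Finset.sum_congr rfl fun g hg => ?_
        have hgS := hsupp g hg
        rw [← hc' g hgS, ← hX' g hgS]
        ext a b
        simp [mK]
      have e2 : (∑ g ∈ (c i j).support, q (c' g) • (mF (X' g)).val) = Matrix.single i j (1 : F) := by
        have h1 := congrArg q.mapMatrix e1
        rw [map_sum] at h1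
        have h2 : q.mapMatrix (Matrix.single i j (1 : R)) = Matrix.single i j 1 := by
          ext a b
          simp [Matrix.single_apply, apply_ite]
        rw [h2] at h1
        rw [← h1]
        refine Finset.sum_congr rfl fun g hg => ?_
        ext a b
        simp [mF]
      rw [← e2, Matrix.sum_mulVec]
      refine U.sum_mem fun g hg => ?_
      rw [Matrix.smul_mulVec]
      exact U.smul_mem _ (hU ⟨_, hmem g (hsupp g hg) _ (hX' g (hsupp g hg))⟩ w hw)
    by_cases hb : U = ⊥
    · exact Or.inl hb
    · right
      obtain ⟨w, hw, hw0⟩ := U.exists_mem_ne_zero_of_ne_bot hb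
      obtain ⟨j, hj⟩ := Function.ne_iff.1 hw0
      simp only [Pi.zero_apply] at hj
      rw [eq_top_iff, ← (Pi.basisFun F (Fin n)).span_eq, Submodule.span_le]
      rintro _ ⟨i, rfl⟩
      have h1 := U.smul_mem (w j)⁻¹ (key i j w hw)
      have h2 : (Pi.basisFun F (Fin n)) i = (w j)⁻¹ • (Matrix.single i j (1 : F) *ᵥ w) := by
        ext a
        by_cases hai : a = i
        · subst hai; simp [Matrix.single_mulVec, hj]
        · simp [Matrix.single_mulVec, hai]
      rw [h2]
      exact h1
  have hσnt : ∃ (h : H) (w : Fin n → F), σ h w ≠ w := by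
    by_contra! hcon
    have hgS : g₀ ∈ S := Or.inl rfl
    obtain ⟨X, hX⟩ := hlift g₀ hgS
    have h1 := hcon ⟨mF X, hmem g₀ hgS X hX⟩
    have h2 : (mF X).val = 1 := by
      apply Matrix.toLin'.injective
      ext1 
      ext1
      simp only [LinearMap.comp_apply, Matrix.toLin'_one, LinearMap.id_apply]
      exact h1 _
    let a' : R := X.val i₀ j₀ - (1 : Matrix (Fin n) (Fin n) R) i₀ j₀
    obtain ⟨b', hb'⟩ := hsub a⁻¹ (Or.inl rfl)
    have h3 : algebraMap R K a' = a := by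
      rw [ha, ← hX, map_sub, aux_map_one]
      simp
    have h4 : a' * b' = 1 := by
      apply hinj
      rw [map_mul, h3, map_one, hb']
      exact mul_inv_cancel₀ ha0
    have h5 : q a' = 0 := by
      have h6 := congrFun (congrFun h2 i₀) j₀
      have h7 : (mF X).val i₀ j₀ = q (X.val i₀ j₀) := rfl
      rw [h7] at h6
      rw [map_sub, h6, aux_map_one, sub_self]
    have h8 := congrArg q h4
    rw [map_mul, h5, zero_mul, map_one] at h8
    exact zero_ne_one h8
  have hHfin : Finite (GL (Fin n) F) := by
    have : Finite (Matrix (Fin n) (Fin n) F) := by unfold Matrix; infer_instance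
    exact Finite.of_injective (fun u : GL (Fin n) F => u.val) Units.val_injective
  obtain ⟨h, hh⟩ := hfin H F (Fin n → F) σ hσirr hσnt
  obtain ⟨y, X, ⟨g, hg⟩, rfl⟩ := h
  refine ⟨g, ?_⟩
  have h1 := aux_rank q hqs (algebraMap R K) hinj (X.val - 1)
  have h2 : (X.val - 1).map (algebraMap R K) = (ρ g).val - 1 := by
    rw [hg]
    ext a b
    simp [mK, aux_map_one]
  have h3 : (X.val - 1).map q = (mF X).val - 1 := by
    ext a b
    simp [mF, aux_map_one]
  rw [h2, h3] at h1
  have h4 : σ ⟨mF X, X, ⟨g, hg⟩, rfl⟩ - 1 = Matrix.toLin' ((mF X).val - 1) := by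
    rw [hσ, map_sub, Matrix.toLin'_one]
    rfl
  rw [h4] at hh
  have h5 := LinearMap.finrank_range_add_finrank_ker (Matrix.toLin' ((mF X).val - 1))
  have h6 : Module.finrank F (LinearMap.range (Matrix.toLin' ((mF X).val - 1))) =
    ((mF X).val - 1).rank := rfl
  rw [h6] at h5
  simp only [Module.finrank_fintype_fun_eq_card, Fintype.card_fin] at h5 hh
  omega

lemma aux_abs (hfin : HypFin) (G : Type) [Group G] (k : Type) [Field k]
    (V : Type) [AddCommGroup V] [Module k V] [FiniteDimensional k V]
    (ρ : Representation k G V)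
    (hspan : Submodule.span k (Set.range ρ) = ⊤)
    (hnt : ∃ (g : G) (v : V), ρ g v ≠ v) :
    ∃ g : G, 3 * Module.finrank k (LinearMap.ker (ρ g - 1)) ≤ Module.finrank k V := by
  let b := Module.finBasis k V
  let e := LinearMap.toMatrixAlgEquiv b
  let ρ' : G →* GL (Fin (Module.finrank k V)) k :=
    ((e : _ →* _).comp ρ).toHomUnits
  have hρ' : ∀ g, (ρ' g).val = e (ρ g) := fun g => rfl
  obtain ⟨g, hg⟩ := aux_core hfin G k _ ρ' (by
    have h1 : (Set.range fun g => (ρ' g).val) = e.toLinearMap '' Set.range ρ := by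
      rw [← Set.range_comp]; rfl
    rw [h1, Submodule.span_image, hspan, Submodule.map_top, LinearMap.range_eq_top]
    exact e.surjective) (by
    obtain ⟨g, v, h⟩ := hnt
    refine ⟨g, fun h1 => h ?_⟩
    have h2 : e (ρ g) = 1 := by rw [← hρ', h1]; rfl
    have h3 : ρ g = 1 := e.injective (by rw [h2, map_one])
    rw [h3]; rfl)
  refine ⟨g, ?_⟩
  have h5 := LinearMap.finrank_range_add_finrank_ker (ρ g - 1)
  have h6 : ((ρ' g).val - 1).rank = Module.finrank k (LinearMap.range (ρ g - 1)) := by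
    rw [Matrix.rank_eq_finrank_range_toLin _ b b]
    have : (ρ' g).val - 1 = e (ρ g - 1) := by rw [map_sub, map_one, hρ']
    have h7 : Matrix.toLin b b (e (ρ g - 1)) = ρ g - 1 := Matrix.toLin_toMatrix b b _
    rw [this, h7]
  omega

lemma aux_commute {G : Type} [Group G] {k : Type} [Field k]
    {V : Type} [AddCommGroup V] [Module k V] (ρ : Representation k G V)
    (φ : Module.End k V) (hφ : ∀ g, φ * ρ g = ρ g * φ) (p : Polynomial k) (g : G) :
    Polynomial.aeval φ p * ρ g = ρ g * Polynomial.aeval φ p := by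
  induction p using Polynomial.induction_on' with
  | add p q hp hq => rw [map_add, add_mul, mul_add, hp, hq]
  | monomial n a =>
    have h : Commute (φ ^ n) (ρ g) := Commute.pow_left (hφ g) n
    rw [Polynomial.aeval_monomial, mul_assoc, h.eq, ← mul_assoc, ← mul_assoc, Algebra.commutes]

lemma aux_irred {G : Type} [Group G] {k : Type} [Field k]
    {V : Type} [AddCommGroup V] [Module k V] [FiniteDimensional k V] [Nontrivial V]
    (ρ : Representation k G V)
    (hirr : ∀ W : Submodule k V, (∀ g : G, ∀ v ∈ W, ρ g v ∈ W) → W = ⊥ ∨ W = ⊤)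
    (φ : Module.End k V) (hφ : ∀ g, φ * ρ g = ρ g * φ) : Irreducible (minpoly k φ) := by
  have hx : IsIntegral k φ := Algebra.IsIntegral.isIntegral φ
  refine (Polynomial.irreducible_of_monic (minpoly.monic hx) <| minpoly.ne_one k φ).2
    fun f g hf hg he => ?_
  rw [← hf.isUnit_iff, ← hg.isUnit_iff]
  by_contra! h
  have heval := congr_arg (Polynomial.aeval φ) he
  rw [minpoly.aeval k φ, map_mul] at heval
  have hz : Polynomial.aeval φ f = 0 ∨ Polynomial.aeval φ g = 0 := by
    rcases hirr (LinearMap.ker (Polynomial.aeval φ g)) (by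
      intro x v hv
      rw [LinearMap.mem_ker] at hv ⊢
      have := LinearMap.congr_fun (aux_commute ρ φ hφ g x) v
      simp only [Module.End.mul_apply] at this
      rw [this, hv, map_zero]) with hk | hk
    · left
      have hsurj := LinearMap.injective_iff_surjective.1 (LinearMap.ker_eq_bot.1 hk)
      ext v
      obtain ⟨w, rfl⟩ := hsurj v
      exact LinearMap.congr_fun heval w
    · right
      exact LinearMap.ker_eq_top.1 hk
  rcases hz with heval | heval
  · exact minpoly.aeval_ne_zero_of_dvdNotUnit_minpoly hx hf ⟨hf.ne_zero, g, h.2, he.symm⟩ heval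
  · refine minpoly.aeval_ne_zero_of_dvdNotUnit_minpoly hx hg ⟨hg.ne_zero, f, h.1, ?_⟩ heval
    rw [mul_comm, he]

lemma aux_ext {G : Type} [Group G] {k : Type} [Field k]
    {V : Type} [AddCommGroup V] [Module k V] [FiniteDimensional k V] [Nontrivial V]
    (ρ : Representation k G V)
    (hirr : ∀ W : Submodule k V, (∀ g : G, ∀ v ∈ W, ρ g v ∈ W) → W = ⊥ ∨ W = ⊤)
    (φ : Module.End k V) (hφ : ∀ g, φ * ρ g = ρ g * φ)
    (hns : ¬ ∃ c : k, φ = algebraMap k _ c) :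
    ∃ (K : Type) (_ : Field K) (_ : Algebra k K) (f : K →ₐ[k] Module.End k V),
      2 ≤ Module.finrank k K ∧ ∀ x g, f x * ρ g = ρ g * f x := by
  have : Fact (Irreducible (minpoly k φ)) := ⟨aux_irred ρ hirr φ hφ⟩
  have hx : IsIntegral k φ := Algebra.IsIntegral.isIntegral φ
  let f : AdjoinRoot (minpoly k φ) →ₐ[k] Module.End k V :=
    Ideal.Quotient.liftₐ (Ideal.span {minpoly k φ}) (Polynomial.aeval φ) (by
      intro a ha
      rw [Ideal.mem_span_singleton] at ha
      obtain ⟨b, rfl⟩ := ha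
      rw [map_mul, minpoly.aeval, zero_mul])
  refine ⟨AdjoinRoot (minpoly k φ), inferInstance, inferInstance, f, ?_, ?_⟩
  · have h1 : Module.finrank k (AdjoinRoot (minpoly k φ)) = (minpoly k φ).natDegree :=
      finrank_quotient_span_eq_natDegree
    rw [h1, minpoly.two_le_natDegree_iff hx]
    rintro ⟨c, hc⟩
    exact hns ⟨c, hc.symm⟩
  · intro x g
    obtain ⟨p, rfl⟩ := AdjoinRoot.mk_surjective x
    exact aux_commute ρ φ hφ p g

lemma aux_main (hfin : HypFin) (G : Type) [Group G] (d : ℕ) : ∀ (k : Type) [Field k]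
    (V : Type) [AddCommGroup V] [Module k V] [FiniteDimensional k V]
    (ρ : Representation k G V),
    (∀ W : Submodule k V, (∀ g : G, ∀ v ∈ W, ρ g v ∈ W) → W = ⊥ ∨ W = ⊤) →
    (∃ (g : G) (v : V), ρ g v ≠ v) → Module.finrank k V = d →
    ∃ g : G, 3 * Module.finrank k (LinearMap.ker (ρ g - 1)) ≤ Module.finrank k V := by
  induction d using Nat.strong_induction_on with
  | _ d ih =>
  intro k _ V _ _ _ ρ hirr hnt hd
  have : Nontrivial V := by
    obtain ⟨g, v, h⟩ := hnt
    exact ⟨_, _, h⟩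
  by_cases hsc : ∀ φ : Module.End k V, (∀ g, φ * ρ g = ρ g * φ) → ∃ c : k, φ = algebraMap k _ c
  · exact aux_abs hfin G k V ρ (aux_density G k V ρ hirr hsc) hnt
  · rw [not_forall] at hsc
    obtain ⟨φ, hφ⟩ := hsc
    rw [Classical.not_imp] at hφ
    obtain ⟨K, _, _, f, h2, hcomm⟩ := aux_ext ρ hirr φ hφ.1 hφ.2
    let _ : Module K V := Module.compHom V (f : K →+* Module.End k V)
    have hsm : ∀ (x : K) (v : V), x • v = f x v := fun _ _ => rfl
    have : IsScalarTower k K V := ⟨fun c x v => by rw [hsm, hsm, map_smul]; rfl⟩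
    have : FiniteDimensional K V := Module.Finite.of_restrictScalars_finite k K V
    have hmap : ∀ g (x : K) (v : V), ρ g (x • v) = x • ρ g v := by
      intro g x v
      rw [hsm, hsm]
      exact (LinearMap.congr_fun (hcomm x g) v).symm
    let ρ' : Representation K G V :=
      { toFun := fun g => { toFun := ρ g, map_add' := (ρ g).map_add, map_smul' := hmap g }
        map_one' := by ext v; simp
        map_mul' := by intro a b; ext v; simp }
    have hdim := Module.finrank_mul_finrank k K V
    have hpos : 0 < Module.finrank K V := Module.finrank_pos
    have hlt : Module.finrank K V < d := by
      rw [← hd, ← hdim]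
      nlinarith
    obtain ⟨g, hg⟩ := ih _ hlt K V ρ' (by
      intro W hW
      rcases hirr (W.restrictScalars k) hW with h | h
      · left; simpa using h
      · right; simpa using h) hnt rfl
    refine ⟨g, ?_⟩
    have h3 : LinearMap.ker (ρ g - 1) = (LinearMap.ker (ρ' g - 1)).restrictScalars k := by
      ext v
      rfl
    have h4 := Module.finrank_mul_finrank k K (LinearMap.ker (ρ' g - 1))
    have h5 : Module.finrank k (LinearMap.ker (ρ g - 1)) =
        Module.finrank k (LinearMap.ker (ρ' g - 1)) := by
      rw [h3]; rfl
    rw [h5, ← h4, ← hdim]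
    nlinarith


/-- Extension of Neumann's conjecture to arbitrary (possibly infinite) linear
groups: assuming the result for finite groups, any group acting irreducibly and
nontrivially on a finite dimensional vector space contains an element whose
fixed space has dimension at most `(1/3) dim V`. -/
theorem stmt_12
    (hfin : ∀ (H : Type) [Group H] [Finite H],
      ∀ (k : Type) [Field k],
      ∀ (W : Type) [AddCommGroup W] [Module k W] [FiniteDimensional k W],
      ∀ σ : Representation k H W,
      (∀ U : Submodule k W, (∀ h : H, ∀ w ∈ U, σ h w ∈ U) → U = ⊥ ∨ U = ⊤) →
      (∃ (h : H) (w : W), σ h w ≠ w) →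
      ∃ h : H, 3 * Module.finrank k (LinearMap.ker (σ h - 1)) ≤ Module.finrank k W)
    (G : Type) [Group G] (k : Type) [Field k]
    (V : Type) [AddCommGroup V] [Module k V] [FiniteDimensional k V]
    (ρ : Representation k G V)
    (hirr : ∀ W : Submodule k V, (∀ g : G, ∀ v ∈ W, ρ g v ∈ W) → W = ⊥ ∨ W = ⊤)
    (hnt : ∃ (g : G) (v : V), ρ g v ≠ v) :
    ∃ g : G, 3 * Module.finrank k (LinearMap.ker (ρ g - 1)) ≤ Module.finrank k V := by
  exact aux_main (@hfin) G _ k V ρ hirr hnt rfl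
end

section
/- Let L = A₅ and let W be the irreducible 5-dimensional complex representation of L. For m ≥ 1 let G(m) = L^m act on V(m) = W^{⊗m} (the m-fold outer tensor product). Then for every g ∈ G(m), dim C_{V(m)}(g) > (1/50) dim V(m). -/
open scoped TensorProduct

namespace S13
abbrev A5 := alternatingGroup (Fin 5)
def su : A5 := ⟨Equiv.swap 0 1 * Equiv.swap 1 2 * Equiv.swap 2 3 * Equiv.swap 3 4, by
  rw [Equiv.Perm.mem_alternatingGroup]; decide +kernel⟩
def ss : A5 := ⟨Equiv.swap 0 1 * Equiv.swap 2 3, by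
  rw [Equiv.Perm.mem_alternatingGroup]; decide +kernel⟩
def st : A5 := ⟨Equiv.swap 0 1 * Equiv.swap 1 2, by
  rw [Equiv.Perm.mem_alternatingGroup]; decide +kernel⟩
def rep : Fin 5 → A5 := ![1, ss, st, su, su^2]
def cls (g : A5) : Fin 5 := if g = 1 then 0 else if g * g = 1 then 1 else if g * g * g = 1 then 2
  else if ∃ h : A5, h * su = g * h then 3 else 4
theorem inv_conj : ∀ g : A5, ∃ h : A5, h * g = g⁻¹ * h := by decide +kernel
theorem cls_conj : ∀ g : A5, ∃ h : A5, h * rep (cls g) = g * h := by decide +kernel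
theorem cls_card : ∀ c : Fin 5, (Finset.univ.filter fun g : A5 => cls g = c).card = ![1,15,20,12,12] c := by decide +kernel

theorem sum_class (F : A5 → ℂ) (hF : ∀ g h x : A5, h * x = g * h → F g = F x) :
    ∑ g, F g = F 1 + 15 * F ss + 20 * F st + 12 * F su + 12 * F (su^2) := by
  have h1 : ∀ g, F g = F (rep (cls g)) := fun g => by
    obtain ⟨h, hh⟩ := cls_conj g
    exact hF _ _ _ hh
  rw [Finset.sum_congr rfl fun g _ => h1 g, ← Finset.sum_fiberwise' Finset.univ cls (fun c => F (rep c))]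
  simp only [Finset.sum_const, cls_card]
  simp [Fin.sum_univ_five, rep]

theorem fix_dim {V : Type*} [AddCommGroup V] [Module ℂ V] [FiniteDimensional ℂ V]
    (T : V →ₗ[ℂ] V) (n : ℕ) (hn : n ≠ 0) (hT : T ^ n = 1) :
    ∑ k ∈ Finset.range n, LinearMap.trace ℂ V (T ^ k) =
      n * (Module.finrank ℂ (LinearMap.ker (T - LinearMap.id)) : ℂ) := by
  have hn' : (n : ℂ) ≠ 0 := by exact_mod_cast hn
  have hp : LinearMap.IsProj (LinearMap.ker (T - LinearMap.id))
      ((n : ℂ)⁻¹ • ∑ k ∈ Finset.range n, T ^ k) := by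
    constructor
    · intro v
      have : (T - 1) * ∑ k ∈ Finset.range n, T ^ k = 0 := by
        rw [mul_geom_sum, hT, sub_self]
      have h2 := LinearMap.congr_fun this v
      rw [LinearMap.mem_ker, LinearMap.smul_apply, map_smul]
      erw [h2]; simp
    · intro v hv
      have hv1 : T v = v := by
        rw [LinearMap.mem_ker] at hv; simpa [sub_eq_zero] using hv
      have : ∀ k, (T ^ k) v = v := fun k => by
        induction k with
        | zero => simp
        | succ k ih => rw [pow_succ, Module.End.mul_apply, hv1, ih]
      simp only [LinearMap.smul_apply, LinearMap.sum_apply, this, Finset.sum_const, Finset.card_range]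
      rw [← Nat.cast_smul_eq_nsmul ℂ, smul_smul, inv_mul_cancel₀ hn', one_smul]
  have := hp.trace
  rw [map_smul, map_sum, smul_eq_mul] at this
  rw [← this]; field_simp

theorem trace_pi {W : Type*} [AddCommGroup W] [Module ℂ W] [FiniteDimensional ℂ W] (m : ℕ)
    (A : Fin m → W →ₗ[ℂ] W) :
    LinearMap.trace ℂ _ (PiTensorProduct.map A) = ∏ i, LinearMap.trace ℂ W (A i) := by
  classical
  let b := Module.finBasis ℂ W
  rw [LinearMap.trace_eq_matrix_trace ℂ (Basis.piTensorProduct fun _ : Fin m => b)]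
  simp_rw [LinearMap.trace_eq_matrix_trace ℂ b, Matrix.trace, Matrix.diag, LinearMap.toMatrix_apply]
  rw [Finset.prod_univ_sum]
  simp [Basis.piTensorProduct_apply, PiTensorProduct.map_tprod, Basis.piTensorProduct_repr_tprod_apply]


theorem eig_dim {W : Type*} [AddCommGroup W] [Module ℂ W] [FiniteDimensional ℂ W]
    (ρ : Representation ℂ A5 W) (g : A5) (n : ℕ) (hn : n ≠ 0) (hg : g ^ n = 1) (w : ℂ)
    (hw : w ^ n = 1) :
    ∃ f : ℕ, ∑ k ∈ Finset.range n, w ^ k * ρ.character (g ^ k) = n * (f : ℂ) := by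
  refine ⟨_, Eq.trans ?_ (fix_dim (w • ρ g) n hn ?_)⟩
  · refine Finset.sum_congr rfl fun k _ => ?_
    rw [smul_pow, ← map_pow, map_smul, smul_eq_mul]; rfl
  · rw [smul_pow, ← map_pow, hg, hw, map_one, one_smul]

theorem char_cls {W : Type*} [AddCommGroup W] [Module ℂ W] [FiniteDimensional ℂ W]
    (ρ : Representation ℂ A5 W) (g h x : A5) (e : h * x = g * h) :
    ρ.character g = ρ.character x := by
  have : g = h * x * h⁻¹ := by rw [e]; group
  rw [this, ρ.char_conj]

theorem st_pow : st ^ 3 = 1 := by decide +kernel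
theorem ss_pow : ss ^ 2 = 1 := by decide +kernel
theorem su_pow : su ^ 5 = 1 := by decide +kernel
theorem st_c : ∃ h : A5, h * st = st ^ 2 * h := by decide +kernel
theorem su_c4 : ∃ h : A5, h * su = su ^ 4 * h := by decide +kernel
theorem su_c3 : ∃ h : A5, h * su ^ 2 = su ^ 3 * h := by decide +kernel

theorem irr {W : Type} [AddCommGroup W] [Module ℂ W] [FiniteDimensional ℂ W]
    (ρ : Representation ℂ A5 W)
    (hirr : ∀ U : Submodule ℂ W, (∀ g : A5, ∀ w ∈ U, ρ g w ∈ U) → U = ⊥ ∨ U = ⊤)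
    (hdim : Module.finrank ℂ W = 5) : ρ.IsIrreducible := by
  have : Nontrivial W := Module.nontrivial_of_finrank_pos (R := ℂ) (by omega)
  have : Nontrivial (Subrepresentation ρ) := ⟨⊥, ⊤, fun h => by
    have h2 : (⊥ : Submodule ℂ W) = ⊤ := congrArg Subrepresentation.toSubmodule h
    exact bot_ne_top h2⟩
  refine ⟨fun U => ?_⟩
  rcases hirr U.toSubmodule (fun g w hw => U.apply_mem_toSubmodule g hw) with h | h
  · left; exact Subrepresentation.toSubmodule_injective h
  · right; exact Subrepresentation.toSubmodule_injective h

theorem card_A5 : Nat.card A5 = 60 := by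
  rw [Nat.card_eq_fintype_card]; decide +kernel

theorem char_vals {W : Type} [AddCommGroup W] [Module ℂ W] [FiniteDimensional ℂ W]
    (ρ : Representation ℂ A5 W)
    (hirr : ∀ U : Submodule ℂ W, (∀ g : A5, ∀ w ∈ U, ρ g w ∈ U) → U = ⊥ ∨ U = ⊤)
    (hdim : Module.finrank ℂ W = 5) :
    ρ.character 1 = 5 ∧ ρ.character ss = 1 ∧ ρ.character st = -1 ∧ ρ.character su = 0 ∧
      ρ.character (su ^ 2) = 0 := by
  have := irr ρ hirr hdim
  have : Invertible (Nat.card A5 : ℂ) := invertibleOfNonzero (by rw [card_A5]; norm_num)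
  have h1 : ρ.character 1 = 5 := by rw [ρ.char_one, hdim]; norm_num
  have hinv : ∀ g, ρ.character g⁻¹ = ρ.character g := fun g => by
    obtain ⟨h, hh⟩ := inv_conj g
    exact char_cls ρ _ _ _ hh
  have ho := Representation.char_orthonormal ρ ρ
  rw [if_pos ⟨Representation.Equiv.refl ρ⟩, card_A5] at ho
  simp only [hinv] at ho
  rw [sum_class (fun g => ρ.character g * ρ.character g)
    (fun g h x e => by simp only [char_cls ρ g h x e]), h1] at ho
  have ht := ρ.card_inv_mul_sum_char_eq_finrank
  rw [sum_class _ (char_cls ρ), h1, card_A5] at ht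
  obtain ⟨f2, hf2⟩ := eig_dim ρ ss 2 (by norm_num) ss_pow 1 (by norm_num)
  have hω := Complex.isPrimitiveRoot_exp 3 (by norm_num)
  obtain ⟨f3, hf3⟩ := eig_dim ρ st 3 (by norm_num) st_pow _ hω.pow_eq_one
  have hω' := hω.geom_sum_eq_zero (by norm_num)
  generalize Complex.exp (2 * Real.pi * Complex.I / (3:ℕ)) = ω at *
  have hζ := Complex.isPrimitiveRoot_exp 5 (by norm_num)
  have hζ' := hζ.geom_sum_eq_zero (by norm_num)
  have hζ5 := hζ.pow_eq_one
  generalize Complex.exp (2 * Real.pi * Complex.I / (5:ℕ)) = ζ at *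
  obtain ⟨f50, hf50⟩ := eig_dim ρ su 5 (by norm_num) su_pow 1 (by norm_num)
  obtain ⟨f51, hf51⟩ := eig_dim ρ su 5 (by norm_num) su_pow ζ hζ5
  obtain ⟨f52, hf52⟩ := eig_dim ρ su 5 (by norm_num) su_pow (ζ ^ 2)
    (by rw [← pow_mul, mul_comm, pow_mul, hζ5, one_pow])
  have k1 : ρ.character (st ^ 2) = ρ.character st := by
    obtain ⟨h, hh⟩ := st_c; exact char_cls ρ _ _ _ hh
  have k2 : ρ.character (su ^ 4) = ρ.character su := by
    obtain ⟨h, hh⟩ := su_c4; exact char_cls ρ _ _ _ hh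
  have k3 : ρ.character (su ^ 3) = ρ.character (su ^ 2) := by
    obtain ⟨h, hh⟩ := su_c3; exact char_cls ρ _ _ _ hh
  simp only [Finset.sum_range_succ, Finset.sum_range_zero, pow_zero, pow_one, one_pow, one_mul,
    zero_add, k1, k2, k3, h1] at hf2 hf3 hf50 hf51 hf52 hω' hζ'
  push_cast at *
  generalize ρ.character ss = x at *
  generalize ρ.character st = y at *
  generalize ρ.character su = z at *
  generalize ρ.character (su ^ 2) = z' at *
  have ex : x = 2 * f2 - 5 := by linear_combination hf2
  have ey : y = 5 - 3 * f3 := by linear_combination y * hω' - hf3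
  have ez : z + z' = 5 * (f50 - 1) / 2 := by linear_combination hf50 / 2
  have ed : 5 * ((f51 : ℂ) - f52) = (ζ + ζ ^ 4 - ζ ^ 2 - ζ ^ 3) * (z - z') := by
    linear_combination hf52 - hf51 + (-(z' * ζ) - z * (ζ ^ 3)) * (hζ5)
  have ec : (ζ + ζ ^ 4 - ζ ^ 2 - ζ ^ 3) ^ 2 = 5 := by
    linear_combination (ζ ^ 4 - 3 * ζ ^ 3 + ζ ^ 2 + 5 * ζ - 5) * hζ'
  have eS : z ^ 2 + z' ^ 2 = (25 * (f50 - 1) ^ 2 / 4 + 5 * ((f51 : ℂ) - f52) ^ 2) / 2 := by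
    have : 5 * (z - z') ^ 2 = 25 * ((f51 : ℂ) - f52) ^ 2 := by
      linear_combination (-(5 * ((f51 : ℂ) - f52)) - (ζ + ζ ^ 4 - ζ ^ 2 - ζ ^ 3) * (z - z')) * ed - (z - z') ^ 2 * ec
    linear_combination (z + z' + 5 * (f50 - 1) / 2) / 2 * ez + this / 10
  have eN : (15 * (2 * f2 - 5) ^ 2 + 20 * (5 - 3 * f3) ^ 2 + 6 * (25 * (f50 - 1) ^ 2 / 4 + 5 * (f51 - f52) ^ 2) : ℝ) = 35 := by
    have : (15 * (2 * f2 - 5) ^ 2 + 20 * (5 - 3 * f3) ^ 2 + 6 * (25 * (f50 - 1) ^ 2 / 4 + 5 * (f51 - f52) ^ 2) : ℂ) = 35 := by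
      rw [← ex, ← ey]
      linear_combination 60 * ho - 12 * eS
    exact_mod_cast this
  have i2 : (1 : ℝ) ≤ (2 * f2 - 5) ^ 2 := by
    have : (1 : ℤ) ≤ (2 * f2 - 5) ^ 2 := by
      have : (2 * (f2 : ℤ) - 5) ≠ 0 := by omega
      have := sq_pos_of_ne_zero this
      omega
    exact_mod_cast this
  have i3 : (1 : ℝ) ≤ (5 - 3 * f3) ^ 2 := by
    have : (1 : ℤ) ≤ (5 - 3 * f3) ^ 2 := by
      have : (5 - 3 * (f3 : ℤ)) ≠ 0 := by omega
      have := sq_pos_of_ne_zero this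
      omega
    exact_mod_cast this
  have p1 := sq_nonneg ((f50 : ℝ) - 1)
  have p2 := sq_nonneg ((f51 : ℝ) - f52)
  have j2 : ((2 * f2 - 5) ^ 2 : ℝ) = 1 := by linarith
  have j3 : ((5 - 3 * f3) ^ 2 : ℝ) = 1 := by linarith
  have j50 : ((f50 : ℝ) - 1) ^ 2 = 0 := by linarith
  have j51 : ((f51 : ℝ) - f52) ^ 2 = 0 := by linarith
  have l50 : (f50 : ℂ) = 1 := by
    have : (f50 : ℝ) = 1 := by simpa [sub_eq_zero] using j50
    exact_mod_cast this
  have l51 : (f51 : ℂ) = f52 := by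
    have : (f51 : ℝ) = f52 := by simpa [sub_eq_zero] using j51
    exact_mod_cast this
  have l3 : f3 = 2 := by
    have : ((5 - 3 * f3) ^ 2 : ℤ) = 1 := by exact_mod_cast j3
    have h0 : ((5 - 3 * (f3:ℤ)) - 1) * ((5 - 3 * (f3:ℤ)) + 1) = 0 := by linarith
    rcases mul_eq_zero.mp h0 with h | h <;> omega
  have l2 : f2 = 2 ∨ f2 = 3 := by
    have : ((2 * f2 - 5) ^ 2 : ℤ) = 1 := by exact_mod_cast j2
    have h0 : ((2 * (f2:ℤ) - 5) - 1) * ((2 * (f2:ℤ) - 5) + 1) = 0 := by linarith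
    rcases mul_eq_zero.mp h0 with h | h <;> omega
  have hy : y = -1 := by rw [ey, l3]; norm_num
  have s1 : z + z' = 0 := by rw [ez, l50]; norm_num
  have s2 : z - z' = 0 := by
    have : (ζ + ζ ^ 4 - ζ ^ 2 - ζ ^ 3) * (z - z') = 0 := by rw [← ed, l51]; ring
    rcases mul_eq_zero.mp this with h | h
    · rw [h] at ec; norm_num at ec
    · exact h
  have hz : z = 0 := by linear_combination (s1 + s2) / 2
  have hz' : z' = 0 := by linear_combination (s1 - s2) / 2
  refine ⟨h1, ?_, hy, hz, hz'⟩
  rcases l2 with h | h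
  · exfalso
    rw [hy, hz, hz', ex, h] at ht
    generalize Module.finrank ℂ ρ.invariants = d at ht
    have : (2 * d + 1 : ℂ) = 0 := by rw [← ht]; norm_num
    have : 2 * d + 1 = 0 := by exact_mod_cast this
    omega
  · rw [ex, h]; norm_num

/-- value of the character of degree five, as an integer -/
def wv (g : A5) : ℤ := if g = 1 then 5 else if g * g = 1 then 1 else if g * g * g = 1 then -1 else 0
def ty (g : A5) : Fin 4 := if g = 1 then 0 else if g * g = 1 then 1 else if g * g * g = 1 then 2 else 3
def vv (c : Fin 4) (k : ℕ) : ℤ :=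
  ![5, if k % 2 = 0 then 5 else 1, if k % 3 = 0 then 5 else -1, if k % 5 = 0 then 5 else 0] c

theorem wv_rep : ∀ g : A5, wv g = ![5, 1, -1, 0, 0] (cls g) := by decide +kernel
theorem ty_facts : ∀ g : A5, (ty g = 0 → g = 1) ∧ (ty g = 1 → g * g = 1 ∧ wv g = 1) ∧
    (ty g = 2 → g * g * g = 1 ∧ wv g = -1 ∧ wv (g * g) = -1) ∧
    (ty g = 3 → g * g * g * g * g = 1 ∧ wv g = 0 ∧ wv (g * g) = 0 ∧ wv (g * g * g) = 0 ∧
      wv (g * g * g * g) = 0) := by decide +kernel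

theorem wv_one : wv 1 = 5 := by simp [wv]

theorem wv_pow (g : A5) (k : ℕ) : wv (g ^ k) = vv (ty g) k := by
  obtain ⟨h0, h1, h2, h3⟩ := ty_facts g
  generalize ty g = c at *
  obtain rfl | rfl | rfl | rfl : c = 0 ∨ c = 1 ∨ c = 2 ∨ c = 3 := by
    clear h0 h1 h2 h3; revert c; decide
  · rw [h0 rfl, one_pow, wv_one]; rfl
  · obtain ⟨e, w1⟩ := h1 rfl
    rw [← pow_two] at e
    rw [pow_eq_pow_mod k e]
    have hk : k % 2 < 2 := Nat.mod_lt _ (by norm_num)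
    show _ = if k % 2 = 0 then (5 : ℤ) else 1
    generalize k % 2 = r at *
    interval_cases r <;> simp [wv_one, w1]
  · obtain ⟨e, w1, w2⟩ := h2 rfl
    simp only [← pow_two, ← pow_succ] at e w2
    rw [pow_eq_pow_mod k e]
    have hk : k % 3 < 3 := Nat.mod_lt _ (by norm_num)
    show _ = if k % 3 = 0 then (5 : ℤ) else -1
    generalize k % 3 = r at *
    interval_cases r <;> simp [wv_one, w1, w2]
  · obtain ⟨e, w1, w2, w3, w4⟩ := h3 rfl
    simp only [← pow_two, ← pow_succ] at e w2 w3 w4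
    rw [pow_eq_pow_mod k e]
    have hk : k % 5 < 5 := Nat.mod_lt _ (by norm_num)
    show _ = if k % 5 = 0 then (5 : ℤ) else 0
    generalize k % 5 = r at *
    interval_cases r <;> simp [wv_one, w1, w2, w3, w4]

theorem pow30 (g : A5) : g ^ 30 = 1 := by
  obtain ⟨h0, h1, h2, h3⟩ := ty_facts g
  obtain h | h | h | h : ty g = 0 ∨ ty g = 1 ∨ ty g = 2 ∨ ty g = 3 := by
    generalize ty g = c
    revert c; decide
  · rw [h0 h, one_pow]
  · have e := (h1 h).1
    rw [← pow_two] at e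
    rw [pow_eq_pow_mod 30 e]; simp
  · have e := (h2 h).1
    simp only [← pow_two, ← pow_succ] at e
    rw [pow_eq_pow_mod 30 e]; simp
  · have e := (h3 h).1
    simp only [← pow_two, ← pow_succ] at e
    rw [pow_eq_pow_mod 30 e]; simp

theorem char_wv {W : Type} [AddCommGroup W] [Module ℂ W] [FiniteDimensional ℂ W]
    (ρ : Representation ℂ A5 W)
    (hirr : ∀ U : Submodule ℂ W, (∀ g : A5, ∀ w ∈ U, ρ g w ∈ U) → U = ⊥ ∨ U = ⊤)
    (hdim : Module.finrank ℂ W = 5) (g : A5) : ρ.character g = wv g := by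
  obtain ⟨h0, h1, h2, h3, h4⟩ := char_vals ρ hirr hdim
  obtain ⟨h, hh⟩ := cls_conj g
  rw [char_cls ρ _ _ _ hh, wv_rep]
  generalize cls g = c
  fin_cases c <;> simp [rep, *]

theorem sum_vv (a : Fin 4 → ℕ) : ∑ k ∈ Finset.range 30, ∏ c, vv c k ^ a c =
    5 ^ a 0 * (5 ^ a 1 + 1) * (5 ^ a 2 + 2 * (-1) ^ a 2) * (5 ^ a 3 + 4 * 0 ^ a 3) := by
  have hv : ∀ k, ∏ c, vv c k ^ a c = 5 ^ a 0 * (if k % 2 = 0 then 5 else 1) ^ a 1 *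
      (if k % 3 = 0 then 5 else -1) ^ a 2 * (if k % 5 = 0 then 5 else 0) ^ a 3 := fun k => by
    rw [Fin.prod_univ_four]; rfl
  simp only [hv, Finset.sum_range_succ, Finset.sum_range_zero]
  norm_num
  ring

end S13

/-- Let `W` be the irreducible `5`-dimensional complex representation of
`L = A₅` and `G(m) = L^m` act on `V(m) = W^{⊗m}`. Then every `g ∈ G(m)` has
fixed space of dimension greater than `(1/50) dim V(m)`. -/
theorem stmt_13 (W : Type) [AddCommGroup W] [Module ℂ W] [FiniteDimensional ℂ W]
    (ρ : Representation ℂ (alternatingGroup (Fin 5)) W)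
    (hirr : ∀ U : Submodule ℂ W,
      (∀ g : alternatingGroup (Fin 5), ∀ w ∈ U, ρ g w ∈ U) → U = ⊥ ∨ U = ⊤)
    (hdim : Module.finrank ℂ W = 5)
    (m : ℕ) (hm : 1 ≤ m) (g : Fin m → alternatingGroup (Fin 5)) :
    Module.finrank ℂ (⨂[ℂ] (_ : Fin m), W) <
      50 * Module.finrank ℂ
        (LinearMap.ker
          (PiTensorProduct.map (fun i => (ρ (g i) : W →ₗ[ℂ] W)) - LinearMap.id)) := by
  have hpow : ∀ k : ℕ, (PiTensorProduct.map (fun i => (ρ (g i) : W →ₗ[ℂ] W))) ^ k =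
      PiTensorProduct.map (fun i => (ρ (g i ^ k) : W →ₗ[ℂ] W)) := fun k => by
    simp only [map_pow]
    exact (PiTensorProduct.map_pow _ k).symm
  have : Module.Finite ℂ (⨂[ℂ] (_ : Fin m), W) :=
    Module.Finite.of_basis (Basis.piTensorProduct fun _ : Fin m => Module.finBasis ℂ W)
  have hfr : Module.finrank ℂ (⨂[ℂ] (_ : Fin m), W) = 5 ^ m := by
    rw [Module.finrank_eq_card_basis (Basis.piTensorProduct fun _ : Fin m => Module.finBasis ℂ W)]
    simp [hdim]
  have hfix := S13.fix_dim (PiTensorProduct.map (fun i => (ρ (g i) : W →ₗ[ℂ] W))) 30 (by norm_num) (by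
    rw [hpow]
    simp only [S13.pow30, map_one]
    exact PiTensorProduct.map_one)
  rw [hfr]
  generalize Module.finrank ℂ (LinearMap.ker
          (PiTensorProduct.map (fun i => (ρ (g i) : W →ₗ[ℂ] W)) - LinearMap.id)) = D at *
  let a : Fin 4 → ℕ := fun c => (Finset.univ.filter fun i => S13.ty (g i) = c).card
  have hprod : ∀ k, ∏ i, S13.vv (S13.ty (g i)) k = ∏ c, S13.vv c k ^ a c := fun k => by
    rw [← Finset.prod_fiberwise' Finset.univ (fun i => S13.ty (g i)) (fun c => S13.vv c k)]
    simp [a]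
  have hsum : ∑ k ∈ Finset.range 30, ∏ c, S13.vv c k ^ a c = 30 * (D : ℤ) := by
    have : ((∑ k ∈ Finset.range 30, ∏ c, S13.vv c k ^ a c : ℤ) : ℂ) = 30 * D := by
      rw [show (30 : ℂ) = (30 : ℕ) by norm_num, ← hfix, Int.cast_sum]
      refine Finset.sum_congr rfl fun k hk => ?_
      rw [hpow, S13.trace_pi, ← hprod, Int.cast_prod]
      refine Finset.prod_congr rfl fun i _ => ?_
      rw [← S13.wv_pow (g i) k, ← S13.char_wv ρ hirr hdim]
      rfl
    exact_mod_cast this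
  have hcard : m = a 0 + a 1 + a 2 + a 3 := by
    have := Finset.card_eq_sum_card_fiberwise (s := Finset.univ) (t := Finset.univ)
      (f := fun i => S13.ty (g i)) (fun _ _ => Finset.mem_coe.mpr (Finset.mem_univ _))
    rw [Fin.sum_univ_four] at this
    simpa using this
  rw [S13.sum_vv] at hsum
  have hZ : (0 : ℤ) ≤ 0 ^ a 3 := by positivity
  have hB : (0 : ℤ) ≤ 2 * 5 ^ a 2 + 10 * (-1) ^ a 2 := by
    rcases Nat.eq_zero_or_pos (a 2) with h | h
    · rw [h]; norm_num
    · have h5 : (5 : ℤ) ^ 1 ≤ 5 ^ a 2 := pow_le_pow_right₀ (by norm_num) h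
      rcases neg_one_pow_eq_or ℤ (a 2) with h' | h' <;> rw [h'] <;> linarith
  have key : (5 : ℤ) ^ m < 50 * D := by
    have hN : (0 : ℤ) < 5 ^ a 0 := by positivity
    have hA : (0 : ℤ) < 5 ^ a 1 := by positivity
    have hB0 : (0 : ℤ) < 5 ^ a 2 := by positivity
    have hC : (0 : ℤ) < 5 ^ a 3 := by positivity
    rw [hcard, pow_add, pow_add, pow_add]
    generalize (5 : ℤ) ^ a 0 = N at *
    generalize (5 : ℤ) ^ a 1 = A at *
    generalize (5 : ℤ) ^ a 2 = B at *
    generalize (5 : ℤ) ^ a 3 = C at *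
    generalize (0 : ℤ) ^ a 3 = Z at *
    generalize (-1 : ℤ) ^ a 2 = E at *
    have q1 : N * A * (3 * B) * C < N * (A + 1) * (3 * B) * C := by
      gcongr; omega
    have q2 : N * (A + 1) * (3 * B) * C ≤ N * (A + 1) * (5 * (B + 2 * E)) * (C + 4 * Z) := by
      have hx : 0 ≤ 5 * (B + 2 * E) := by linarith
      have hy : 3 * B ≤ 5 * (B + 2 * E) := by linarith
      have hz : C ≤ C + 4 * Z := by linarith
      exact mul_le_mul (mul_le_mul_of_nonneg_left hy (by positivity)) hz hC.le
        (mul_nonneg (by positivity) hx)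
    linarith
  exact_mod_cast key
end

section
/- Let G = A_n with 5 ≤ n ≤ 10. Setting k = 5 for n ∈ {5, 6} and k = 7 for n ∈ {7, 8, 9, 10}, there exist three conjugate k-cycles x, y, z ∈ A_n with xyz = 1 and ⟨x, y⟩ = A_n. -/
/-- The value of a word in two permutations (`true` stands for `x`, `false` for `y`). -/
def wordVal {n : ℕ} (x y : Equiv.Perm (Fin n)) (w : List Bool) : Equiv.Perm (Fin n) :=
  (w.map (fun b => cond b x y)).prod

theorem wordVal_mem {n : ℕ} (x y : Equiv.Perm (Fin n)) (w : List Bool) :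
    wordVal x y w ∈ Subgroup.closure {x, y} := by
  apply Subgroup.list_prod_mem
  intro g hg
  obtain ⟨b, -, rfl⟩ := List.mem_map.1 hg
  cases b
  · exact Subgroup.subset_closure (by simp)
  · exact Subgroup.subset_closure (by simp)

/-- The conclusion for given `n` and cycle length `k`. -/
def Goal (n k : ℕ) : Prop :=
  ∃ x y z : alternatingGroup (Fin n),
    (x : Equiv.Perm (Fin n)).IsCycle ∧
    (x : Equiv.Perm (Fin n)).support.card = k ∧
    IsConj x y ∧ IsConj x z ∧ x * y * z = 1 ∧
    Subgroup.closure {x, y} = (⊤ : Subgroup (alternatingGroup (Fin n)))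

/-- Two-transitivity (checked on words) plus a three-cycle gives the alternating group. -/
theorem alternating_le {n : ℕ} (x y : Equiv.Perm (Fin n)) (w : List Bool) (a b c : Fin n)
    (hab : a ≠ b) (hac : a ≠ c) (hbc : b ≠ c)
    (hw : wordVal x y w = Equiv.swap a b * Equiv.swap a c)
    (p q : Fin n) (A B : Fin n → List Bool)
    (hA : ∀ i, wordVal x y (A i) i = p)
    (hB : ∀ i, i ≠ p → wordVal x y (B i) p = p ∧ wordVal x y (B i) i = q) :
    alternatingGroup (Fin n) ≤ Subgroup.closure {x, y} := by
  have key : ∀ i j : Fin n, i ≠ j →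
      ∃ g ∈ Subgroup.closure {x, y}, g i = p ∧ g j = q := by
    intro i j hij
    have hne : wordVal x y (A i) j ≠ p := by
      rw [← hA i]
      exact fun h => hij ((wordVal x y (A i)).injective h).symm
    obtain ⟨h1, h2⟩ := hB _ hne
    refine ⟨wordVal x y (B (wordVal x y (A i) j)) * wordVal x y (A i),
      mul_mem (wordVal_mem _ _ _) (wordVal_mem _ _ _), ?_, ?_⟩
    · rw [Equiv.Perm.mul_apply, hA, h1]
    · rw [Equiv.Perm.mul_apply, h2]
  have h2 : MulAction.IsMultiplyPretransitive (Subgroup.closure {x, y}) (Fin n) 2 := by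
    rw [MulAction.is_two_pretransitive_iff]
    intro i j k l hij hkl
    obtain ⟨g, hg, g1, g2⟩ := key i j hij
    obtain ⟨h, hh, h1, h2⟩ := key k l hkl
    refine ⟨⟨h⁻¹ * g, mul_mem (inv_mem hh) hg⟩, ?_, ?_⟩
    · change h⁻¹ (g i) = k
      rw [g1, ← h1]; exact h.symm_apply_apply k
    · change h⁻¹ (g j) = l
      rw [g2, ← h2]; exact h.symm_apply_apply l
  refine Equiv.Perm.alternatingGroup_le_of_isPreprimitive_of_isThreeCycle_mem
    (MulAction.isPreprimitive_of_is_two_pretransitive h2)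
    (Equiv.Perm.isThreeCycle_swap_mul_swap_same hab hac hbc) ?_
  rw [← hw]
  exact wordVal_mem _ _ _

theorem core {n k : ℕ} (x y g h : Equiv.Perm (Fin n))
    (hk : k.Prime) (hxk : x ^ k = 1) (hx1 : x ≠ 1) (hcard : x.support.card = k)
    (sx : Equiv.Perm.sign x = 1) (sg : Equiv.Perm.sign g = 1) (sh : Equiv.Perm.sign h = 1)
    (hg : g * x = y * g) (hh : x * y * (h * x) = h)
    (w : List Bool) (a b c : Fin n)
    (hab : a ≠ b) (hac : a ≠ c) (hbc : b ≠ c)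
    (hw : wordVal x y w = Equiv.swap a b * Equiv.swap a c)
    (p q : Fin n) (A B : Fin n → List Bool)
    (hA : ∀ i, wordVal x y (A i) i = p)
    (hB : ∀ i, i ≠ p → wordVal x y (B i) p = p ∧ wordVal x y (B i) i = q) :
    Goal n k := by
  have hy : y = g * x * g⁻¹ := by rw [hg]; group
  have sy : Equiv.Perm.sign y = 1 := by
    rw [hy]; simp [sx]
  have hord : orderOf x = k := by
    have := Fact.mk hk
    exact orderOf_eq_prime hxk hx1
  have hle := alternating_le x y w a b c hab hac hbc hw p q A B hA hB
  refine ⟨⟨x, sx⟩, ⟨y, sy⟩, (⟨x, sx⟩ * ⟨y, sy⟩)⁻¹, ?_, hcard, ?_, ?_, mul_inv_cancel _, ?_⟩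
  · apply Equiv.Perm.isCycle_of_prime_order
    · rw [hord]; exact hk
    · have := hk.pos
      rw [hord]; change x.support.card < _
      omega
  · rw [isConj_iff]
    exact ⟨⟨g, sg⟩, Subtype.ext hy.symm⟩
  · rw [isConj_iff]
    refine ⟨⟨h, sh⟩, Subtype.ext ?_⟩
    change h * x * h⁻¹ = (x * y)⁻¹
    rw [eq_inv_iff_mul_eq_one, mul_eq_one_iff_eq_inv, mul_inv_eq_iff_eq_mul, eq_inv_mul_iff_mul_eq]
    exact hh
  · rw [← (Subgroup.map_injective (alternatingGroup (Fin n)).subtype_injective).eq_iff,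
      MonoidHom.map_closure, Set.image_pair, ← MonoidHom.range_eq_map, Subgroup.range_subtype]
    apply le_antisymm
    · rw [Subgroup.closure_le]
      rintro t (rfl | rfl)
      · exact sx
      · exact sy
    · exact hle

theorem case_5 : Goal 5 5 := by
  refine core (n := 5) (k := 5)
    ⟨![1, 2, 3, 4, 0], ![4, 0, 1, 2, 3], by decide, by decide⟩
    ⟨![2, 4, 3, 1, 0], ![4, 3, 0, 2, 1], by decide, by decide⟩
    ⟨![0, 2, 3, 1, 4], ![0, 3, 1, 2, 4], by decide, by decide⟩
    ⟨![0, 1, 4, 2, 3], ![0, 1, 3, 4, 2], by decide, by decide⟩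
    (by norm_num) (by decide +kernel) (by decide +kernel) (by decide +kernel)
    (by decide +kernel) (by decide +kernel) (by decide +kernel) (by decide +kernel)
    (by decide +kernel)
    [true, true, false]
    0 2 4 (by decide) (by decide) (by decide) (by decide +kernel)
    0 1
    ![[], 
      [true, false], 
      [true, true, true], 
      [true, true], 
      [true]]
    ![[], 
      [], 
      [true, true, true, false], 
      [true, false, true], 
      [false, true, false, false]]
    (by decide +kernel) (by decide +kernel)

theorem case_6 : Goal 6 5 := by
  refine core (n := 6) (k := 5)
    ⟨![1, 2, 3, 4, 0, 5], ![4, 0, 1, 2, 3, 5], by decide, by decide⟩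
    ⟨![0, 2, 5, 1, 3, 4], ![0, 3, 1, 4, 5, 2], by decide, by decide⟩
    ⟨![1, 2, 5, 4, 3, 0], ![5, 0, 1, 4, 3, 2], by decide, by decide⟩
    ⟨![0, 5, 2, 3, 1, 4], ![0, 4, 2, 3, 5, 1], by decide, by decide⟩
    (by norm_num) (by decide +kernel) (by decide +kernel) (by decide +kernel)
    (by decide +kernel) (by decide +kernel) (by decide +kernel) (by decide +kernel)
    (by decide +kernel)
    [true, true, false, true, false, false]
    0 5 4 (by decide) (by decide) (by decide) (by decide +kernel)
    0 1
    ![[], 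
      [true, true, true, true], 
      [true, true, true], 
      [true, true], 
      [true], 
      [true, false]]
    ![[], 
      [], 
      [false, false, false, false], 
      [false], 
      [false, false], 
      [false, false, false]]
    (by decide +kernel) (by decide +kernel)

theorem case_7 : Goal 7 7 := by
  refine core (n := 7) (k := 7)
    ⟨![1, 2, 3, 4, 5, 6, 0], ![6, 0, 1, 2, 3, 4, 5], by decide, by decide⟩
    ⟨![4, 3, 5, 6, 1, 0, 2], ![5, 4, 6, 1, 0, 2, 3], by decide, by decide⟩
    ⟨![0, 4, 1, 3, 6, 2, 5], ![0, 2, 5, 3, 1, 6, 4], by decide, by decide⟩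
    ⟨![0, 3, 6, 2, 4, 1, 5], ![0, 5, 3, 1, 4, 6, 2], by decide, by decide⟩
    (by norm_num) (by decide +kernel) (by decide +kernel) (by decide +kernel)
    (by decide +kernel) (by decide +kernel) (by decide +kernel) (by decide +kernel)
    (by decide +kernel)
    [true, false, false]
    0 1 2 (by decide) (by decide) (by decide) (by decide +kernel)
    0 1
    ![[], 
      [true, false, false], 
      [false, false], 
      [true, false], 
      [false, true], 
      [false], 
      [true]]
    ![[], 
      [], 
      [true, true, true, false], 
      [true, false, false, false, false], 
      [true, false, true, true, false, false], 
      [false, false, true, true], 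
      [true, true, true, true, false, true]]
    (by decide +kernel) (by decide +kernel)

theorem case_8 : Goal 8 7 := by
  refine core (n := 8) (k := 7)
    ⟨![1, 2, 3, 4, 5, 6, 0, 7], ![6, 0, 1, 2, 3, 4, 5, 7], by decide, by decide⟩
    ⟨![3, 0, 7, 4, 2, 5, 1, 6], ![1, 6, 4, 0, 3, 5, 7, 2], by decide, by decide⟩
    ⟨![0, 3, 4, 2, 7, 6, 1, 5], ![0, 6, 3, 1, 2, 7, 5, 4], by decide, by decide⟩
    ⟨![0, 7, 2, 6, 5, 3, 4, 1], ![0, 7, 2, 5, 6, 4, 3, 1], by decide, by decide⟩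
    (by norm_num) (by decide +kernel) (by decide +kernel) (by decide +kernel)
    (by decide +kernel) (by decide +kernel) (by decide +kernel) (by decide +kernel)
    (by decide +kernel)
    [true, true, false, true, true, false]
    1 2 7 (by decide) (by decide) (by decide) (by decide +kernel)
    0 1
    ![[], 
      [false], 
      [true, false, false], 
      [true, true, true, true], 
      [true, true, true], 
      [true, true], 
      [true], 
      [true, false]]
    ![[], 
      [], 
      [true, true, false, true, true, false], 
      [true, true, true, true, false], 
      [false, true, false, true], 
      [false, true], 
      [true, false, true, false, true, true], 
      [true, true, false, false, true, false, false]]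
    (by decide +kernel) (by decide +kernel)

theorem case_9 : Goal 9 7 := by
  refine core (n := 9) (k := 7)
    ⟨![1, 2, 3, 4, 5, 6, 0, 7, 8], ![6, 0, 1, 2, 3, 4, 5, 7, 8], by decide, by decide⟩
    ⟨![0, 8, 1, 2, 4, 6, 3, 5, 7], ![0, 2, 3, 6, 4, 7, 5, 8, 1], by decide, by decide⟩
    ⟨![1, 8, 7, 5, 6, 3, 2, 4, 0], ![8, 0, 6, 5, 7, 3, 4, 2, 1], by decide, by decide⟩
    ⟨![0, 5, 4, 6, 7, 8, 1, 2, 3], ![0, 6, 7, 8, 2, 1, 3, 4, 5], by decide, by decide⟩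
    (by norm_num) (by decide +kernel) (by decide +kernel) (by decide +kernel)
    (by decide +kernel) (by decide +kernel) (by decide +kernel) (by decide +kernel)
    (by decide +kernel)
    [true, true, false, false, true, true, false, false]
    0 2 8 (by decide) (by decide) (by decide) (by decide +kernel)
    0 1
    ![[], 
      [true, true, false, false, false], 
      [true, true, true, true, true], 
      [true, true, true, true], 
      [true, true, true], 
      [true, true], 
      [true], 
      [true, true, false], 
      [true, true, false, false]]
    ![[], 
      [], 
      [false], 
      [false, false], 
      [true, false, false, false, true, false, true], 
      [false, false, false, false], 
      [false, false, false], 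
      [false, false, false, false, false], 
      [true, true, false, false, false, true]]
    (by decide +kernel) (by decide +kernel)

theorem case_10 : Goal 10 7 := by
  refine core (n := 10) (k := 7)
    ⟨![1, 2, 3, 4, 5, 6, 0, 7, 8, 9], ![6, 0, 1, 2, 3, 4, 5, 7, 8, 9], by decide, by decide⟩
    ⟨![0, 7, 1, 2, 3, 5, 6, 9, 4, 8], ![0, 2, 3, 4, 8, 5, 6, 1, 9, 7], by decide, by decide⟩
    ⟨![1, 7, 9, 8, 4, 3, 2, 0, 5, 6], ![7, 0, 6, 5, 4, 8, 9, 1, 3, 2], by decide, by decide⟩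
    ⟨![0, 6, 5, 8, 9, 7, 1, 3, 2, 4], ![0, 6, 8, 7, 9, 2, 1, 5, 3, 4], by decide, by decide⟩
    (by norm_num) (by decide +kernel) (by decide +kernel) (by decide +kernel)
    (by decide +kernel) (by decide +kernel) (by decide +kernel) (by decide +kernel)
    (by decide +kernel)
    [true, true, false, false, true, true, false, false, true, true, false, false, true, true, false, false, true, true, false, false]
    1 9 6 (by decide) (by decide) (by decide) (by decide +kernel)
    0 1
    ![[], 
      [true, true, true, true, true, true], 
      [true, true, true, true, true], 
      [true, true, true, true], 
      [true, true, true], 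
      [true, true], 
      [true], 
      [true, true, true, false, false, false], 
      [true, true, true, false], 
      [true, true, true, false, false]]
    ![[], 
      [], 
      [false], 
      [false, false], 
      [false, false, false], 
      [false, true, true, true, false, false, false, false, true], 
      [false, true, false, true, true, false, false, false, false, true], 
      [false, false, false, false, false, false], 
      [false, false, false, false], 
      [false, false, false, false, false]]
    (by decide +kernel) (by decide +kernel)

/-- For `5 ≤ n ≤ 10`, with `k = 5` for `n ∈ {5,6}` and `k = 7` otherwise, there
exist three conjugate `k`-cycles in `A_n` with product `1` generating `A_n`. -/
theorem stmt_19 (n : ℕ) (h5 : 5 ≤ n) (h10 : n ≤ 10) :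
    ∃ x y z : alternatingGroup (Fin n),
      (x : Equiv.Perm (Fin n)).IsCycle ∧
      (x : Equiv.Perm (Fin n)).support.card = (if n ≤ 6 then 5 else 7) ∧
      IsConj x y ∧ IsConj x z ∧ x * y * z = 1 ∧
      Subgroup.closure {x, y} = (⊤ : Subgroup (alternatingGroup (Fin n))) := by
  interval_cases n
  · exact case_5
  · exact case_6
  · exact case_7
  · exact case_8
  · exact case_9
  · exact case_10
end
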